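/- arXiv:2306.08652 — 2 statements merged into one kernel-verified Lean document; each statement's English description precedes it below -/
import Mathlib

section
/- Let β>0, f ∈ C¹([0,1]), and for each integer n≥2 let u_n ∈ PC_{1/n}(0,1) be a minimizer of DPMF_n(β,f,(0,1),·). Let x_n = k_n/n with k_n ∈ {0,…,n−1} and x_n → x_∞ ∈ (0,1). Set H = (1/(β|f′(x_∞)|²))^{1/3} and V = f′(x_∞)H. Then for every w ∈ Obl(H,V) there exists a sequence {x_n′} ⊂ (0,1) such that limsup_{n→+∞} (x_n′ − x_n)/ω(n) ≤ H and the functions y ↦ (u_n(x_n′ + ω(n)y) − f(x_n′))/ω(n) converge to w locally strictly in BV_loc(ℝ). -/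
/-!
The proof compares, in windows of size `N ω(n)` with `N` large but fixed that end at `x_n`, an
upper and a lower bound for the energy of the minimizer, both exact up to an additive constant
independent of `N`.

*Upper bound* (`local_comparison`, `window_energy`). Replace the minimizer in the window by the
step function with blocks of length `2 H ω` whose values are those of `f` at the block midpoints.
A jump of height of order `ω` costs `log(1 + (n ω)²) / n ≈ 4/3 ω³`, and the fidelity of a block is
`β M² (2 H ω)³ / 12 = 2/3 ω³`, where `M = f'(x_∞)` and `β M² H³ = 1`. The transitions at the two
ends of the window cost at most a multiple of `ω³`, thanks to a crude sup bound for minimizers.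

*Lower bound* (`small_variation`, `window_lower`). Transitions with slope below
`n ^ (2/3 (1 - t))` contribute only `o(ω)` to the variation, so the minimizer is almost constant
between large transitions. Cutting at the large transitions, a piece of length `2 H λ ω` and
offset `d ω` from `f` at its midpoint costs
`4/3 + 2/3 λ³ + 2 H β λ d² = 2 λ + (2/3 (λ - 1)² (λ + 2) + 2 H β λ d²)` times `ω³`.
The terms `2 λ` add up to the upper bound, so the sum of the nonnegative excesses is bounded
independently of `N`. By the pigeonhole principle (`exists_run`, `good_pieces`) there are
arbitrarily long runs of consecutive pieces with arbitrarily small excess, that is with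
`λ ≈ 1` and `d ≈ 0`.

*Blow-up* (`close_of_pieces`). Centred at the point at distance `H τ ω` to the left of the midpoint
of the central piece of such a run, the blow-up is close to the oblique translation with parameter
`τ`, in the sense of `CloseTo`: uniformly away from the jumps of the limit, and with variation on
intervals almost equal to the increment. A diagonal choice of centres (`exists_diagonal`) and
dominated convergence (`locStrictBV_of_closeTo`) give locally strict convergence. The centres lie
to the left of `x_n`, so the `limsup` is at most `0 ≤ H`.

If `f'(x_∞) = 0`, then `H = V = 0` by the convention `1 / 0 = 0`, the limit is the zero function,
and it suffices to find a block of negligible energy in a long window (`flat_close`).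
-/

open MeasureTheory Filter Set

namespace PeronaMalik

/-- `a_{δ,*} = δ⌊a/δ⌋`, the lower `δ`-approximation of `a`. -/
noncomputable def lowGrid (δ a : ℝ) : ℝ := δ * (⌊a / δ⌋ : ℤ)

/-- `b_δ^* = δ⌈b/δ⌉`, the upper `δ`-approximation of `b`. -/
noncomputable def highGrid (δ b : ℝ) : ℝ := δ * (⌈b / δ⌉ : ℤ)

/-- `u` is piecewise constant at scale `δ`: constant on every interval `[zδ, (z+1)δ)`. -/
def IsPC (δ : ℝ) (u : ℝ → ℝ) : Prop :=
  ∀ z : ℤ, ∀ x ∈ Set.Ico ((z : ℝ) * δ) (((z : ℝ) + 1) * δ), u x = u ((z : ℝ) * δ)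

/-- Discrete derivative `D^δ u (x) = (u(x+δ) - u(x))/δ`. -/
noncomputable def Dd (δ : ℝ) (u : ℝ → ℝ) (x : ℝ) : ℝ := (u (x + δ) - u x) / δ

/-- The discrete Perona–Malik functional with fidelity term on `(a,b)`. -/
noncomputable def DPMF (n : ℕ) (β : ℝ) (f : ℝ → ℝ) (a b : ℝ) (u : ℝ → ℝ) : ℝ :=
  (∫ x in lowGrid (1 / (n : ℝ)) a..(highGrid (1 / (n : ℝ)) b - 1 / (n : ℝ)),
      Real.log (1 + (Dd (1 / (n : ℝ)) u x) ^ 2)) +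
    β * ∫ x in a..b, (u x - f x) ^ 2

/-- `u` is a minimizer of `DPMF n β f (0,1)` over `PC_{1/n}(0,1)`. -/
def IsMinimizer (n : ℕ) (β : ℝ) (f : ℝ → ℝ) (u : ℝ → ℝ) : Prop :=
  IsPC (1 / (n : ℝ)) u ∧
    ∀ v : ℝ → ℝ, IsPC (1 / (n : ℝ)) v → DPMF n β f 0 1 u ≤ DPMF n β f 0 1 v

/-- `m(n,β,f)`, the minimum value of the discrete Perona–Malik functional. -/
noncomputable def mval (n : ℕ) (β : ℝ) (f : ℝ → ℝ) : ℝ :=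
  sInf ((fun u => DPMF n β f 0 1 u) '' {u | IsPC (1 / (n : ℝ)) u})

/-- `ω(n) = (log n / n)^{1/3}`. -/
noncomputable def omg (n : ℕ) : ℝ := (Real.log n / n) ^ ((1 : ℝ) / 3)

/-- `δ(n) = 1/(n ω(n))`. -/
noncomputable def dlt (n : ℕ) : ℝ := 1 / ((n : ℝ) * omg n)

/-- The rescaled discrete Perona–Malik functional. -/
noncomputable def RDPM (n : ℕ) (a b : ℝ) (u : ℝ → ℝ) : ℝ :=
  (1 / omg n ^ 2) *
    ∫ x in lowGrid (dlt n) a..(highGrid (dlt n) b - dlt n),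
      Real.log (1 + (Dd (dlt n) u x) ^ 2)

/-- The rescaled discrete Perona–Malik functional with fidelity term. -/
noncomputable def RDPMF (n : ℕ) (β : ℝ) (f : ℝ → ℝ) (a b : ℝ) (u : ℝ → ℝ) : ℝ :=
  RDPM n a b u + β * ∫ x in Set.Ioo a b, (u x - f x) ^ 2

/-- `u` is a step function with finitely many jumps on `(a,b)`. -/
def IsStep (a b : ℝ) (u : ℝ → ℝ) : Prop :=
  ∃ (s : Finset ℝ) (c : ℝ) (J : ℝ → ℝ),
    (∀ p ∈ s, p ∈ Set.Ioo a b ∧ J p ≠ 0) ∧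
    ∀ x ∈ Set.Ioo a b, u x = c + ∑ p ∈ s, (if p ≤ x then J p else 0)

/-- The set of jump (discontinuity) points of `u` inside `(a,b)`. -/
def jumpSet (a b : ℝ) (u : ℝ → ℝ) : Set ℝ :=
  {x ∈ Set.Ioo a b | ¬ ContinuousAt u x}

/-- The limit functional `JF(α,β,f,(a,b),u) = α·#jumps + β∫(u-f)²`. -/
noncomputable def JF (α β : ℝ) (f : ℝ → ℝ) (a b : ℝ) (u : ℝ → ℝ) : ℝ :=
  α * ((jumpSet a b u).ncard : ℝ) + β * ∫ x in Set.Ioo a b, (u x - f x) ^ 2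

/-- Strict convergence in `BV((a,b))`: `L¹` convergence plus convergence of
total variations. -/
def StrictBV (useq : ℕ → ℝ → ℝ) (u : ℝ → ℝ) (a b : ℝ) : Prop :=
  Tendsto (fun k => ∫ x in Set.Ioo a b, |useq k x - u x|) atTop (nhds 0) ∧
  Tendsto (fun k => eVariationOn (useq k) (Set.Ioo a b)) atTop
    (nhds (eVariationOn u (Set.Ioo a b)))

/-- Locally strict convergence in `BV_loc(ℝ)`: strict convergence on every bounded
interval whose endpoints are not jump points of the limit. -/
def LocStrictBV (useq : ℕ → ℝ → ℝ) (u : ℝ → ℝ) : Prop :=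
  ∀ a b : ℝ, a < b → ContinuousAt u a → ContinuousAt u b → StrictBV useq u a b

/-- `S(x) = 2⌊(x+1)/2⌋`. -/
noncomputable def stairS (x : ℝ) : ℝ := 2 * (⌊(x + 1) / 2⌋ : ℤ)

/-- The canonical `(H,V)`-staircase `S_{H,V}(x) = V·S(x/H)`. -/
noncomputable def canStair (H V : ℝ) (x : ℝ) : ℝ := V * stairS (x / H)

/-- Oblique translations of the canonical `(H,V)`-staircase. -/
def Obl (H V : ℝ) (v : ℝ → ℝ) : Prop :=
  ∃ τ ∈ Set.Icc (-1 : ℝ) 1, ∀ x, v x = canStair H V (x - H * τ) + V * τ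

/-- Graph translations of horizontal type of the canonical `(H,V)`-staircase. -/
def Orz (H V : ℝ) (v : ℝ → ℝ) : Prop :=
  ∃ τ ∈ Set.Icc (-1 : ℝ) 1, ∀ x, v x = canStair H V (x - H * τ)

/-- `μ_n(β,L,M)`: minimum of the rescaled functional with affine forcing term. -/
noncomputable def muDisc (n : ℕ) (β L M : ℝ) : ℝ :=
  sInf ((fun u => RDPMF n β (fun x => M * x) 0 L u) '' {u | IsPC (dlt n) u})

/-- `μ*_n(β,L,M)`: same as `μ_n` but with boundary conditions `u(0)=0`, `u(L^*)=ML`. -/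
noncomputable def muDiscStar (n : ℕ) (β L M : ℝ) : ℝ :=
  sInf ((fun u => RDPMF n β (fun x => M * x) 0 L u) ''
    {u | IsPC (dlt n) u ∧ u 0 = 0 ∧ u (highGrid (dlt n) L - dlt n) = M * L})

/-- `μ(α,β,L,M)`: minimum of the limit functional with affine forcing term. -/
noncomputable def muLim (α β L M : ℝ) : ℝ :=
  sInf ((fun u => JF α β (fun x => M * x) 0 L u) '' {u | IsStep 0 L u})

/-- `μ*(α,β,L,M)`: same as `μ` but with boundary values `u(0⁺)=0`, `u(L⁻)=ML`. -/
noncomputable def muLimStar (α β L M : ℝ) : ℝ :=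
  sInf ((fun u => JF α β (fun x => M * x) 0 L u) ''
    {u | IsStep 0 L u ∧ Tendsto u (nhdsWithin 0 (Set.Ioi 0)) (nhds 0) ∧
         Tendsto u (nhdsWithin L (Set.Iio L)) (nhds (M * L))})

/-- `u` and `v` have the same boundary values `u(a⁺)=v(a⁺)`, `u(b⁻)=v(b⁻)`. -/
def SameBdry (a b : ℝ) (u v : ℝ → ℝ) : Prop :=
  (∀ c : ℝ, Tendsto v (nhdsWithin a (Set.Ioi a)) (nhds c) →
     Tendsto u (nhdsWithin a (Set.Ioi a)) (nhds c)) ∧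
  (∀ c : ℝ, Tendsto v (nhdsWithin b (Set.Iio b)) (nhds c) →
     Tendsto u (nhdsWithin b (Set.Iio b)) (nhds c))

/-- `v` is a local minimizer for `JF(α,β,f,(a,b),·)` among step functions with the
same boundary values. -/
def IsLocalMinJF (α β : ℝ) (f : ℝ → ℝ) (a b : ℝ) (v : ℝ → ℝ) : Prop :=
  IsStep a b v ∧
  ∀ u : ℝ → ℝ, IsStep a b u → SameBdry a b u v → JF α β f a b v ≤ JF α β f a b u

/-- `v` is an entire local minimizer for `JF(α,β,f,·,·)`. -/
def IsEntireLocalMinJF (α β : ℝ) (f : ℝ → ℝ) (v : ℝ → ℝ) : Prop :=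
  ∀ a b : ℝ, a < b → IsLocalMinJF α β f a b v

/-- `v` is a local minimizer for `RDPMF_n(β,f,(a,b),·)` among piecewise constant
functions with the same boundary values. -/
def IsLocalMinRDPMF (n : ℕ) (β : ℝ) (f : ℝ → ℝ) (a b : ℝ) (v : ℝ → ℝ) : Prop :=
  IsPC (dlt n) v ∧
  ∀ u : ℝ → ℝ, IsPC (dlt n) u →
    u (lowGrid (dlt n) a) = v (lowGrid (dlt n) a) →
    u (highGrid (dlt n) b - dlt n) = v (highGrid (dlt n) b - dlt n) →
    RDPMF n β f a b v ≤ RDPMF n β f a b u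

/-! ### The functional as a finite sum over grid cells -/

/-- Energy of a transition between two neighbouring cells whose values differ by `s`. -/
noncomputable def cellE (n : ℕ) (s : ℝ) : ℝ := Real.log (1 + (n * s) ^ 2) / n

/-- Fidelity, without the factor `β`, of the value `c` on the cell `[i/n, (i+1)/n)`. -/
noncomputable def cellF (n : ℕ) (f : ℝ → ℝ) (i : ℕ) (c : ℝ) : ℝ :=
  ∫ x in ((i : ℕ) : ℝ) / n..((i + 1 : ℕ) : ℝ) / n, (c - f x) ^ 2

/-- The functional `DPMF n β f 0 1` written in terms of the cell values `U 0, …, U (n-1)`. -/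
noncomputable def discE (n : ℕ) (β : ℝ) (f : ℝ → ℝ) (U : ℕ → ℝ) : ℝ :=
  ∑ i ∈ Finset.range (n - 1), cellE n (U (i + 1) - U i) +
    β * ∑ i ∈ Finset.range n, cellF n f i (U i)

lemma cellE_nonneg (n : ℕ) (s : ℝ) : 0 ≤ cellE n s :=
  div_nonneg (Real.log_nonneg (by nlinarith [sq_nonneg (n * s)])) (Nat.cast_nonneg n)

lemma cellE_zero (n : ℕ) : cellE n 0 = 0 := by simp [cellE]

lemma cell_le (n i : ℕ) : ((i : ℕ) : ℝ) / n ≤ ((i + 1 : ℕ) : ℝ) / n := by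
  push_cast; gcongr; linarith

lemma cellF_nonneg (n : ℕ) (f : ℝ → ℝ) (i : ℕ) (c : ℝ) : 0 ≤ cellF n f i c :=
  intervalIntegral.integral_nonneg (cell_le n i) fun _ _ => sq_nonneg _

lemma pc_cell {n : ℕ} {u : ℝ → ℝ} (hu : IsPC (1 / (n : ℝ)) u) (i : ℕ) {x : ℝ}
    (hx : x ∈ Ico (((i : ℕ) : ℝ) / n) (((i + 1 : ℕ) : ℝ) / n)) : u x = u ((i : ℝ) / n) := by
  have h := hu i x
  simp only [Int.cast_natCast, mul_one_div] at h
  apply h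
  simpa using hx

/-- A piecewise constant function is determined by its values at the grid points. -/
lemma pc_eq_floor {n : ℕ} (hn : 1 ≤ n) {u : ℝ → ℝ} (hu : IsPC (1 / (n : ℝ)) u) (x : ℝ) :
    u x = u ((⌊(n : ℝ) * x⌋ : ℝ) / n) := by
  have hn' : (0 : ℝ) < n := by exact_mod_cast hn
  have h := hu ⌊(n : ℝ) * x⌋ x
  simp only [mul_one_div] at h
  apply h
  constructor
  · rw [div_le_iff₀ hn', mul_comm]; exact Int.floor_le _
  · rw [lt_div_iff₀ hn', mul_comm]; exact Int.lt_floor_add_one _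

lemma pc_measurable {n : ℕ} (hn : 1 ≤ n) {u : ℝ → ℝ} (hu : IsPC (1 / (n : ℝ)) u) :
    Measurable u := by
  have : u = (fun z : ℤ => u ((z : ℝ) / n)) ∘ fun x => ⌊(n : ℝ) * x⌋ := by
    funext x; exact pc_eq_floor hn hu x
  rw [this]
  exact (measurable_of_countable _).comp (Int.measurable_floor.comp (measurable_const_mul _))

lemma DPMF_eq_discE {n : ℕ} (hn : 1 ≤ n) (β : ℝ) {f : ℝ → ℝ} (hf : ContinuousOn f (Icc 0 1))
    {u : ℝ → ℝ} (hu : IsPC (1 / (n : ℝ)) u) :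
    DPMF n β f 0 1 u = discE n β f fun i => u ((i : ℝ) / n) := by
  have hn' : (0 : ℝ) < n := by exact_mod_cast hn
  unfold DPMF discE
  congr 1
  · have h0 : lowGrid (1 / (n : ℝ)) 0 = ((0 : ℕ) : ℝ) / n := by simp [lowGrid]
    have h1 : highGrid (1 / (n : ℝ)) 1 - 1 / (n : ℝ) = ((n - 1 : ℕ) : ℝ) / n := by
      simp only [highGrid, one_div_one_div, Int.ceil_natCast, Int.cast_natCast]
      rw [Nat.cast_sub hn]; push_cast; field_simp
    rw [h0, h1]
    have key : ∀ i : ℕ, EqOn (fun x => Real.log (1 + (Dd (1 / (n : ℝ)) u x) ^ 2))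
        (fun _ => Real.log (1 + (n * (u (((i + 1 : ℕ) : ℝ) / n) - u ((i : ℝ) / n))) ^ 2))
        (Ioo (((i : ℕ) : ℝ) / n) (((i + 1 : ℕ) : ℝ) / n)) := by
      intro i x hx
      have e1 := pc_cell hu i (x := x) ⟨hx.1.le, hx.2⟩
      have e2 := pc_cell hu (i + 1) (x := x + 1 / n) (by
        have h1 := hx.1; have h2 := hx.2
        push_cast at h1 h2 ⊢
        constructor
        · rw [add_div]; linarith
        · rw [add_div _ (1 : ℝ)]; linarith)
      simp only [Dd, e1, e2]
      congr 3
      field_simp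
    rw [← intervalIntegral.sum_integral_adjacent_intervals (a := fun i : ℕ => (i : ℝ) / n)]
    · refine Finset.sum_congr rfl fun i _ => ?_
      rw [intervalIntegral.integral_congr_Ioo_of_le (cell_le n i) (key i),
        intervalIntegral.integral_const]
      simp only [cellE, smul_eq_mul]
      push_cast
      field_simp
      ring
    · intro i _
      refine (intervalIntegrable_congr_uIoo ?_).2 (intervalIntegrable_const
        (c := Real.log (1 + (n * (u (((i + 1 : ℕ) : ℝ) / n) - u ((i : ℝ) / n))) ^ 2)))
      rw [uIoo_of_le (cell_le n i)]
      exact key i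
  · congr 1
    have h0 : (0 : ℝ) = ((0 : ℕ) : ℝ) / n := by simp
    have h1 : (1 : ℝ) = ((n : ℕ) : ℝ) / n := by field_simp
    have key : ∀ i : ℕ, EqOn (fun x => (u x - f x) ^ 2)
        (fun x => (u ((i : ℝ) / n) - f x) ^ 2)
        (Ioo (((i : ℕ) : ℝ) / n) (((i + 1 : ℕ) : ℝ) / n)) := by
      intro i x hx
      simp only [pc_cell hu i (x := x) ⟨hx.1.le, hx.2⟩]
    conv_lhs => rw [h0, h1]
    rw [← intervalIntegral.sum_integral_adjacent_intervals (a := fun i : ℕ => (i : ℝ) / n)]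
    · refine Finset.sum_congr rfl fun i _ => ?_
      rw [intervalIntegral.integral_congr_Ioo_of_le (cell_le n i) (key i)]
      rfl
    · intro i hi
      refine (intervalIntegrable_congr_uIoo ?_).2 (ContinuousOn.intervalIntegrable
        (u := fun x => (u ((i : ℝ) / n) - f x) ^ 2) ?_)
      · rw [uIoo_of_le (cell_le n i)]
        exact key i
      · rw [uIcc_of_le (cell_le n i)]
        refine ContinuousOn.pow (continuousOn_const.sub (hf.mono ?_)) 2
        intro x hx
        refine ⟨le_trans (by positivity) hx.1, hx.2.trans ?_⟩
        rw [div_le_one hn']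
        exact_mod_cast hi

lemma isPC_floor {n : ℕ} (hn : 1 ≤ n) (V : ℕ → ℝ) :
    IsPC (1 / (n : ℝ)) fun x => V ⌊(n : ℝ) * x⌋.toNat := by
  have hn' : (0 : ℝ) < n := by exact_mod_cast hn
  intro z x hx
  simp only [mul_one_div] at hx ⊢
  have h1 : ⌊(n : ℝ) * x⌋ = z := by
    rw [Int.floor_eq_iff]
    constructor
    · have := hx.1; rw [div_le_iff₀ hn', mul_comm] at this; exact this
    · have := hx.2; rw [lt_div_iff₀ hn', mul_comm] at this; exact this
  have h2 : ⌊(n : ℝ) * ((z : ℝ) / n)⌋ = z := by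
    rw [mul_div_cancel₀ _ hn'.ne', Int.floor_intCast]
  rw [h1, h2]

/-- The cell values of a minimizer minimize the discrete functional. -/
lemma IsMinimizer.discE_le {n : ℕ} (hn : 1 ≤ n) {β : ℝ} {f : ℝ → ℝ}
    (hf : ContinuousOn f (Icc 0 1)) {u : ℝ → ℝ} (hu : IsMinimizer n β f u) (V : ℕ → ℝ) :
    discE n β f (fun i => u ((i : ℝ) / n)) ≤ discE n β f V := by
  have hn' : (0 : ℝ) < n := by exact_mod_cast hn
  have h := hu.2 _ (isPC_floor hn V)
  rw [DPMF_eq_discE hn β hf hu.1, DPMF_eq_discE hn β hf (isPC_floor hn V)] at h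
  convert h using 2
  funext i
  rw [mul_div_cancel₀ _ hn'.ne', Int.floor_natCast, Int.toNat_natCast]

/-- Changing the values on the cells `p, …, q-1` cannot lower the energy; the two transitions
at the ends of the window are charged to the competitor only. -/
lemma local_comparison {n : ℕ} {β : ℝ} {f : ℝ → ℝ} {U : ℕ → ℝ}
    (hU : ∀ V, discE n β f U ≤ discE n β f V) {p q : ℕ} (hp : 1 ≤ p) (hpq : p < q) (hq : q < n)
    (c : ℕ → ℝ) :
    ∑ i ∈ Finset.Ico p (q - 1), cellE n (U (i + 1) - U i) +
        β * ∑ i ∈ Finset.Ico p q, cellF n f i (U i) ≤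
      ∑ i ∈ Finset.Ico p (q - 1), cellE n (c (i + 1) - c i) + cellE n (c p - U (p - 1)) +
        cellE n (U q - c (q - 1)) + β * ∑ i ∈ Finset.Ico p q, cellF n f i (c i) := by
  set V : ℕ → ℝ := fun i => if p ≤ i ∧ i < q then c i else U i with hV
  have h := hU V
  have split1 : ∀ g : ℕ → ℝ, ∑ i ∈ Finset.range (n - 1), g i =
      ∑ i ∈ Finset.Ico 0 (p - 1), g i + g (p - 1) + ∑ i ∈ Finset.Ico p (q - 1), g i + g (q - 1) +
        ∑ i ∈ Finset.Ico q (n - 1), g i := by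
    intro g
    rw [Finset.range_eq_Ico, ← Finset.sum_Ico_consecutive g (Nat.zero_le q) (by omega : q ≤ n - 1),
      ← Finset.sum_Ico_consecutive g (Nat.zero_le p) hpq.le]
    obtain ⟨p, rfl⟩ : ∃ p', p = p' + 1 := ⟨p - 1, by omega⟩
    obtain ⟨q, rfl⟩ : ∃ q', q = q' + 1 := ⟨q - 1, by omega⟩
    rw [Finset.sum_Ico_succ_top (Nat.zero_le p), Finset.sum_Ico_succ_top (by omega : p + 1 ≤ q)]
    simp only [Nat.add_sub_cancel]
    ring
  have split2 : ∀ g : ℕ → ℝ, ∑ i ∈ Finset.range n, g i =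
      ∑ i ∈ Finset.Ico 0 p, g i + ∑ i ∈ Finset.Ico p q, g i + ∑ i ∈ Finset.Ico q n, g i := by
    intro g
    rw [Finset.range_eq_Ico, ← Finset.sum_Ico_consecutive g (Nat.zero_le q) hq.le,
      ← Finset.sum_Ico_consecutive g (Nat.zero_le p) hpq.le]
  unfold discE at h
  rw [split1, split1, split2, split2] at h
  have hout : ∀ i, (i < p ∨ q ≤ i) → V i = U i := by
    intro i hi; simp only [hV]; rw [if_neg]; omega
  have hin : ∀ i, p ≤ i → i < q → V i = c i := by
    intro i h1 h2; simp only [hV]; rw [if_pos ⟨h1, h2⟩]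
  have a1 : ∑ i ∈ Finset.Ico 0 (p - 1), cellE n (V (i + 1) - V i) =
      ∑ i ∈ Finset.Ico 0 (p - 1), cellE n (U (i + 1) - U i) := by
    refine Finset.sum_congr rfl fun i hi => ?_
    rw [Finset.mem_Ico] at hi
    rw [hout i (by omega), hout (i + 1) (by omega)]
  have a2 : ∑ i ∈ Finset.Ico q (n - 1), cellE n (V (i + 1) - V i) =
      ∑ i ∈ Finset.Ico q (n - 1), cellE n (U (i + 1) - U i) := by
    refine Finset.sum_congr rfl fun i hi => ?_
    rw [Finset.mem_Ico] at hi
    rw [hout i (by omega), hout (i + 1) (by omega)]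
  have a3 : ∑ i ∈ Finset.Ico p (q - 1), cellE n (V (i + 1) - V i) =
      ∑ i ∈ Finset.Ico p (q - 1), cellE n (c (i + 1) - c i) := by
    refine Finset.sum_congr rfl fun i hi => ?_
    rw [Finset.mem_Ico] at hi
    rw [hin i (by omega) (by omega), hin (i + 1) (by omega) (by omega)]
  have b1 : ∑ i ∈ Finset.Ico 0 p, cellF n f i (V i) = ∑ i ∈ Finset.Ico 0 p, cellF n f i (U i) := by
    refine Finset.sum_congr rfl fun i hi => ?_
    rw [Finset.mem_Ico] at hi
    rw [hout i (by omega)]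
  have b2 : ∑ i ∈ Finset.Ico q n, cellF n f i (V i) = ∑ i ∈ Finset.Ico q n, cellF n f i (U i) := by
    refine Finset.sum_congr rfl fun i hi => ?_
    rw [Finset.mem_Ico] at hi
    rw [hout i (by omega)]
  have b3 : ∑ i ∈ Finset.Ico p q, cellF n f i (V i) = ∑ i ∈ Finset.Ico p q, cellF n f i (c i) := by
    refine Finset.sum_congr rfl fun i hi => ?_
    rw [Finset.mem_Ico] at hi
    rw [hin i (by omega) (by omega)]
  have e1 : V (p - 1 + 1) - V (p - 1) = c p - U (p - 1) := by
    rw [Nat.sub_add_cancel hp, hin p le_rfl hpq, hout (p - 1) (by omega)]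
  have e2 : V (q - 1 + 1) - V (q - 1) = U q - c (q - 1) := by
    rw [Nat.sub_add_cancel (by omega), hout q (by omega), hin (q - 1) (by omega) (by omega)]
  rw [a1, a2, a3, b1, b2, b3, e1, e2] at h
  have n1 := cellE_nonneg n (U (p - 1 + 1) - U (p - 1))
  have n2 := cellE_nonneg n (U (q - 1 + 1) - U (q - 1))
  simp only [mul_add] at h
  linarith


/-! ### Asymptotics of the blow-up scale -/

lemma log_div_pos {n : ℕ} (hn : 2 ≤ n) : 0 < Real.log n / n := by
  have : (1 : ℝ) < n := by exact_mod_cast (by omega : 1 < n)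
  have := Real.log_pos this
  positivity

lemma omg_pos {n : ℕ} (hn : 2 ≤ n) : 0 < omg n := Real.rpow_pos_of_pos (log_div_pos hn) _

lemma omg_cube {n : ℕ} (hn : 2 ≤ n) : omg n ^ 3 = Real.log n / n := by
  unfold omg
  rw [← Real.rpow_natCast, ← Real.rpow_mul (log_div_pos hn).le]
  norm_num

lemma natCast_rpow_neg_tendsto {s : ℝ} (hs : 0 < s) :
    Tendsto (fun n : ℕ => (n : ℝ) ^ (-s)) atTop (nhds 0) :=
  (tendsto_rpow_neg_atTop hs).comp tendsto_natCast_atTop_atTop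

lemma omg_le_rpow {s : ℝ} (hs : 0 < s) :
    ∀ᶠ n : ℕ in atTop, omg n ≤ (n : ℝ) ^ (-(1 / 3) + s : ℝ) := by
  have h := ((isLittleO_log_rpow_atTop (by linarith : (0 : ℝ) < 3 * s)).comp_tendsto
    tendsto_natCast_atTop_atTop).bound (zero_lt_one)
  filter_upwards [h, eventually_ge_atTop 2] with n h1 h2
  have hn : (1 : ℝ) < n := by exact_mod_cast (by omega : 1 < n)
  have hn0 : (0 : ℝ) < n := by linarith
  simp only [Function.comp, one_mul, Real.norm_eq_abs] at h1
  rw [abs_of_pos (Real.log_pos hn), abs_of_pos (Real.rpow_pos_of_pos hn0 _)] at h1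
  have h3 : Real.log n / n ≤ (n : ℝ) ^ (3 * s - 1) := by
    rw [Real.rpow_sub_one hn0.ne']; gcongr
  calc omg n ≤ ((n : ℝ) ^ (3 * s - 1)) ^ ((1 : ℝ) / 3) :=
        Real.rpow_le_rpow (log_div_pos h2).le h3 (by norm_num)
    _ = _ := by rw [← Real.rpow_mul hn0.le]; congr 1; ring

lemma omg_tendsto : Tendsto omg atTop (nhds 0) := by
  have h := natCast_rpow_neg_tendsto (by norm_num : (0 : ℝ) < 1 / 6)
  refine tendsto_of_tendsto_of_tendsto_of_le_of_le' tendsto_const_nhds h ?_ ?_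
  · filter_upwards [eventually_ge_atTop 2] with n hn using (omg_pos hn).le
  · filter_upwards [omg_le_rpow (by norm_num : (0 : ℝ) < 1 / 6)] with n hn
    refine hn.trans (le_of_eq ?_)
    norm_num

lemma nat_mul_omg_tendsto : Tendsto (fun n : ℕ => (n : ℝ) * omg n) atTop atTop := by
  refine tendsto_atTop_mono' atTop ?_ (Real.tendsto_log_atTop.comp tendsto_natCast_atTop_atTop)
  filter_upwards [eventually_ge_atTop 2, omg_tendsto.eventually (gt_mem_nhds zero_lt_one)]
    with n hn h1
  have h0 := omg_pos hn
  have hc := omg_cube hn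
  have hn0 : (0 : ℝ) < n := by exact_mod_cast (by omega : 0 < n)
  rw [eq_div_iff hn0.ne'] at hc
  simp only [Function.comp]
  rw [← hc]
  nlinarith [mul_pos hn0 h0, mul_pos h0 h0, mul_pos (mul_pos hn0 h0) h0]

/-- A transition of height `O(ω)` costs at most `(4/3 + t) ω³`. -/
lemma cellE_le_of_height (C : ℝ) {t : ℝ} (ht : 0 < t) :
    ∀ᶠ n : ℕ in atTop, ∀ s : ℝ, |s| ≤ C * omg n → cellE n s ≤ (4 / 3 + t) * omg n ^ 3 := by
  have h1 := ((natCast_rpow_neg_tendsto (by linarith : 0 < t / 2)).const_mul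
    (C ^ 2)).eventually (gt_mem_nhds (by norm_num : C ^ 2 * 0 < (1 : ℝ) / 2))
  have h1' := (natCast_rpow_neg_tendsto (by linarith : 0 < 4 / 3 + t)).eventually
    (gt_mem_nhds (by norm_num : (0 : ℝ) < (1 : ℝ) / 2))
  filter_upwards [h1, h1', omg_le_rpow (by linarith : 0 < t / 4), eventually_ge_atTop 2]
    with n h1 h1' h2 hn s hs
  have hn0 : (0 : ℝ) < n := by exact_mod_cast (by omega : 0 < n)
  rw [omg_cube hn, cellE, ← mul_div_assoc]
  gcongr
  rw [← Real.log_rpow hn0]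
  apply Real.log_le_log (by positivity)
  have hw := omg_pos hn
  have e1 : (n * s) ^ 2 ≤ C ^ 2 * (n : ℝ) ^ (4 / 3 + t / 2 : ℝ) := by
    have : s ^ 2 ≤ (C * omg n) ^ 2 := by
      rw [← sq_abs s]; gcongr
    have h3 : omg n ^ 2 ≤ (n : ℝ) ^ (-(2 / 3) + t / 2 : ℝ) := by
      calc omg n ^ 2 ≤ ((n : ℝ) ^ (-(1 / 3) + t / 4 : ℝ)) ^ 2 := by gcongr
        _ = _ := by
          rw [← Real.rpow_natCast, ← Real.rpow_mul hn0.le]; congr 1; push_cast; ring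
    calc (n * s) ^ 2 = (n : ℝ) ^ 2 * s ^ 2 := by ring
      _ ≤ (n : ℝ) ^ 2 * (C * omg n) ^ 2 := by gcongr
      _ = C ^ 2 * ((n : ℝ) ^ 2 * omg n ^ 2) := by ring
      _ ≤ C ^ 2 * ((n : ℝ) ^ 2 * (n : ℝ) ^ (-(2 / 3) + t / 2 : ℝ)) := by gcongr
      _ = _ := by
        rw [← Real.rpow_natCast (n : ℝ) 2, ← Real.rpow_add hn0]; congr 2; push_cast; ring
  have e2 : (n : ℝ) ^ (4 / 3 + t / 2 : ℝ) = (n : ℝ) ^ (4 / 3 + t : ℝ) * (n : ℝ) ^ (-(t / 2)) := by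
    rw [← Real.rpow_add hn0]; congr 1; ring
  have e3 : (n : ℝ) ^ (4 / 3 + t : ℝ) * (n : ℝ) ^ (-(4 / 3 + t)) = 1 := by
    rw [← Real.rpow_add hn0]; simp
  have hP : 0 < (n : ℝ) ^ (4 / 3 + t : ℝ) := Real.rpow_pos_of_pos hn0 _
  rw [e2] at e1
  nlinarith [mul_lt_mul_of_pos_left h1 hP, mul_lt_mul_of_pos_left h1' hP]

/-- A transition of height `O(√n)` costs at most `4 ω³`. -/
lemma cellE_le_of_sqrt (C : ℝ) :
    ∀ᶠ n : ℕ in atTop, ∀ s : ℝ, |s| ≤ C * Real.sqrt n → cellE n s ≤ 4 * omg n ^ 3 := by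
  have h1 : ∀ᶠ n : ℕ in atTop, C ^ 2 + 1 ≤ (n : ℝ) :=
    tendsto_natCast_atTop_atTop.eventually (eventually_ge_atTop _)
  filter_upwards [h1, eventually_ge_atTop 2] with n h1 hn s hs
  have hn0 : (1 : ℝ) ≤ n := by exact_mod_cast (by omega : 1 ≤ n)
  rw [omg_cube hn, cellE, ← mul_div_assoc]
  gcongr
  rw [show (4 : ℝ) = ((4 : ℕ) : ℝ) by norm_num, ← Real.log_pow]
  apply Real.log_le_log (by positivity)
  have e : s ^ 2 ≤ C ^ 2 * n := by
    have : s ^ 2 ≤ (C * Real.sqrt n) ^ 2 := by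
      rw [← sq_abs s]; gcongr
    rwa [mul_pow, Real.sq_sqrt (by linarith)] at this
  have h3 : (n : ℝ) ^ 2 * s ^ 2 ≤ (n : ℝ) ^ 2 * (C ^ 2 * n) := by gcongr
  have h4 : (1 : ℝ) ≤ (n : ℝ) ^ 3 := one_le_pow₀ hn0
  have h5 : (n : ℝ) ^ 3 * (C ^ 2 + 1) ≤ (n : ℝ) ^ 3 * n := by gcongr
  nlinarith

/-- The slope above which a transition is regarded as a jump. -/
noncomputable def thr (n : ℕ) (t : ℝ) : ℝ := (n : ℝ) ^ (2 / 3 * (1 - t) : ℝ)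

/-- A jump costs at least almost `4/3 ω³`. -/
lemma cellE_ge_of_big {n : ℕ} (hn : 2 ≤ n) {t s : ℝ} (h : thr n t < n * |s|) :
    (1 - t) * (4 / 3) * omg n ^ 3 ≤ cellE n s := by
  have hn0 : (0 : ℝ) < n := by exact_mod_cast (by omega : 0 < n)
  rw [omg_cube hn, cellE, ← mul_div_assoc]
  gcongr
  have h0 : 0 < thr n t := Real.rpow_pos_of_pos hn0 _
  calc (1 - t) * (4 / 3) * Real.log n = 2 * Real.log (thr n t) := by
        rw [thr, Real.log_rpow hn0]; ring
    _ = Real.log (thr n t ^ 2) := by rw [Real.log_pow]; norm_num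
    _ ≤ _ := by
      apply Real.log_le_log (by positivity)
      have : thr n t ^ 2 ≤ (n * |s|) ^ 2 := by gcongr
      rw [mul_pow, sq_abs, ← mul_pow] at this
      linarith

/-- Linear growth is controlled by a small constant plus a multiple of the logarithm. -/
lemma le_mu_add_log {μ T x : ℝ} (hμ : 0 < μ) (hx : 0 ≤ x) (hxT : x ≤ T) :
    x ≤ μ + (1 / (2 * μ) + 2 * T) * Real.log (1 + x ^ 2) := by
  have hl : 0 ≤ Real.log (1 + x ^ 2) := Real.log_nonneg (by nlinarith [sq_nonneg x])
  have hlow : x ^ 2 / (1 + x ^ 2) ≤ Real.log (1 + x ^ 2) := by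
    have := Real.one_sub_inv_le_log_of_pos (by positivity : 0 < 1 + x ^ 2)
    refine le_trans (le_of_eq ?_) this
    field_simp; ring
  rcases le_total x 1 with h | h
  · have h1 : x ^ 2 / 2 ≤ Real.log (1 + x ^ 2) := by
      refine le_trans ?_ hlow
      gcongr
      nlinarith
    have h2 : x ≤ μ + 1 / (2 * μ) * (x ^ 2 / 2) := by
      have : μ + 1 / (2 * μ) * (x ^ 2 / 2) - x = (2 * μ - x) ^ 2 / (4 * μ) := by
        field_simp; ring
      have : 0 ≤ (2 * μ - x) ^ 2 / (4 * μ) := by positivity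
      linarith
    have h3 : 1 / (2 * μ) * (x ^ 2 / 2) ≤ 1 / (2 * μ) * Real.log (1 + x ^ 2) := by gcongr
    have h4 : 0 ≤ 2 * T * Real.log (1 + x ^ 2) := by
      have : 0 ≤ T := hx.trans hxT
      positivity
    nlinarith
  · have h1 : 1 / 2 ≤ Real.log (1 + x ^ 2) := by
      refine le_trans ?_ hlow
      rw [div_le_div_iff₀ (by norm_num) (by positivity)]
      nlinarith
    have hT : 0 ≤ T := hx.trans hxT
    have h2 : 0 ≤ 1 / (2 * μ) * Real.log (1 + x ^ 2) := by positivity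
    nlinarith

/-- In a window of `O(ωn)` cells with energy `O(ω³)`, the transitions that are not jumps
contribute only `o(ω)` to the variation. -/
lemma small_variation (A E : ℝ) (hA : 0 < A) (hE : 0 ≤ E) {t s : ℝ} (ht : 0 < t) (hs : 0 < s) :
    ∀ᶠ n : ℕ in atTop, ∀ (I : Finset ℕ) (d : ℕ → ℝ), (I.card : ℝ) ≤ A * (n * omg n) →
      (∀ i ∈ I, n * |d i| ≤ thr n t) → ∑ i ∈ I, cellE n (d i) ≤ E * omg n ^ 3 →
      ∑ i ∈ I, |d i| ≤ s * omg n := by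
  set μ := s / (2 * A) with hμ
  have hμ0 : 0 < μ := by positivity
  have h1 : Tendsto (fun n : ℕ => 1 / (2 * μ) * E * omg n ^ 2) atTop (nhds 0) := by
    simpa using (omg_tendsto.pow 2).const_mul (1 / (2 * μ) * E)
  have h2 := (natCast_rpow_neg_tendsto (by linarith : 0 < t / 3)).const_mul (2 * E)
  rw [mul_zero] at h2
  have hs4 : (0 : ℝ) < s / 4 := by linarith
  filter_upwards [h1.eventually (gt_mem_nhds hs4), h2.eventually (gt_mem_nhds hs4),
    omg_le_rpow (by linarith : 0 < t / 6), eventually_ge_atTop 2]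
    with n h1 h2 h3 hn I d hcard hsmall hen
  have hn0 : (0 : ℝ) < n := by exact_mod_cast (by omega : 0 < n)
  have hw := omg_pos hn
  have hT : thr n t * omg n ^ 2 ≤ (n : ℝ) ^ (-(t / 3)) := by
    calc thr n t * omg n ^ 2 ≤ thr n t * ((n : ℝ) ^ (-(1 / 3) + t / 6 : ℝ)) ^ 2 := by
          have : 0 ≤ thr n t := (Real.rpow_pos_of_pos hn0 _).le
          gcongr
      _ = _ := by
          rw [thr, ← Real.rpow_natCast, ← Real.rpow_mul hn0.le, ← Real.rpow_add hn0]
          congr 1; push_cast; ring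
  have hsum : ∑ i ∈ I, n * |d i| ≤ ∑ i ∈ I, (μ + (1 / (2 * μ) + 2 * thr n t) *
      (n * cellE n (d i))) := by
    refine Finset.sum_le_sum fun i hi => ?_
    refine (le_mu_add_log hμ0 (by positivity) (hsmall i hi)).trans (le_of_eq ?_)
    rw [cellE, mul_pow, sq_abs, ← mul_pow]
    field_simp
  rw [← Finset.mul_sum, Finset.sum_add_distrib, Finset.sum_const, nsmul_eq_mul,
    ← Finset.mul_sum, ← Finset.mul_sum] at hsum
  have hT0 : 0 ≤ thr n t := (Real.rpow_pos_of_pos hn0 _).le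
  have k1 : (I.card : ℝ) * μ ≤ s / 2 * (n * omg n) := by
    calc (I.card : ℝ) * μ ≤ A * (n * omg n) * μ := by gcongr
      _ = _ := by rw [hμ]; field_simp
  have k2 : (1 / (2 * μ) + 2 * thr n t) * (n * ∑ i ∈ I, cellE n (d i)) ≤
      (1 / (2 * μ) + 2 * thr n t) * (n * (E * omg n ^ 3)) := by
    gcongr
  have k3 : (1 / (2 * μ) + 2 * thr n t) * (n * (E * omg n ^ 3)) =
      (1 / (2 * μ) * E * omg n ^ 2 + 2 * E * (thr n t * omg n ^ 2)) * (n * omg n) := by ring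
  have k4 : 2 * E * (thr n t * omg n ^ 2) ≤ 2 * E * (n : ℝ) ^ (-(t / 3)) := by gcongr
  have k5 : (1 / (2 * μ) * E * omg n ^ 2 + 2 * E * (thr n t * omg n ^ 2)) * (n * omg n) ≤
      s / 2 * (n * omg n) := by
    gcongr; linarith
  have : n * ∑ i ∈ I, |d i| ≤ n * (s * omg n) := by nlinarith
  exact le_of_mul_le_mul_left this hn0


/-! ### Upper bound for the energy of a minimizer in a window -/

lemma cell_subset {n i : ℕ} (hi : i < n) :
    Icc (((i : ℕ) : ℝ) / n) (((i + 1 : ℕ) : ℝ) / n) ⊆ Icc 0 1 := by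
  have hn' : (0 : ℝ) < n := by exact_mod_cast (by omega : 0 < n)
  intro x hx
  refine ⟨le_trans (by positivity) hx.1, hx.2.trans ?_⟩
  rw [div_le_one hn']
  exact_mod_cast hi

lemma cellF_intervalIntegrable {n i : ℕ} (hi : i < n) {f : ℝ → ℝ}
    (hf : ContinuousOn f (Icc 0 1)) (c : ℝ) :
    IntervalIntegrable (fun x => (c - f x) ^ 2) volume (((i : ℕ) : ℝ) / n)
      (((i + 1 : ℕ) : ℝ) / n) := by
  apply ContinuousOn.intervalIntegrable
  rw [uIcc_of_le (cell_le n i)]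
  exact ContinuousOn.pow (continuousOn_const.sub (hf.mono (cell_subset hi))) 2

lemma sum_cellF_const {n a b : ℕ} (hab : a ≤ b) (hb : b ≤ n) {f : ℝ → ℝ}
    (hf : ContinuousOn f (Icc 0 1)) (c : ℝ) :
    ∑ i ∈ Finset.Ico a b, cellF n f i c = ∫ x in (a : ℝ) / n..(b : ℝ) / n, (c - f x) ^ 2 :=
  intervalIntegral.sum_integral_adjacent_intervals_Ico (a := fun i : ℕ => (i : ℝ) / n) hab
    fun _ hi => cellF_intervalIntegrable (hi.2.trans_le hb) hf c

/-- Comparison with the zero function gives a crude bound on the values of a minimizer. -/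
lemma abs_le_of_min {n : ℕ} (hn : 1 ≤ n) {β : ℝ} (hβ : 0 < β) {f : ℝ → ℝ}
    (hf : ContinuousOn f (Icc 0 1)) {F : ℝ} (hF : ∀ x ∈ Icc (0 : ℝ) 1, |f x| ≤ F) {U : ℕ → ℝ}
    (hU : ∀ V, discE n β f U ≤ discE n β f V) {i : ℕ} (hi : i < n) :
    |U i| ≤ 2 * F * Real.sqrt n := by
  have hn' : (1 : ℝ) ≤ n := by exact_mod_cast hn
  have hF0 : 0 ≤ F := (abs_nonneg _).trans (hF 0 (by simp))
  have hlen : ∀ i : ℕ, ((i + 1 : ℕ) : ℝ) / n - ((i : ℕ) : ℝ) / n = 1 / n := by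
    intro i; push_cast; ring
  have h0 : discE n β f (fun _ => 0) ≤ β * F ^ 2 := by
    unfold discE
    simp only [sub_zero, cellE_zero, Finset.sum_const_zero, zero_add]
    gcongr
    calc ∑ i ∈ Finset.range n, cellF n f i 0 ≤ ∑ i ∈ Finset.range n, F ^ 2 * (1 / n) := by
          refine Finset.sum_le_sum fun j hj => ?_
          have hj := Finset.mem_range.1 hj
          unfold cellF
          calc _ ≤ ∫ x in ((j : ℕ) : ℝ) / n..((j + 1 : ℕ) : ℝ) / n, F ^ 2 := by
                refine intervalIntegral.integral_mono_on (cell_le n j)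
                  (cellF_intervalIntegrable hj hf 0) intervalIntegrable_const fun x hx => ?_
                rw [zero_sub, neg_sq, ← sq_abs]
                have := hF x (cell_subset hj hx)
                gcongr
            _ = _ := by rw [intervalIntegral.integral_const, hlen, smul_eq_mul]; ring
      _ = F ^ 2 := by
          rw [Finset.sum_const, Finset.card_range, nsmul_eq_mul]; field_simp
  have h1 : cellF n f i (U i) ≤ F ^ 2 := by
    have h2 := (hU fun _ => 0).trans h0
    unfold discE at h2
    have h3 : 0 ≤ ∑ i ∈ Finset.range (n - 1), cellE n (U (i + 1) - U i) :=
      Finset.sum_nonneg fun _ _ => cellE_nonneg _ _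
    have h4 : cellF n f i (U i) ≤ ∑ i ∈ Finset.range n, cellF n f i (U i) :=
      Finset.single_le_sum (f := fun i => cellF n f i (U i)) (fun _ _ => cellF_nonneg _ _ _ _)
        (Finset.mem_range.2 hi)
    exact h4.trans (le_of_mul_le_mul_left (by linarith) hβ)
  have hs1 : 1 ≤ Real.sqrt n := Real.one_le_sqrt.2 hn'
  rcases le_total (|U i|) F with h | h
  · nlinarith
  have h2 : (|U i| - F) ^ 2 * (1 / n) ≤ F ^ 2 := by
    refine le_trans ?_ h1
    unfold cellF
    calc (|U i| - F) ^ 2 * (1 / n)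
        = ∫ x in ((i : ℕ) : ℝ) / n..((i + 1 : ℕ) : ℝ) / n, (|U i| - F) ^ 2 := by
          rw [intervalIntegral.integral_const, hlen, smul_eq_mul]; ring
      _ ≤ _ := by
          refine intervalIntegral.integral_mono_on (cell_le n i)
            intervalIntegrable_const (cellF_intervalIntegrable hi hf _) fun x hx => ?_
          have h3 := hF x (cell_subset hi hx)
          rw [← sq_abs (U i - f x)]
          have h4 := abs_sub_abs_le_abs_sub (U i) (f x)
          have h5 : |U i| - F ≤ |U i - f x| := by linarith
          have h6 : 0 ≤ |U i| - F := by linarith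
          gcongr
  have h3 : (|U i| - F) ^ 2 ≤ (F * Real.sqrt n) ^ 2 := by
    rw [mul_pow, Real.sq_sqrt (by linarith)]
    rwa [mul_one_div, div_le_iff₀ (by linarith)] at h2
  have h4 : |U i| - F ≤ F * Real.sqrt n := by
    exact (pow_le_pow_iff_left₀ (by linarith) (by positivity) two_ne_zero).1 h3
  nlinarith

lemma sum_Ico_blocks (h : ℕ → ℝ) (b : ℕ → ℕ) :
    ∀ N : ℕ, (∀ j < N, b j ≤ b (j + 1)) →
      ∑ i ∈ Finset.Ico (b 0) (b N), h i =
        ∑ j ∈ Finset.range N, ∑ i ∈ Finset.Ico (b j) (b (j + 1)), h i ∧ b 0 ≤ b N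
  | 0, _ => by simp
  | N + 1, hb => by
    obtain ⟨h1, h2⟩ := sum_Ico_blocks h b N fun j hj => hb j (by omega)
    have h3 := hb N (by omega)
    rw [Finset.sum_range_succ, ← h1, Finset.sum_Ico_consecutive h h2 h3]
    exact ⟨rfl, h2.trans h3⟩

lemma integral_centered_sq (a b : ℝ) :
    ∫ x in a..b, (x - (a + b) / 2) ^ 2 = (b - a) ^ 3 / 12 := by
  have h : ∀ x ∈ uIcc a b, HasDerivAt (fun x => (x - (a + b) / 2) ^ 3 / 3)
      ((x - (a + b) / 2) ^ 2) x := by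
    intro x _
    have := (((hasDerivAt_id x).sub_const ((a + b) / 2)).pow 3).div_const 3
    refine this.congr_deriv ?_
    simp only [id]
    push_cast
    ring
  rw [intervalIntegral.integral_eq_sub_of_hasDerivAt h
    (Continuous.intervalIntegrable (by fun_prop) _ _)]
  ring

/-- Energy bound in a window of `N` blocks of `m` cells, by comparison with the function that
takes on each block the value of `f` at the midpoint of the block. -/
lemma window_upper {n : ℕ} {β : ℝ} (hβ : 0 < β) {f : ℝ → ℝ}
    (hf : ContinuousOn f (Icc 0 1)) {F : ℝ} (hF : ∀ x ∈ Icc (0 : ℝ) 1, |f x| ≤ F) {U : ℕ → ℝ}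
    (hU : ∀ V, discE n β f U ≤ discE n β f V) {N m p q : ℕ} (hN : 1 ≤ N) (hm : 1 ≤ m)
    (hp : 1 ≤ p) (hq : q < n) (hpq : q = p + N * m) {κ Jc Bc : ℝ}
    (hκ : ∀ x ∈ Icc ((p : ℝ) / n) ((q : ℝ) / n), ∀ y ∈ Icc ((p : ℝ) / n) ((q : ℝ) / n),
      |f x - f y| ≤ κ * |x - y|)
    (hJ : ∀ s, |s| ≤ κ * (m / n) → cellE n s ≤ Jc)
    (hB : ∀ s, |s| ≤ 3 * F * Real.sqrt n → cellE n s ≤ Bc) :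
    ∑ i ∈ Finset.Ico p (q - 1), cellE n (U (i + 1) - U i) +
        β * ∑ i ∈ Finset.Ico p q, cellF n f i (U i) ≤
      N * Jc + 2 * Bc + β * (N * (κ ^ 2 * ((m / n) ^ 3 / 12))) := by
  have hn : 1 ≤ n := by omega
  have hn' : (1 : ℝ) ≤ n := by exact_mod_cast hn
  have hn0 : (0 : ℝ) < n := by linarith
  have hF0 : 0 ≤ F := (abs_nonneg _).trans (hF 0 (by simp))
  have hNm : 1 ≤ N * m := Nat.one_le_iff_ne_zero.2 (by positivity)
  have hpq' : p < q := by omega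
  have hs1 : 1 ≤ Real.sqrt n := Real.one_le_sqrt.2 hn'
  -- midpoint of the block with index `j`
  set mid : ℕ → ℝ := fun j => ((p : ℝ) + j * m + m / 2) / n with hmid
  set c : ℕ → ℝ := fun i => f (mid ((i - p) / m)) with hc
  have hmid_mem : ∀ j < N, mid j ∈ Icc ((p : ℝ) / n) ((q : ℝ) / n) := by
    intro j hj
    have hj' : (j : ℝ) + 1 ≤ N := by exact_mod_cast hj
    have hmr : (0 : ℝ) ≤ m := by positivity
    constructor
    · have : (0 : ℝ) ≤ j * m := by positivity
      exact div_le_div_of_nonneg_right (by linarith) hn0.le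
    · simp only [hmid, hpq]; push_cast
      exact div_le_div_of_nonneg_right (by nlinarith) hn0.le
  have hwin : Icc ((p : ℝ) / n) ((q : ℝ) / n) ⊆ Icc 0 1 := by
    intro x hx
    refine ⟨le_trans (by positivity) hx.1, hx.2.trans ?_⟩
    rw [div_le_one hn0]; exact_mod_cast hq.le
  have hblk : ∀ i, p ≤ i → i < q → (i - p) / m < N := by
    intro i h1 h2
    rw [Nat.div_lt_iff_lt_mul hm]; omega
  have hcF : ∀ i, p ≤ i → i < q → |c i| ≤ F := fun i h1 h2 =>
    hF _ (hwin (hmid_mem _ (hblk i h1 h2)))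
  have hUF : ∀ i < n, |U i| ≤ 2 * F * Real.sqrt n := fun i hi => abs_le_of_min hn hβ hf hF hU hi
  have key := local_comparison hU hp hpq' hq c
  have b1 : cellE n (c p - U (p - 1)) ≤ Bc := by
    apply hB
    have h1 := hcF p le_rfl hpq'
    have h2 := hUF (p - 1) (by omega)
    have h3 := abs_sub (c p) (U (p - 1))
    nlinarith
  have b2 : cellE n (U q - c (q - 1)) ≤ Bc := by
    apply hB
    have h1 := hcF (q - 1) (by omega) (by omega)
    have h2 := hUF q hq
    have h3 := abs_sub (U q) (c (q - 1))
    nlinarith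
  set b : ℕ → ℕ := fun j => p + j * m with hb
  have hbmono : ∀ j < N, b j ≤ b (j + 1) := by
    intro j _; simp only [hb]; gcongr; omega
  have hb0 : b 0 = p := by simp [hb]
  have hbN : b N = q := by simp [hb, hpq]
  -- the value of `c` changes only when a multiple of `m` is crossed
  have b3 : ∑ i ∈ Finset.Ico p (q - 1), cellE n (c (i + 1) - c i) ≤ N * Jc := by
    have hJ0 : 0 ≤ Jc := by
      have hκ0 : 0 ≤ κ * (m / n) := by
        have := (abs_nonneg _).trans (hκ ((p : ℝ) / n) ⟨le_rfl, by gcongr⟩ ((q : ℝ) / n)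
          ⟨by gcongr, le_rfl⟩)
        have hlt : (p : ℝ) / n < (q : ℝ) / n := by gcongr
        have h3 : 0 < |(p : ℝ) / n - q / n| := abs_pos.2 (by linarith)
        have : 0 ≤ κ := nonneg_of_mul_nonneg_left this h3
        positivity
      exact (cellE_nonneg n 0).trans (hJ 0 (by simpa using hκ0))
    set h : ℕ → ℝ := fun i => if m ∣ (i + 1 - p) then Jc else 0 with hh
    have hle : ∑ i ∈ Finset.Ico p (q - 1), cellE n (c (i + 1) - c i) ≤
        ∑ i ∈ Finset.Ico p q, h i := by
      calc _ ≤ ∑ i ∈ Finset.Ico p (q - 1), h i := by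
            refine Finset.sum_le_sum fun i hi => ?_
            rw [Finset.mem_Ico] at hi
            simp only [hh, hc]
            have e : i + 1 - p = (i - p) + 1 := by omega
            rw [e, Nat.succ_div]
            by_cases hd : m ∣ (i - p) + 1
            · rw [if_pos hd, if_pos hd]
              apply hJ
              have h1 := hblk i (by omega) (by omega)
              have h2 := hblk (i + 1) (by omega) (by omega)
              rw [e, Nat.succ_div, if_pos hd] at h2
              refine (hκ _ (hmid_mem _ h2) _ (hmid_mem _ h1)).trans (le_of_eq ?_)
              congr 1
              simp only [hmid]
              push_cast
              rw [← sub_div]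
              have : (p : ℝ) + ((((i - p) / m : ℕ) : ℝ) + 1) * m + m / 2 -
                (p + (((i - p) / m : ℕ) : ℝ) * m + m / 2) = m := by ring
              rw [this, abs_of_nonneg (by positivity)]
            · rw [if_neg hd, if_neg hd, add_zero, sub_self, cellE_zero]
        _ ≤ _ := by
            refine Finset.sum_le_sum_of_subset_of_nonneg ?_ ?_
            · intro i hi; rw [Finset.mem_Ico] at hi ⊢; omega
            · intro i _ _; simp only [hh]; split_ifs <;> [exact hJ0; exact le_rfl]
    refine hle.trans ?_
    have h1 := (sum_Ico_blocks h b N hbmono).1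
    rw [hb0, hbN] at h1
    rw [h1]
    have h2 : ∀ j ∈ Finset.range N, ∑ i ∈ Finset.Ico (b j) (b (j + 1)), h i ≤ Jc := by
      intro j _
      have e : b (j + 1) = (p + j * m + (m - 1)) + 1 := by
        simp only [hb, Nat.succ_mul]; omega
      rw [Finset.sum_eq_single_of_mem (p + j * m + (m - 1))]
      · simp only [hh]; split_ifs <;> [exact le_rfl; exact hJ0]
      · rw [e, Finset.mem_Ico]; simp only [hb]; omega
      · intro i hi hne
        rw [e, Finset.mem_Ico] at hi
        simp only [hb] at hi
        simp only [hh]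
        rw [if_neg]
        intro hd
        obtain ⟨r, hr⟩ : ∃ r, i = p + j * m + r := ⟨i - (p + j * m), by omega⟩
        have h3 : i + 1 - p = r + 1 + m * j := by rw [hr, mul_comm m j]; omega
        rw [h3, Nat.dvd_add_left (Nat.dvd_mul_right m j)] at hd
        have := Nat.le_of_dvd (by omega) hd
        omega
    calc _ ≤ ∑ j ∈ Finset.range N, Jc := Finset.sum_le_sum h2
      _ = _ := by simp
  have b4 : ∑ i ∈ Finset.Ico p q, cellF n f i (c i) ≤ N * (κ ^ 2 * ((m / n) ^ 3 / 12)) := by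
    have h1 := (sum_Ico_blocks (fun i => cellF n f i (c i)) b N hbmono).1
    rw [hb0, hbN] at h1
    rw [h1]
    have h2 : ∀ j ∈ Finset.range N, ∑ i ∈ Finset.Ico (b j) (b (j + 1)), cellF n f i (c i) ≤
        κ ^ 2 * ((m / n) ^ 3 / 12) := by
      intro j hj
      have hj := Finset.mem_range.1 hj
      have hbq : b (j + 1) ≤ q := by
        simp only [hb, hpq]; gcongr; omega
      have e1 : ∑ i ∈ Finset.Ico (b j) (b (j + 1)), cellF n f i (c i) =
          ∑ i ∈ Finset.Ico (b j) (b (j + 1)), cellF n f i (f (mid j)) := by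
        refine Finset.sum_congr rfl fun i hi => ?_
        rw [Finset.mem_Ico] at hi
        simp only [hb] at hi
        simp only [hc]
        rw [show (i - p) / m = j from ?_]
        apply Nat.div_eq_of_lt_le
        · omega
        · omega
      rw [e1, sum_cellF_const (hbmono j hj) (hbq.trans hq.le) hf]
      have hab : ((b j : ℕ) : ℝ) / n ≤ ((b (j + 1) : ℕ) : ℝ) / n := by
        have := hbmono j hj
        gcongr
      have hsub : Icc (((b j : ℕ) : ℝ) / n) (((b (j + 1) : ℕ) : ℝ) / n) ⊆
          Icc ((p : ℝ) / n) ((q : ℝ) / n) := by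
        apply Icc_subset_Icc
        · gcongr; simp only [hb]; omega
        · gcongr
      have hm2 : mid j = (((b j : ℕ) : ℝ) / n + ((b (j + 1) : ℕ) : ℝ) / n) / 2 := by
        simp only [hmid, hb]; push_cast; field_simp; ring
      calc _ ≤ ∫ x in ((b j : ℕ) : ℝ) / n..((b (j + 1) : ℕ) : ℝ) / n, κ ^ 2 *
            (x - (((b j : ℕ) : ℝ) / n + ((b (j + 1) : ℕ) : ℝ) / n) / 2) ^ 2 := by
            refine intervalIntegral.integral_mono_on hab ?_ ?_ ?_
            · apply ContinuousOn.intervalIntegrable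
              rw [uIcc_of_le hab]
              exact ContinuousOn.pow (continuousOn_const.sub
                (hf.mono (hsub.trans hwin))) 2
            · exact Continuous.intervalIntegrable (by fun_prop) _ _
            · intro x hx
              rw [← hm2, ← mul_pow, ← sq_abs (f (mid j) - f x), ← sq_abs (κ * (x - mid j))]
              have h1 := hκ _ (hmid_mem j hj) x (hsub hx)
              rw [abs_sub_comm (mid j) x] at h1
              have h2 : κ * |x - mid j| ≤ |κ * (x - mid j)| := by
                rw [abs_mul]; gcongr; exact le_abs_self κ
              have := h1.trans h2
              gcongr
        _ = _ := by
            rw [intervalIntegral.integral_const_mul, integral_centered_sq]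
            congr 2
            simp only [hb]; push_cast; ring
    calc _ ≤ ∑ j ∈ Finset.range N, κ ^ 2 * (((m : ℝ) / n) ^ 3 / 12) := Finset.sum_le_sum h2
      _ = _ := by simp
  have b5 := mul_le_mul_of_nonneg_left b4 hβ.le
  linarith


lemma affine_near {f f' : ℝ → ℝ} (hder : ∀ x ∈ Icc (0 : ℝ) 1, HasDerivAt f (f' x) x)
    (hcont : ContinuousOn f' (Icc (0 : ℝ) 1)) {xinf : ℝ} (hxinf : xinf ∈ Ioo (0 : ℝ) 1)
    {s : ℝ} (hs : 0 < s) :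
    ∃ r > 0, ∀ x y, |x - xinf| < r → |y - xinf| < r →
      |f x - f y - f' xinf * (x - y)| ≤ s * |x - y| := by
  have hc : ContinuousAt f' xinf := hcont.continuousAt (Icc_mem_nhds hxinf.1 hxinf.2)
  have h1 := Metric.continuousAt_iff.1 hc s hs
  obtain ⟨r1, hr1, h1⟩ := h1
  obtain ⟨r2, hr2, h2⟩ := Metric.isOpen_iff.1 isOpen_Ioo xinf hxinf
  refine ⟨min r1 r2, lt_min hr1 hr2, fun x y hx hy => ?_⟩
  have hd : ∀ z ∈ Metric.ball xinf (min r1 r2), HasDerivWithinAt (fun z => f z - f' xinf * z)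
      (f' z - f' xinf) (Metric.ball xinf (min r1 r2)) z := by
    intro z hz
    have hz2 := h2 (Metric.ball_subset_ball (min_le_right _ _) hz)
    have := (hder z ⟨hz2.1.le, hz2.2.le⟩).sub ((hasDerivAt_id z).const_mul (f' xinf))
    rw [mul_one] at this
    exact this.hasDerivWithinAt
  have hb : ∀ z ∈ Metric.ball xinf (min r1 r2), ‖f' z - f' xinf‖ ≤ s := by
    intro z hz
    rw [← dist_eq_norm]
    exact (h1 (Metric.ball_subset_ball (min_le_left _ _) hz)).le
  have := (convex_ball xinf (min r1 r2)).norm_image_sub_le_of_norm_hasDerivWithin_le hd hb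
    (x := y) (y := x) (by simpa [Real.dist_eq] using hy) (by simpa [Real.dist_eq] using hx)
  rw [Real.norm_eq_abs, Real.norm_eq_abs] at this
  convert this using 2
  ring

/-- Eventual properties of the window of `N` blocks of `⌊A n ω⌋` cells that ends at `k n`. -/
lemma window_eventually {f f' : ℝ → ℝ} (hder : ∀ x ∈ Icc (0 : ℝ) 1, HasDerivAt f (f' x) x)
    (hcont : ContinuousOn f' (Icc (0 : ℝ) 1)) {xinf : ℝ} (hxinf : xinf ∈ Ioo (0 : ℝ) 1)
    {k : ℕ → ℕ} (hk : ∀ n, 2 ≤ n → k n < n)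
    (hx : Tendsto (fun n => (k n : ℝ) / (n : ℝ)) atTop (nhds xinf))
    {A : ℝ} (hA : 0 < A) (N : ℕ) {s : ℝ} (hs : 0 < s) :
    ∀ᶠ n : ℕ in atTop, ∀ m : ℕ, m = ⌊A * (n * omg n)⌋₊ → 2 ≤ n ∧ 1 ≤ m ∧ N * m + 1 ≤ k n ∧
      k n < n ∧ (m : ℝ) / n ≤ A * omg n ∧ A * omg n - 1 / n ≤ (m : ℝ) / n ∧
      ∀ x ∈ Icc (((k n - N * m : ℕ) : ℝ) / n) ((k n : ℝ) / n),
      ∀ y ∈ Icc (((k n - N * m : ℕ) : ℝ) / n) ((k n : ℝ) / n),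
        |f x - f y - f' xinf * (x - y)| ≤ s * |x - y| := by
  obtain ⟨r, hr, hraff⟩ := affine_near hder hcont hxinf hs
  set r' := min r (xinf) with hr'
  have hr'0 : 0 < r' := lt_min hr hxinf.1
  have h1 : ∀ᶠ n : ℕ in atTop, |(k n : ℝ) / n - xinf| < r' / 2 := by
    have := hx.eventually (Metric.ball_mem_nhds xinf (half_pos hr'0))
    simpa [Real.dist_eq] using this
  have h2 : ∀ᶠ n : ℕ in atTop, N * A * omg n < r' / 2 := by
    have : Tendsto (fun n => N * A * omg n) atTop (nhds 0) := by
      simpa using omg_tendsto.const_mul (N * A)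
    exact this.eventually (gt_mem_nhds (half_pos hr'0))
  have h3 : ∀ᶠ n : ℕ in atTop, 1 / A ≤ n * omg n :=
    nat_mul_omg_tendsto.eventually (eventually_ge_atTop _)
  filter_upwards [h1, h2, h3, eventually_ge_atTop 2] with n h1 h2 h3 hn m hm
  have hn0 : (0 : ℝ) < n := by exact_mod_cast (by omega : 0 < n)
  have hw := omg_pos hn
  have hpos : 0 ≤ A * (n * omg n) := by positivity
  have m1 : (m : ℝ) ≤ A * (n * omg n) := by rw [hm]; exact Nat.floor_le hpos
  have m2 : A * (n * omg n) < m + 1 := by rw [hm]; exact Nat.lt_floor_add_one _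
  have m3 : (m : ℝ) / n ≤ A * omg n := by
    rw [div_le_iff₀ hn0]; linarith
  have h1' := abs_lt.1 h1
  have hNm : (N : ℝ) * (m / n) < r' / 2 := by
    have : (N : ℝ) * (m / n) ≤ N * (A * omg n) := by gcongr
    linarith
  have hk1 : N * m < k n := by
    have : ((N * m : ℕ) : ℝ) / n < (k n : ℝ) / n := by
      push_cast
      rw [mul_div_assoc]
      have : r' ≤ xinf := min_le_right _ _
      linarith
    rw [div_lt_div_iff_of_pos_right hn0] at this
    exact_mod_cast this
  have hsub : ∀ x ∈ Icc (((k n - N * m : ℕ) : ℝ) / n) ((k n : ℝ) / n), |x - xinf| < r := by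
    intro x hx
    have e : ((k n - N * m : ℕ) : ℝ) / n = (k n : ℝ) / n - N * (m / n) := by
      rw [Nat.cast_sub hk1.le]; push_cast; ring
    rw [e] at hx
    have : r' ≤ r := min_le_left _ _
    rw [abs_lt]
    exact ⟨by linarith [hx.1], by linarith [hx.2]⟩
  refine ⟨hn, ?_, hk1, hk n hn, m3, ?_, fun x hx y hy => hraff x y (hsub x hx) (hsub y hy)⟩
  · rw [hm]
    apply Nat.le_floor
    rw [div_le_iff₀ hA] at h3
    push_cast
    linarith
  · rw [le_div_iff₀ hn0, sub_mul, one_div, inv_mul_cancel₀ hn0.ne']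
    linarith

/-- Asymptotic form of the energy bound in a window. -/
lemma window_energy {β : ℝ} (hβ : 0 < β) {f f' : ℝ → ℝ}
    (hder : ∀ x ∈ Icc (0 : ℝ) 1, HasDerivAt f (f' x) x)
    (hcont : ContinuousOn f' (Icc (0 : ℝ) 1)) {U : ℕ → ℕ → ℝ}
    (hU : ∀ n, 2 ≤ n → ∀ V, discE n β f (U n) ≤ discE n β f V)
    {xinf : ℝ} (hxinf : xinf ∈ Ioo (0 : ℝ) 1)
    {k : ℕ → ℕ} (hk : ∀ n, 2 ≤ n → k n < n)
    (hx : Tendsto (fun n => (k n : ℝ) / (n : ℝ)) atTop (nhds xinf))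
    {A : ℝ} (hA : 0 < A) {N : ℕ} (hN : 1 ≤ N) :
    ∀ᶠ n : ℕ in atTop, ∀ m : ℕ, m = ⌊A * (n * omg n)⌋₊ →
      ∑ i ∈ Finset.Ico (k n - N * m) (k n - 1), cellE n (U n (i + 1) - U n i) +
        β * ∑ i ∈ Finset.Ico (k n - N * m) (k n), cellF n f i (U n i) ≤
      (N * (4 / 3 + β * f' xinf ^ 2 * A ^ 3 / 12) + 9) * omg n ^ 3 := by
  have hf : ContinuousOn f (Icc 0 1) := fun x hx => (hder x hx).continuousAt.continuousWithinAt
  obtain ⟨F, hF⟩ := isCompact_Icc.exists_bound_of_continuousOn hf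
  simp only [Real.norm_eq_abs] at hF
  set M := f' xinf
  have hNr : (1 : ℝ) ≤ N := by exact_mod_cast hN
  -- a Lipschitz constant `|M| + s` so close to `|M|` that it changes the bound by at most `1/2`
  obtain ⟨s, hs, hs2⟩ : ∃ s > 0, N * (β * (|M| + s) ^ 2 * A ^ 3 / 12) <
      N * (β * M ^ 2 * A ^ 3 / 12) + 1 / 2 := by
    have hc : Continuous fun s : ℝ => N * (β * (|M| + s) ^ 2 * A ^ 3 / 12) := by fun_prop
    have h0 : N * (β * (|M| + 0) ^ 2 * A ^ 3 / 12) < N * (β * M ^ 2 * A ^ 3 / 12) + 1 / 2 := by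
      rw [add_zero, sq_abs]; linarith
    have := hc.continuousAt.eventually (gt_mem_nhds h0)
    have h2 : ∀ᶠ s : ℝ in nhdsWithin 0 (Ioi 0), N * (β * (|M| + s) ^ 2 * A ^ 3 / 12) <
      N * (β * M ^ 2 * A ^ 3 / 12) + 1 / 2 := this.filter_mono nhdsWithin_le_nhds
    obtain ⟨s, h3, h4⟩ := (h2.and self_mem_nhdsWithin).exists
    exact ⟨s, h4, h3⟩
  have ht : (0 : ℝ) < 1 / (2 * N) := by positivity
  filter_upwards [window_eventually hder hcont hxinf hk hx hA N hs,
    cellE_le_of_height ((|M| + s) * A) ht, cellE_le_of_sqrt (3 * F)] with n h1 h2 h3 m hm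
  obtain ⟨hn, hm1, hkm, hkn, hmA, -, haff⟩ := h1 m hm
  have hw := omg_pos hn
  have hn0 : (0 : ℝ) < n := by exact_mod_cast (by omega : 0 < n)
  have key := window_upper hβ hf hF (hU n hn) hN hm1 (p := k n - N * m) (q := k n) (by omega) hkn
    (by omega) (κ := |M| + s) (Jc := (4 / 3 + 1 / (2 * N)) * omg n ^ 3) (Bc := 4 * omg n ^ 3)
    (fun x hx y hy => by
      have h4 := haff x hx y hy
      have h5 : |f x - f y| ≤ |f x - f y - M * (x - y)| + |M * (x - y)| := by
        have := abs_add_le (f x - f y - M * (x - y)) (M * (x - y))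
        simpa using this
      rw [abs_mul] at h5
      linarith)
    (fun s' hs' => h2 s' (hs'.trans (by rw [mul_assoc]; gcongr)))
    (fun s' hs' => h3 s' hs')
  refine key.trans ?_
  have h5 : ((m : ℝ) / n) ^ 3 ≤ (A * omg n) ^ 3 := by gcongr
  have h6 : β * (N * ((|M| + s) ^ 2 * ((m / n) ^ 3 / 12))) ≤
      β * (N * ((|M| + s) ^ 2 * ((A * omg n) ^ 3 / 12))) := by gcongr
  have h7 : β * (N * ((|M| + s) ^ 2 * ((A * omg n) ^ 3 / 12))) =
      N * (β * (|M| + s) ^ 2 * A ^ 3 / 12) * omg n ^ 3 := by ring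
  have h8 := mul_le_mul_of_nonneg_right hs2.le (pow_pos hw 3).le
  have h9 : (N : ℝ) * ((4 / 3 + 1 / (2 * N)) * omg n ^ 3) = (N * (4 / 3) + 1 / 2) * omg n ^ 3 := by
    field_simp
  rw [h9]
  linarith


/-! ### Cutting a window at the large jumps -/

/-- The sequence `b 0 = p < b 1 < … < b J = q` cuts the integers `p, …, q - 1` exactly at the
interior points where `P` holds. -/
structure Breaks (P : ℕ → Prop) (p q J : ℕ) (b : ℕ → ℕ) : Prop where
  zero : b 0 = p
  last : b J = q
  lt : ∀ j < J, b j < b (j + 1)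
  inner : ∀ j < J, ∀ i, b j < i → i < b (j + 1) → ¬ P i
  brk : ∀ j, 0 < j → j < J → P (b j)

lemma exists_breaks (P : ℕ → Prop) {p q : ℕ} (hpq : p < q) :
    ∃ J b, 1 ≤ J ∧ Breaks P p q J b := by
  induction q, hpq using Nat.le_induction with
  | base =>
    refine ⟨1, fun j => p + j, le_rfl, ⟨rfl, rfl, fun j _ => by simp, ?_, ?_⟩⟩
    · intro j hj i h1 h2; omega
    · intro j hj i; omega
  | succ q hq ih =>
    obtain ⟨J, b, hJ, hb⟩ := ih
    by_cases hP : P q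
    · refine ⟨J + 1, fun j => if j ≤ J then b j else q + 1, by omega, ⟨?_, ?_, ?_, ?_, ?_⟩⟩
      · simp [hb.zero]
      · simp
      · intro j hj
        rcases Nat.lt_or_ge j J with h | h
        · simp only [h.le, if_true, Nat.succ_le_of_lt h]
          exact hb.lt j h
        · obtain rfl : j = J := by omega
          simp [hb.last]
      · intro j hj i h1 h2
        rcases Nat.lt_or_ge j J with h | h
        · simp only [h.le, if_true, Nat.succ_le_of_lt h] at h1 h2
          exact hb.inner j h i h1 h2
        · obtain rfl : j = J := by omega
          simp [hb.last] at h1 h2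
          omega
      · intro j h0 hj
        have hj' : j ≤ J := by omega
        simp only [hj', if_true]
        rcases Nat.lt_or_ge j J with h | h
        · exact hb.brk j h0 h
        · obtain rfl : j = J := by omega
          rwa [hb.last]
    · refine ⟨J, fun j => if j < J then b j else q + 1, hJ, ⟨?_, ?_, ?_, ?_, ?_⟩⟩
      · simp [hb.zero]; omega
      · simp
      · intro j hj
        have h1 := hb.lt j hj
        by_cases h : j + 1 < J
        · simpa only [hj, h, if_true] using h1
        · obtain rfl : j + 1 = J := by omega
          rw [hb.last] at h1
          simp; omega
      · intro j hj i h1 h2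
        by_cases h : j + 1 < J
        · simp only [hj, h, if_true] at h1 h2
          exact hb.inner j hj i h1 h2
        · obtain rfl : j + 1 = J := by omega
          simp at h1 h2
          rcases Nat.lt_or_ge i q with h3 | h3
          · exact hb.inner j hj i h1 (by rwa [hb.last])
          · obtain rfl : i = q := by omega
            exact hP
      · intro j h0 hj
        simp only [hj, if_true]
        exact hb.brk j h0 hj

lemma Breaks.le {P : ℕ → Prop} {p q J : ℕ} {b : ℕ → ℕ} (hb : Breaks P p q J b) {i j : ℕ}
    (hij : i ≤ j) (hj : j ≤ J) : b i ≤ b j := by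
  induction j, hij using Nat.le_induction with
  | base => exact le_rfl
  | succ j hij ih => exact (ih (by omega)).trans (hb.lt j (by omega)).le

/-- Every point strictly between two break points at which `P` holds is a break point. -/
lemma Breaks.mem_of_lt {P : ℕ → Prop} {p q J : ℕ} {b : ℕ → ℕ} (hb : Breaks P p q J b)
    {j₁ j₂ i : ℕ} (hj : j₁ ≤ j₂) (hj₂ : j₂ ≤ J) (h1 : b j₁ < i) (h2 : i < b j₂) (hP : P i) :
    ∃ j, j₁ < j ∧ j < j₂ ∧ i = b j := by
  induction j₂, hj using Nat.le_induction with
  | base => omega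
  | succ j hj ih =>
    rcases lt_trichotomy i (b j) with h | h | h
    · obtain ⟨l, h3, h4, h5⟩ := ih (by omega) h
      exact ⟨l, h3, by omega, h5⟩
    · refine ⟨j, ?_, by omega, h⟩
      rcases hj.lt_or_eq with h3 | rfl
      · exact h3
      · omega
    · exact absurd hP (hb.inner j (by omega) i h h2)

/-! ### Lower bound for the energy of a window -/

/-- On a stretch of cells where `U` is almost the constant `c` and `f` is almost affine, the
fidelity is almost that of a constant against an affine function. -/
lemma piece_lower {n : ℕ} (hn : 1 ≤ n) {f : ℝ → ℝ} (hf : ContinuousOn f (Icc 0 1)) {a b : ℕ}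
    (hab : a ≤ b) (hb : b ≤ n) {U : ℕ → ℝ} {c M x₀ ω t : ℝ} (ht : 0 < t)
    (hU : ∀ i ∈ Finset.Ico a b, |U i - c| ≤ t * ω / 2)
    (haff : ∀ x ∈ Icc ((a : ℝ) / n) ((b : ℝ) / n), |f x - f x₀ - M * (x - x₀)| ≤ t * ω / 2) :
    (1 - t) * (M ^ 2 * (((b : ℝ) - a) / n) ^ 3 / 12 +
        ((b : ℝ) - a) / n * (c - f x₀ - M * (((a : ℝ) + b) / (2 * n) - x₀)) ^ 2) -
      t * ω ^ 2 * (((b : ℝ) - a) / n) ≤ ∑ i ∈ Finset.Ico a b, cellF n f i (U i) := by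
  have hn' : (0 : ℝ) < n := by exact_mod_cast hn
  set g : ℝ → ℝ := fun x => f x₀ + M * (x - x₀) with hg
  have hgc : Continuous g := by fun_prop
  have hcell : ∀ i ∈ Finset.Ico a b,
      (1 - t) * cellF n g i c - t * ω ^ 2 * (1 / n) ≤ cellF n f i (U i) := by
    intro i hi
    have hi' := Finset.mem_Ico.1 hi
    have h1 : (1 - t) * cellF n g i c - t * ω ^ 2 * (1 / n) =
        ∫ x in ((i : ℕ) : ℝ) / n..((i + 1 : ℕ) : ℝ) / n, ((1 - t) * (c - g x) ^ 2 - t * ω ^ 2) := by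
      rw [intervalIntegral.integral_sub, intervalIntegral.integral_const_mul,
        intervalIntegral.integral_const, smul_eq_mul]
      · unfold cellF
        push_cast
        ring
      · apply Continuous.intervalIntegrable; fun_prop
      · exact intervalIntegrable_const
    rw [h1]
    unfold cellF
    apply intervalIntegral.integral_mono_on (cell_le n i)
    · apply Continuous.intervalIntegrable; fun_prop
    · exact cellF_intervalIntegrable (by omega) hf _
    · intro x hx
      have hx' : x ∈ Icc ((a : ℝ) / n) ((b : ℝ) / n) := by
        constructor
        · refine le_trans ?_ hx.1
          gcongr; exact hi'.1
        · refine hx.2.trans ?_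
          gcongr; exact hi'.2
      have e1 := hU i hi
      have e2 := haff x hx'
      set e := (U i - c) - (f x - f x₀ - M * (x - x₀)) with he
      have e3 : |e| ≤ t * ω := by
        refine (abs_sub _ _).trans ?_
        linarith
      have e4 : U i - f x = (c - g x) + e := by simp only [hg, he]; ring
      rw [e4]
      have e5 : e ^ 2 ≤ (t * ω) ^ 2 := sq_le_sq' (by linarith [(abs_le.1 e3).1]) (abs_le.1 e3).2
      have e6 : 0 ≤ (t * (c - g x) + e) ^ 2 := sq_nonneg _
      have e7 : t * ((1 - t) * (c - g x) ^ 2 - t * ω ^ 2) ≤ t * ((c - g x + e) ^ 2) := by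
        nlinarith [mul_nonneg ht.le (sq_nonneg e)]
      exact le_of_mul_le_mul_left e7 ht
  refine le_trans (le_of_eq ?_) (Finset.sum_le_sum hcell)
  rw [Finset.sum_sub_distrib, ← Finset.mul_sum, sum_cellF_const hab hb hgc.continuousOn,
    Finset.sum_const, Nat.card_Ico, nsmul_eq_mul, Nat.cast_sub hab]
  have hintegral : ∫ x in ((a : ℝ) / n)..((b : ℝ) / n), (c - g x) ^ 2 =
      M ^ 2 * (((b : ℝ) - a) / n) ^ 3 / 12 +
        ((b : ℝ) - a) / n * (c - f x₀ - M * (((a : ℝ) + b) / (2 * n) - x₀)) ^ 2 := by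
    set y₀ := (c - f x₀) + M * x₀ with hy
    have : ∀ x ∈ uIcc ((a : ℝ) / n) ((b : ℝ) / n),
        HasDerivAt (fun x => y₀ ^ 2 * x - y₀ * M * x ^ 2 + M ^ 2 * x ^ 3 / 3)
          ((c - g x) ^ 2) x := by
      intro x _
      have h1 := (((hasDerivAt_id x).const_mul (y₀ ^ 2)).sub
        (((hasDerivAt_id x).pow 2).const_mul (y₀ * M))).add
        ((((hasDerivAt_id x).pow 3).const_mul (M ^ 2)).div_const 3)
      refine HasDerivAt.congr_deriv h1 ?_
      simp only [hg, hy, id]; push_cast; ring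
    rw [intervalIntegral.integral_eq_sub_of_hasDerivAt this
      (by apply Continuous.intervalIntegrable; fun_prop)]
    field_simp
    ring
  rw [hintegral]
  ring

/-- A transition from cell `i - 1` to cell `i` counts as large when its slope exceeds `thr n t`. -/
def Big (n : ℕ) (t : ℝ) (U : ℕ → ℝ) (i : ℕ) : Prop := thr n t < n * |U i - U (i - 1)|

open Classical in
/-- Total variation carried by the small transitions inside the window `p, …, q - 1`. -/
noncomputable def smallVar (n : ℕ) (t : ℝ) (U : ℕ → ℝ) (p q : ℕ) : ℝ :=
  ∑ i ∈ (Finset.Ico p (q - 1)).filter (fun i => ¬ Big n t U (i + 1)), |U (i + 1) - U i|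

lemma abs_sub_le_sum (U : ℕ → ℝ) {a b : ℕ} (hab : a ≤ b) :
    |U b - U a| ≤ ∑ i ∈ Finset.Ico a b, |U (i + 1) - U i| := by
  rw [← Finset.sum_Ico_sub U hab]
  exact Finset.abs_sum_le_sum_abs _ _

lemma Breaks.abs_sub_le_smallVar {n : ℕ} {t : ℝ} {U : ℕ → ℝ} {p q J : ℕ} {b : ℕ → ℕ}
    (hb : Breaks (Big n t U) p q J b) {j i : ℕ} (hj : j < J) (h1 : b j ≤ i) (h2 : i < b (j + 1)) :
    |U i - U (b j)| ≤ smallVar n t U p q := by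
  classical
  refine (abs_sub_le_sum U h1).trans ?_
  unfold smallVar
  apply Finset.sum_le_sum_of_subset_of_nonneg
  · intro l hl
    have hl := Finset.mem_Ico.1 hl
    have h3 := hb.le (Nat.zero_le j) hj.le
    have h4 := hb.le (Nat.succ_le_of_lt hj) le_rfl
    rw [hb.zero] at h3
    rw [hb.last] at h4
    simp only [Nat.succ_eq_add_one] at h4
    exact Finset.mem_filter.2 ⟨Finset.mem_Ico.2 ⟨by omega, by omega⟩,
      hb.inner j hj _ (by omega) (by omega)⟩
  · intro _ _ _; exact abs_nonneg _

/-- The energy of a window is almost at least the sum over its pieces of the cost of a jump plus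
the fidelity of the piece; the last summand has no jump at its end, whence the loss `4/3 ω³`. -/
lemma window_lower {n : ℕ} (hn : 2 ≤ n) {β : ℝ} (hβ : 0 < β) {f : ℝ → ℝ}
    (hf : ContinuousOn f (Icc 0 1)) {U : ℕ → ℝ} {p q J : ℕ} {b : ℕ → ℕ} {t M : ℝ}
    (ht : 0 < t) (hq : q ≤ n) (hJ : 1 ≤ J) (hb : Breaks (Big n t U) p q J b)
    (hsmall : smallVar n t U p q ≤ t * omg n / 2)
    (haff : ∀ x ∈ Icc ((p : ℝ) / n) ((q : ℝ) / n),
      |f x - f ((p : ℝ) / n) - M * (x - (p : ℝ) / n)| ≤ t * omg n / 2) :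
    (1 - t) * (∑ j ∈ Finset.range J, (4 / 3 * omg n ^ 3 +
        β * (M ^ 2 * (((b (j + 1) : ℝ) - b j) / n) ^ 3 / 12 + ((b (j + 1) : ℝ) - b j) / n *
          (U (b j) - f ((p : ℝ) / n) -
            M * (((b j : ℝ) + b (j + 1)) / (2 * n) - (p : ℝ) / n)) ^ 2))) -
      4 / 3 * omg n ^ 3 - t * β * omg n ^ 2 * (((q : ℝ) - p) / n) ≤
    ∑ i ∈ Finset.Ico p (q - 1), cellE n (U (i + 1) - U i) +
      β * ∑ i ∈ Finset.Ico p q, cellF n f i (U i) := by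
  have hω := omg_pos hn
  have hmono : ∀ j < J, b j ≤ b (j + 1) := fun j hj => (hb.lt j hj).le
  have hpb : ∀ j ≤ J, p ≤ b j := fun j hj => by
    have := hb.le (Nat.zero_le j) hj; rwa [hb.zero] at this
  have hbq : ∀ j ≤ J, b j ≤ q := fun j hj => by
    have := hb.le hj le_rfl; rwa [hb.last] at this
  -- fidelity
  have hF : ∑ j ∈ Finset.range J, ((1 - t) *
      (M ^ 2 * (((b (j + 1) : ℝ) - b j) / n) ^ 3 / 12 + ((b (j + 1) : ℝ) - b j) / n *
          (U (b j) - f ((p : ℝ) / n) -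
            M * (((b j : ℝ) + b (j + 1)) / (2 * n) - (p : ℝ) / n)) ^ 2) -
        t * omg n ^ 2 * (((b (j + 1) : ℝ) - b j) / n)) ≤
      ∑ i ∈ Finset.Ico p q, cellF n f i (U i) := by
    have h1 := (sum_Ico_blocks (fun i => cellF n f i (U i)) b J hmono).1
    rw [hb.zero, hb.last] at h1
    rw [h1]
    refine Finset.sum_le_sum fun j hj => ?_
    have hj := Finset.mem_range.1 hj
    refine piece_lower (by omega) hf (hmono j hj) ((hbq _ hj).trans hq) ht ?_ ?_
    · intro i hi
      have hi := Finset.mem_Ico.1 hi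
      exact (hb.abs_sub_le_smallVar hj hi.1 hi.2).trans hsmall
    · intro x hx
      apply haff
      constructor
      · refine le_trans ?_ hx.1
        gcongr; exact hpb j hj.le
      · refine hx.2.trans ?_
        gcongr; exact hbq _ hj
  -- jumps
  have hE : (J - 1 : ℝ) * ((1 - t) * (4 / 3) * omg n ^ 3) ≤
      ∑ i ∈ Finset.Ico p (q - 1), cellE n (U (i + 1) - U i) := by
    set h : ℕ → ℝ := fun i => if i = p then 0 else cellE n (U i - U (i - 1)) with hh
    have hh0 : ∀ i, 0 ≤ h i := fun i => by
      simp only [hh]; split_ifs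
      · exact le_rfl
      · exact cellE_nonneg _ _
    have hpq : p < q := by
      have := hb.lt 0 hJ
      have h2 := hbq 1 hJ
      rw [hb.zero] at this; simp at this; omega
    have h1 := (sum_Ico_blocks h b J hmono).1
    rw [hb.zero, hb.last] at h1
    have h2 : ∑ i ∈ Finset.Ico p (q - 1), cellE n (U (i + 1) - U i) = ∑ i ∈ Finset.Ico p q, h i := by
      rw [Finset.sum_eq_sum_Ico_succ_bot hpq]
      have : q = (q - 1) + 1 := by omega
      rw [show Finset.Ico (p + 1) q = Finset.Ico (p + 1) ((q - 1) + 1) by rw [← this],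
        ← Finset.sum_Ico_add' h p (q - 1) 1]
      simp only [hh, if_true, zero_add]
      refine Finset.sum_congr rfl fun i hi => ?_
      have hi := Finset.mem_Ico.1 hi
      rw [if_neg (by omega)]
      simp
    rw [h2, h1]
    have h3 : ∀ j ∈ Finset.range J, (if j = 0 then 0 else (1 - t) * (4 / 3) * omg n ^ 3) ≤
        ∑ i ∈ Finset.Ico (b j) (b (j + 1)), h i := by
      intro j hj
      have hj := Finset.mem_range.1 hj
      split_ifs with h0
      · exact Finset.sum_nonneg fun i _ => hh0 i
      · refine le_trans ?_ (Finset.single_le_sum (fun i _ => hh0 i)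
          (Finset.mem_Ico.2 ⟨le_rfl, hb.lt j hj⟩))
        have hne : b j ≠ p := by
          have h4 := hb.lt 0 hJ
          have h5 := hb.le (show 1 ≤ j by omega) hj.le
          rw [hb.zero] at h4; simp at h4; omega
        simp only [hh, if_neg hne]
        exact cellE_ge_of_big hn (hb.brk j (by omega) hj)
    refine le_trans (le_of_eq ?_) (Finset.sum_le_sum h3)
    obtain ⟨J', rfl⟩ : ∃ J', J = J' + 1 := ⟨J - 1, by omega⟩
    rw [Finset.sum_range_succ']
    simp
  have hL : ∑ j ∈ Finset.range J, ((b (j + 1) : ℝ) - b j) / n = ((q : ℝ) - p) / n := by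
    rw [← Finset.sum_div, Finset.sum_range_sub (fun j => (b j : ℝ)), hb.zero, hb.last]
  rw [Finset.sum_sub_distrib, ← Finset.mul_sum, ← Finset.mul_sum, hL] at hF
  rw [Finset.sum_add_distrib, Finset.sum_const, Finset.card_range, nsmul_eq_mul, ← Finset.mul_sum]
  have h5 := mul_le_mul_of_nonneg_left hF hβ.le
  have h6 : 0 ≤ t * (4 / 3 * omg n ^ 3) := by positivity
  nlinarith

/-! ### Runs of almost optimal pieces -/

/-- A sum of many nonnegative terms with a bounded total contains long runs of small terms. -/
lemma exists_run {x : ℕ → ℝ} {J K Q : ℕ} {C ε : ℝ} (hx : ∀ j < J, 0 ≤ x j)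
    (hsum : ∑ j ∈ Finset.range J, x j ≤ C) (hJ : Q * K ≤ J) (hQ : C < Q * ε) :
    ∃ j₁, j₁ + K ≤ J ∧ ∀ j, j₁ ≤ j → j < j₁ + K → x j ≤ ε := by
  by_contra! hcon
  have h1 := (sum_Ico_blocks x (fun l => l * K) Q (fun j _ => by gcongr; omega)).1
  have h2 : ∀ l ∈ Finset.range Q, ε ≤ ∑ i ∈ Finset.Ico (l * K) ((l + 1) * K), x i := by
    intro l hl
    have hl := Finset.mem_range.1 hl
    have hle : (l + 1) * K ≤ Q * K := by gcongr; omega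
    have hlK : (l + 1) * K = l * K + K := by ring
    obtain ⟨j, hj1, hj2, hj3⟩ := hcon (l * K) (by omega)
    refine hj3.le.trans ?_
    refine Finset.single_le_sum (f := x) (fun i hi => hx i ?_) (Finset.mem_Ico.2 ⟨hj1, by omega⟩)
    have := (Finset.mem_Ico.1 hi).2
    omega
  have h3 := Finset.sum_le_sum h2
  rw [← h1, Finset.sum_const, Finset.card_range, nsmul_eq_mul, zero_mul, ← Finset.range_eq_Ico] at h3
  have h4 : ∑ j ∈ Finset.range (Q * K), x j ≤ ∑ j ∈ Finset.range J, x j :=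
    Finset.sum_le_sum_of_subset_of_nonneg (Finset.range_subset_range.2 hJ)
      fun i hi _ => hx i (Finset.mem_range.1 hi)
  linarith

/-- The excess of a piece of length `2 H λ ω` and offset `d ω` over the optimal density is
`2/3 (λ - 1)² (λ + 2) + 2 H β λ d²`; if it is small, then `λ` is close to `1` and `d` to `0`. -/
lemma piece_of_small_excess {lam d H β ε η : ℝ} (hlam : 0 < lam) (hH : 0 < H) (hβ : 0 < β)
    (hη : 0 < η) (hε1 : ε ≤ 1 / 4) (hε2 : ε * (4 * H ^ 2) ≤ η ^ 2) (hε3 : ε ≤ η ^ 2 * (H * β))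
    (h1 : 2 / 3 * (lam - 1) ^ 2 * (lam + 2) + 2 * H * β * lam * d ^ 2 ≤ ε) :
    |2 * H * (lam - 1)| ≤ η ∧ |d| ≤ η := by
  have h3 : 0 ≤ 2 * H * β * lam * d ^ 2 := by positivity
  have h4 : 0 ≤ 2 / 3 * (lam - 1) ^ 2 * (lam + 2) := by positivity
  have h5 : (lam - 1) ^ 2 ≤ ε := by nlinarith [mul_nonneg (sq_nonneg (lam - 1)) hlam.le]
  have h6 : 1 / 2 ≤ lam := by
    have : |lam - 1| ≤ 1 / 2 := abs_le_of_sq_le_sq (by linarith) (by norm_num)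
    linarith [(abs_le.1 this).1]
  constructor
  · apply abs_le_of_sq_le_sq _ hη.le
    have := mul_le_mul_of_nonneg_right h5 (by positivity : 0 ≤ 4 * H ^ 2)
    linarith
  · apply abs_le_of_sq_le_sq _ hη.le
    have h8 : H * β * d ^ 2 ≤ 2 * H * β * lam * d ^ 2 := by
      have : 0 ≤ H * β * d ^ 2 := by positivity
      nlinarith
    have h9 : (H * β) * d ^ 2 ≤ (H * β) * η ^ 2 := by linarith
    exact le_of_mul_le_mul_left h9 (by positivity)

/-- Lower bound for the excess, which forbids long pieces and hence forces many pieces. -/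
lemma sub_two_le_excess {lam : ℝ} (hlam : 0 < lam) :
    lam - 2 ≤ 4 / 3 + 2 / 3 * lam ^ 3 - 2 * lam := by
  nlinarith [mul_nonneg (add_nonneg hlam.le (by norm_num : (0 : ℝ) ≤ 5 / 2))
    (sq_nonneg (lam - 5 / 4))]

set_option maxHeartbeats 1000000 in
/-- Around a point where `M = f' xinf ≠ 0` the minimizers contain, just to the left of `k n / n`,
arbitrarily long runs of consecutive pieces with length almost `2 H ω` and whose value is almost
that of `f` at the midpoint. -/
lemma good_pieces {β : ℝ} (hβ : 0 < β) {f f' : ℝ → ℝ}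
    (hder : ∀ x ∈ Icc (0 : ℝ) 1, HasDerivAt f (f' x) x)
    (hcont : ContinuousOn f' (Icc (0 : ℝ) 1)) {U : ℕ → ℕ → ℝ}
    (hU : ∀ n, 2 ≤ n → ∀ V, discE n β f (U n) ≤ discE n β f V)
    {xinf : ℝ} (hxinf : xinf ∈ Ioo (0 : ℝ) 1)
    {k : ℕ → ℕ} (hk : ∀ n, 2 ≤ n → k n < n)
    (hx : Tendsto (fun n => (k n : ℝ) / (n : ℝ)) atTop (nhds xinf))
    {M H : ℝ} (hM : f' xinf = M) (hH : 0 < H) (hMH : β * M ^ 2 * H ^ 3 = 1) (K : ℕ)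
    {η : ℝ} (hη : 0 < η) :
    ∀ᶠ n : ℕ in atTop, ∃ (p J j₁ : ℕ) (b : ℕ → ℕ) (t : ℝ), 2 ≤ n ∧ 1 ≤ p ∧ k n < n ∧
      Breaks (Big n t (U n)) p (k n) J b ∧ j₁ + K ≤ J ∧
      smallVar n t (U n) p (k n) ≤ η * omg n ∧
      (∀ x ∈ Icc ((p : ℝ) / n) ((k n : ℝ) / n), ∀ y ∈ Icc ((p : ℝ) / n) ((k n : ℝ) / n),
        |f x - f y - M * (x - y)| ≤ η * omg n) ∧
      ∀ j, j₁ ≤ j → j < j₁ + K → |((b (j + 1) : ℝ) - b j) / n - 2 * H * omg n| ≤ η * omg n ∧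
        |U n (b j) - f ((p : ℝ) / n) -
            M * (((b j : ℝ) + b (j + 1)) / (2 * n) - (p : ℝ) / n)| ≤ η * omg n := by
  classical
  have hf : ContinuousOn f (Icc 0 1) := fun x hx => (hder x hx).continuousAt.continuousWithinAt
  set ε := min (1 / 4) (min (η ^ 2 / (4 * H ^ 2)) (η ^ 2 * (H * β))) with hε
  have hε0 : 0 < ε := by positivity
  have hε1 : ε ≤ 1 / 4 := min_le_left _ _
  have hε2 : ε * (4 * H ^ 2) ≤ η ^ 2 := by
    rw [← le_div_iff₀ (by positivity)]
    exact (min_le_right _ _).trans (min_le_left _ _)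
  have hε3 : ε ≤ η ^ 2 * (H * β) := (min_le_right _ _).trans (min_le_right _ _)
  obtain ⟨Q, hQ⟩ := exists_nat_gt (14 / ε)
  rw [div_lt_iff₀ hε0] at hQ
  set N : ℕ := 2 * (Q * K) + 16 with hN
  have hN1 : 1 ≤ N := by omega
  have hNpos : (0 : ℝ) < N := by exact_mod_cast hN1
  have hNr : (N : ℝ) = 2 * (Q * K : ℕ) + 16 := by rw [hN]; push_cast; ring
  set t := min (1 / 2) (min (2 * η) (1 / (2 * H * N * β + 2 * N + 13))) with ht
  have ht0 : 0 < t := by positivity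
  have ht1 : t ≤ 1 / 2 := min_le_left _ _
  have ht2 : t ≤ 2 * η := (min_le_right _ _).trans (min_le_left _ _)
  have ht3 : t * (2 * H * N * β + 2 * N + 13) ≤ 1 := by
    rw [← le_div_iff₀ (by positivity)]
    exact (min_le_right _ _).trans (min_le_right _ _)
  have hA : 0 < 2 * H := by positivity
  have hwin := window_eventually hder hcont hxinf hk hx hA N (s := t / (4 * H * N)) (by positivity)
  have hen := window_energy hβ hder hcont hU hxinf hk hx hA hN1
  have hsv := small_variation (2 * H * N) (2 * N + 9) (by positivity) (by positivity) ht0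
    (s := t / 2) (by positivity)
  filter_upwards [hwin, hen, hsv, nat_mul_omg_tendsto.eventually_ge_atTop (N / H)]
    with n hwin hen hsv hlarge
  obtain ⟨hn, hm1, hpk, hkn, hmle, hmge, haff⟩ := hwin _ rfl
  have hen := hen _ rfl
  set m := ⌊2 * H * (n * omg n)⌋₊ with hm
  have hn' : (0 : ℝ) < n := by positivity
  have hω := omg_pos hn
  set ω := omg n with hωdef
  set p := k n - N * m with hp
  have hpr : (k n : ℝ) - p = N * m := by
    rw [hp, Nat.cast_sub (by omega)]; push_cast; ring
  have hNm : 1 ≤ N * m := Nat.mul_pos hN1 hm1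
  have hpq : p < k n := by omega
  have hE : N * (4 / 3 + β * f' xinf ^ 2 * (2 * H) ^ 3 / 12) + 9 = 2 * (N : ℝ) + 9 := by
    rw [hM]
    have : β * M ^ 2 * (2 * H) ^ 3 = 8 := by linear_combination 8 * hMH
    rw [this]; ring
  rw [hE] at hen
  -- total variation of the small transitions
  have hsmall : smallVar n t (U n) p (k n) ≤ t * ω / 2 := by
    have := hsv ((Finset.Ico p (k n - 1)).filter fun i => ¬ Big n t (U n) (i + 1))
      (fun i => U n (i + 1) - U n i) ?_ ?_ ?_
    · unfold smallVar
      convert this using 1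
      ring
    · have h1 : (((Finset.Ico p (k n - 1)).filter fun i => ¬ Big n t (U n) (i + 1)).card : ℝ) ≤
          N * m := by
        have : ((Finset.Ico p (k n - 1)).filter fun i => ¬ Big n t (U n) (i + 1)).card ≤ N * m := by
          refine (Finset.card_filter_le _ _).trans ?_
          rw [Nat.card_Ico]; omega
        exact_mod_cast this
      refine h1.trans ?_
      have h2 : (m : ℝ) ≤ 2 * H * (n * ω) := Nat.floor_le (by positivity)
      linarith [mul_le_mul_of_nonneg_left h2 hNpos.le]
    · intro i hi
      have := (Finset.mem_filter.1 hi).2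
      unfold Big at this
      simpa using this
    · refine le_trans (Finset.sum_le_sum_of_subset_of_nonneg (Finset.filter_subset _ _)
        fun _ _ _ => cellE_nonneg _ _) ?_
      refine le_trans ?_ hen
      have : 0 ≤ β * ∑ i ∈ Finset.Ico p (k n), cellF n f i (U n i) :=
        mul_nonneg hβ.le (Finset.sum_nonneg fun _ _ => cellF_nonneg _ _ _ _)
      linarith
  have hlen : ((k n : ℝ) - p) / n ≤ 2 * H * N * ω := by
    rw [hpr, mul_div_assoc]
    linarith [mul_le_mul_of_nonneg_left hmle hNpos.le]
  have haff' : ∀ x ∈ Icc ((p : ℝ) / n) ((k n : ℝ) / n), ∀ y ∈ Icc ((p : ℝ) / n) ((k n : ℝ) / n),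
        |f x - f y - M * (x - y)| ≤ t * ω / 2 := by
    intro x hx y hy
    have h1 := haff x hx y hy
    rw [hM] at h1
    refine h1.trans ?_
    have h2 : |x - y| ≤ 2 * H * N * ω := by
      refine le_trans ?_ hlen
      rw [sub_div, abs_le]
      constructor <;> linarith [hx.1, hx.2, hy.1, hy.2]
    calc t / (4 * H * N) * |x - y| ≤ t / (4 * H * N) * (2 * H * N * ω) := by gcongr
      _ = t * ω / 2 := by field_simp; ring
  obtain ⟨J, b, hJ, hb⟩ := exists_breaks (Big n t (U n)) hpq
  have hpmem : (p : ℝ) / n ∈ Icc ((p : ℝ) / n) ((k n : ℝ) / n) :=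
    ⟨le_rfl, by gcongr⟩
  have hlow := (window_lower hn hβ hf ht0 hkn.le hJ hb hsmall
    (fun x hx => haff' x hx _ hpmem)).trans hen
  -- the rescaled lengths and displacements of the pieces
  set lam : ℕ → ℝ := fun j => ((b (j + 1) : ℝ) - b j) / n / (2 * H * ω) with hlam
  set d : ℕ → ℝ := fun j => (U n (b j) - f ((p : ℝ) / n) -
            M * (((b j : ℝ) + b (j + 1)) / (2 * n) - (p : ℝ) / n)) / ω with hd
  have hlam0 : ∀ j < J, 0 < lam j := by
    intro j hj
    have : (b j : ℝ) < b (j + 1) := by exact_mod_cast hb.lt j hj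
    have : 0 < (b (j + 1) : ℝ) - b j := by linarith
    simp only [hlam]; positivity
  have hterm : ∀ j ∈ Finset.range J, 4 / 3 * ω ^ 3 +
        β * (M ^ 2 * (((b (j + 1) : ℝ) - b j) / n) ^ 3 / 12 + ((b (j + 1) : ℝ) - b j) / n *
          (U n (b j) - f ((p : ℝ) / n) -
            M * (((b j : ℝ) + b (j + 1)) / (2 * n) - (p : ℝ) / n)) ^ 2) =
      ω ^ 3 * (4 / 3 + 2 / 3 * lam j ^ 3 + 2 * H * β * lam j * d j ^ 2) := by
    intro j _
    have h1 : ((b (j + 1) : ℝ) - b j) / n = 2 * H * ω * lam j := by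
      simp only [hlam]; field_simp
    have h2 : U n (b j) - f ((p : ℝ) / n) -
            M * (((b j : ℝ) + b (j + 1)) / (2 * n) - (p : ℝ) / n) = ω * d j := by
      simp only [hd]; field_simp
    rw [h1, h2]
    linear_combination 2 / 3 * ω ^ 3 * lam j ^ 3 * hMH
  rw [Finset.sum_congr rfl hterm, ← Finset.mul_sum, ← hωdef] at hlow
  set Te := ∑ j ∈ Finset.range J, (4 / 3 + 2 / 3 * lam j ^ 3 + 2 * H * β * lam j * d j ^ 2) with hTe
  have hT : (1 - t) * Te ≤ 2 * N + 9 + 4 / 3 + t * β * (2 * H * N) := by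
    have h1 : t * β * ω ^ 2 * (((k n : ℝ) - p) / n) ≤ t * β * ω ^ 2 * (2 * H * N * ω) := by gcongr
    have h2 : ω ^ 3 * ((1 - t) * Te) ≤ ω ^ 3 * (2 * N + 9 + 4 / 3 + t * β * (2 * H * N)) := by
      linarith
    exact le_of_mul_le_mul_left h2 (by positivity)
  have hT' : Te ≤ 2 * N + 13 := by
    have h1 : (1 - t) * Te ≤ (1 - t) * (2 * N + 13) := by linarith
    exact le_of_mul_le_mul_left h1 (by linarith)
  have hlamsum : N - 1 / 2 ≤ ∑ j ∈ Finset.range J, lam j := by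
    have h1 : ∑ j ∈ Finset.range J, lam j = N * (m / n) / (2 * H * ω) := by
      simp only [hlam]
      rw [← Finset.sum_div, ← Finset.sum_div, Finset.sum_range_sub (fun j => (b j : ℝ)), hb.zero,
        hb.last, hpr, mul_div_assoc]
    rw [h1, le_div_iff₀ (by positivity)]
    have h2 : (N : ℝ) ≤ H * (n * ω) := by
      rw [div_le_iff₀ hH] at hlarge; linarith
    have h3 : (N : ℝ) * (1 / n) ≤ H * ω := by
      rw [mul_one_div, div_le_iff₀ hn']; linarith
    have h4 := mul_le_mul_of_nonneg_left hmge hNpos.le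
    linarith
  set exc : ℕ → ℝ := fun j =>
    4 / 3 + 2 / 3 * lam j ^ 3 + 2 * H * β * lam j * d j ^ 2 - 2 * lam j with hexc
  have hexc_eq : ∀ j, exc j = 2 / 3 * (lam j - 1) ^ 2 * (lam j + 2) + 2 * H * β * lam j * d j ^ 2 := by
    intro j; simp only [hexc]; ring
  have hexcsum : ∑ j ∈ Finset.range J, exc j ≤ 14 := by
    simp only [hexc]
    rw [Finset.sum_sub_distrib, ← Finset.mul_sum]
    linarith
  have hexc0 : ∀ j < J, 0 ≤ exc j := by
    intro j hj
    have := hlam0 j hj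
    rw [hexc_eq]; positivity
  have hJlarge : Q * K ≤ J := by
    have h1 : ∑ j ∈ Finset.range J, (lam j - 2) ≤ ∑ j ∈ Finset.range J, exc j := by
      refine Finset.sum_le_sum fun j hj => ?_
      have h2 := hlam0 j (Finset.mem_range.1 hj)
      have h3 : 0 ≤ 2 * H * β * lam j * d j ^ 2 := by positivity
      simp only [hexc]
      linarith [sub_two_le_excess h2]
    rw [Finset.sum_sub_distrib, Finset.sum_const, Finset.card_range, nsmul_eq_mul] at h1
    have h4 : ((Q * K : ℕ) : ℝ) ≤ J := by linarith
    exact_mod_cast h4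
  obtain ⟨j₁, hj₁, hrun⟩ := exists_run hexc0 hexcsum hJlarge hQ
  refine ⟨p, J, j₁, b, t, hn, by omega, hkn, hb, hj₁, ?_, ?_, ?_⟩
  · refine hsmall.trans ?_
    linarith [mul_le_mul_of_nonneg_right ht2 hω.le]
  · intro x hx y hy
    refine (haff' x hx y hy).trans ?_
    linarith [mul_le_mul_of_nonneg_right ht2 hω.le]
  · intro j hj1 hj2
    have h1 := hrun j hj1 hj2
    have h2 := hlam0 j (by omega)
    rw [hexc_eq] at h1
    obtain ⟨h6, h7⟩ := piece_of_small_excess h2 hH hβ hη hε1 hε2 hε3 h1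
    constructor
    · have h8 : ((b (j + 1) : ℝ) - b j) / n - 2 * H * ω = (2 * H * (lam j - 1)) * ω := by
        simp only [hlam]; field_simp
      rw [h8, abs_mul, abs_of_pos hω]
      exact mul_le_mul_of_nonneg_right h6 hω.le
    · have h8 : U n (b j) - f ((p : ℝ) / n) -
            M * (((b j : ℝ) + b (j + 1)) / (2 * n) - (p : ℝ) / n) = d j * ω := by
        simp only [hd]; field_simp
      rw [h8, abs_mul, abs_of_pos hω]
      exact mul_le_mul_of_nonneg_right h7 hω.le

/-! ### Closeness of a blow-up to its limit -/

/-- `v` is `ε`-close to `w` away from the exceptional set `B`, on the interval `[-1/ε, 1/ε]`, and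
up to `ε` its variation on subintervals is the difference of the values at the endpoints. -/
def CloseTo (B : Set ℝ) (w v : ℝ → ℝ) (ε : ℝ) : Prop :=
  (∀ y, |y| ≤ 1 / ε → (∀ z ∈ B, ε ≤ |y - z|) → |v y - w y| ≤ ε) ∧
  ∀ s t, -(1 / ε) ≤ s → s ≤ t → t ≤ 1 / ε →
    eVariationOn v (Icc s t) ≤ ENNReal.ofReal (|v t - v s| + ε)

/-- The variation of a function that runs monotonically through the cell values `U` is at most
the sum of the transitions it meets. -/
lemma eVariationOn_comp_nat_le {v : ℝ → ℝ} {U : ℕ → ℝ} {φ : ℝ → ℕ} {c ω s t : ℝ} (hω : 0 < ω)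
    (hst : s ≤ t) (hφ : Monotone φ) (hv : ∀ y ∈ Icc s t, v y = (U (φ y) - c) / ω) :
    eVariationOn v (Icc s t) ≤
      ENNReal.ofReal ((∑ i ∈ Finset.Ico (φ s) (φ t), |U (i + 1) - U i|) / ω) := by
  set G : ℝ → ℝ := fun y => (∑ i ∈ Finset.range (φ y), |U (i + 1) - U i|) / ω with hG
  have hGsub : ∀ x y, x ≤ y → G y - G x =
      (∑ i ∈ Finset.Ico (φ x) (φ y), |U (i + 1) - U i|) / ω := by
    intro x y hxy
    simp only [hG]
    rw [← sub_div, Finset.sum_Ico_eq_sub _ (hφ hxy)]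
  have hGmono : Monotone G := by
    intro x y hxy
    have h1 := hGsub x y hxy
    have h2 : 0 ≤ (∑ i ∈ Finset.Ico (φ x) (φ y), |U (i + 1) - U i|) / ω :=
      div_nonneg (Finset.sum_nonneg fun _ _ => abs_nonneg _) hω.le
    linarith
  rw [← hGsub s t hst]
  have hle : eVariationOn v (Icc s t) ≤ eVariationOn G (Icc s t) := by
    unfold eVariationOn
    refine iSup_mono fun q => ?_
    refine Finset.sum_le_sum fun i _ => ?_
    have hm := q.2.2.1 (Nat.le_succ i)
    rw [edist_dist, edist_dist, Real.dist_eq, Real.dist_eq]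
    apply ENNReal.ofReal_le_ofReal
    rw [hv _ (q.2.2.2 _), hv _ (q.2.2.2 _), ← sub_div, sub_sub_sub_cancel_right, abs_div, abs_of_pos hω]
    refine le_trans ?_ (le_abs_self _)
    rw [Nat.succ_eq_add_one] at hm
    rw [hGsub _ _ hm]
    gcongr
    exact abs_sub_le_sum U (hφ hm)
  refine hle.trans ?_
  have := (hGmono.monotoneOn (Icc s t)).eVariationOn_eq (left_mem_Icc.2 hst) (right_mem_Icc.2 hst)
  rw [inter_self] at this
  exact this.le

/-- If all large transitions go in the same direction, the variation is almost the difference of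
the values at the endpoints. -/
lemma eVariationOn_le_of_sign {n : ℕ} {v : ℝ → ℝ} {U : ℕ → ℝ} {φ : ℝ → ℕ} {c ω s t r η σ : ℝ}
    {p q : ℕ} (hω : 0 < ω) (hst : s ≤ t) (hφ : Monotone φ)
    (hv : ∀ y ∈ Icc s t, v y = (U (φ y) - c) / ω) (hσ : |σ| = 1)
    (hp : p ≤ φ s) (hq : φ t + 1 ≤ q) (hsmall : smallVar n r U p q ≤ η * ω)
    (hsign : ∀ i, φ s ≤ i → i < φ t → Big n r U (i + 1) → 0 ≤ σ * (U (i + 1) - U i)) :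
    eVariationOn v (Icc s t) ≤ ENNReal.ofReal (|v t - v s| + 2 * η) := by
  classical
  refine (eVariationOn_comp_nat_le hω hst hφ hv).trans (ENNReal.ofReal_le_ofReal ?_)
  rw [div_le_iff₀ hω]
  have h1 : ∑ i ∈ Finset.Ico (φ s) (φ t), |U (i + 1) - U i| ≤
      ∑ i ∈ Finset.Ico (φ s) (φ t), (σ * (U (i + 1) - U i) +
        2 * if Big n r U (i + 1) then 0 else |U (i + 1) - U i|) := by
    refine Finset.sum_le_sum fun i hi => ?_
    have hi := Finset.mem_Ico.1 hi
    have habs : |σ * (U (i + 1) - U i)| = |U (i + 1) - U i| := by rw [abs_mul, hσ, one_mul]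
    split_ifs with hB
    · rw [← habs, abs_of_nonneg (hsign i hi.1 hi.2 hB)]; simp
    · have := neg_abs_le (σ * (U (i + 1) - U i))
      rw [habs] at this
      linarith
  have h2 : ∑ i ∈ Finset.Ico (φ s) (φ t), (if Big n r U (i + 1) then 0 else |U (i + 1) - U i|) ≤
      smallVar n r U p q := by
    unfold smallVar
    rw [Finset.sum_filter]
    refine le_trans (Finset.sum_le_sum_of_subset_of_nonneg
      (t := Finset.Ico p (q - 1)) ?_ ?_) (le_of_eq ?_)
    · intro i hi
      have hi := Finset.mem_Ico.1 hi
      exact Finset.mem_Ico.2 ⟨by omega, by omega⟩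
    · intro i _ _
      split_ifs
      · exact le_rfl
      · exact abs_nonneg _
    · refine Finset.sum_congr rfl fun i _ => ?_
      by_cases hB : Big n r U (i + 1) <;> simp [hB]
  rw [Finset.sum_add_distrib, ← Finset.mul_sum, ← Finset.mul_sum,
    Finset.sum_Ico_sub U (hφ hst)] at h1
  have h3 : σ * (U (φ t) - U (φ s)) ≤ |v t - v s| * ω := by
    rw [hv t (right_mem_Icc.2 hst), hv s (left_mem_Icc.2 hst), ← sub_div, sub_sub_sub_cancel_right,
      abs_div, abs_of_pos hω, div_mul_cancel₀ _ hω.ne']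
    refine (le_abs_self _).trans ?_
    rw [abs_mul, hσ, one_mul]
  linarith

/-- The jump points of the oblique translation with parameter `τ`. -/
def stairBreaks (H τ : ℝ) : Set ℝ := Set.range fun k : ℤ => H * (τ + 2 * k - 1)

lemma stair_value {H V τ y : ℝ} {k : ℤ} (hH : 0 < H) (h1 : H * (τ + 2 * k - 1) ≤ y)
    (h2 : y < H * (τ + 2 * k + 1)) :
    canStair H V (y - H * τ) + V * τ = V * (τ + 2 * k) := by
  have h3 : ⌊((y - H * τ) / H + 1) / 2⌋ = k := by
    rw [Int.floor_eq_iff, le_div_iff₀ two_pos, div_lt_iff₀ two_pos, ← sub_le_iff_le_add,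
      ← lt_sub_iff_add_lt, le_div_iff₀ hH, div_lt_iff₀ hH]
    constructor <;> linarith
  unfold canStair stairS
  rw [h3]
  ring

lemma exists_stair_index {H : ℝ} (hH : 0 < H) (τ y : ℝ) :
    ∃ k : ℤ, H * (τ + 2 * k - 1) ≤ y ∧ y < H * (τ + 2 * k + 1) := by
  refine ⟨⌊((y - H * τ) / H + 1) / 2⌋, ?_⟩
  set k := ⌊((y - H * τ) / H + 1) / 2⌋ with hk
  have h := Int.floor_eq_iff.1 hk.symm
  rw [le_div_iff₀ two_pos, div_lt_iff₀ two_pos, ← sub_le_iff_le_add,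
      ← lt_sub_iff_add_lt, le_div_iff₀ hH, div_lt_iff₀ hH] at h
  constructor <;> linarith [h.1, h.2]

lemma pc_eq_natFloor {n : ℕ} (hn : 1 ≤ n) {u : ℝ → ℝ} (hu : IsPC (1 / (n : ℝ)) u) {x : ℝ}
    (hx : 0 ≤ x) : u x = u ((⌊(n : ℝ) * x⌋₊ : ℝ) / n) := by
  rw [pc_eq_floor hn hu x, ← natCast_floor_eq_intCast_floor (by positivity)]

lemma natFloor_blowup_monotone (n : ℕ) (x : ℝ) {ω : ℝ} (hω : 0 < ω) :
    Monotone fun y : ℝ => ⌊(n : ℝ) * (x + ω * y)⌋₊ := by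
  intro y z hyz
  apply Nat.floor_mono
  gcongr

/-- Consecutive break points with gaps almost `D` are almost equally spaced. -/
lemma telescope_near {g : ℕ → ℝ} {D e : ℝ} {L : ℕ} (h : ∀ l < L, |g (l + 1) - g l - D| ≤ e)
    {a b : ℕ} (hab : a ≤ b) (hb : b ≤ L) : |g b - g a - ((b : ℝ) - a) * D| ≤ ((b : ℝ) - a) * e := by
  induction b, hab using Nat.le_induction with
  | base => simp
  | succ b hab ih =>
    have h1 := abs_le.1 (ih (by omega))
    have h2 := abs_le.1 (h b (by omega))
    push_cast
    rw [abs_le]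
    constructor <;> linarith [h1.1, h1.2, h2.1, h2.2]

set_option maxHeartbeats 1000000 in
/-- A run of `2 K + 1` almost optimal pieces, blown up at the point at distance `H τ ω` to the left
of the midpoint of the central piece, is close to the oblique translation with parameter `τ`. -/
lemma close_of_pieces {n : ℕ} (hn : 2 ≤ n) {f u : ℝ → ℝ} (hu : IsPC (1 / (n : ℝ)) u)
    {p q J j₁ K : ℕ} {b : ℕ → ℕ} {t M H τ ε η : ℝ} (hH : 0 < H) (hη : 0 < η) (hε : 0 < ε)
    (hM : M ≠ 0) (hτ : τ ∈ Icc (-1 : ℝ) 1)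
    (hb : Breaks (Big n t fun i => u ((i : ℝ) / n)) p q J b) (hj₁ : j₁ + (2 * K + 1) ≤ J)
    (hsmall : smallVar n t (fun i => u ((i : ℝ) / n)) p q ≤ η * omg n)
    (haff : ∀ x ∈ Icc ((p : ℝ) / n) ((q : ℝ) / n), ∀ y ∈ Icc ((p : ℝ) / n) ((q : ℝ) / n),
        |f x - f y - M * (x - y)| ≤ η * omg n)
    (hgood : ∀ j, j₁ ≤ j → j < j₁ + (2 * K + 1) →
      |((b (j + 1) : ℝ) - b j) / n - 2 * H * omg n| ≤ η * omg n ∧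
        |u ((b j : ℝ) / n) - f ((p : ℝ) / n) -
            M * (((b j : ℝ) + b (j + 1)) / (2 * n) - (p : ℝ) / n)| ≤ η * omg n)
    (hK : 1 / ε + 2 * H < 2 * H * K)
    (hη1 : (3 + |M|) * ((K + 3) * η) ≤ ε / 2) (hη2 : (K + 3) * η ≤ H) (hη3 : 3 * η ≤ |M| * H) :
    ∃ x' ∈ Ico ((p : ℝ) / n) ((q : ℝ) / n),
      CloseTo (stairBreaks H τ) (fun y => canStair H (M * H) (y - H * τ) + (M * H) * τ)
        (fun y => (u (x' + omg n * y) - f x') / omg n) ε := by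
  have hω := omg_pos hn
  have hn' : (0 : ℝ) < n := by positivity
  set ω := omg n with hωdef
  set U : ℕ → ℝ := fun i => u ((i : ℝ) / n) with hUdef
  set e := (K + 2) * η with he
  have hK0 : (0 : ℝ) ≤ K := Nat.cast_nonneg K
  have he0 : 0 < e := by positivity
  have hε' : 0 < 1 / ε := by positivity
  have hKη : 0 ≤ K * η := by positivity
  have he3 : e + η = (K + 3) * η := by rw [he]; ring
  have heH : e < H := by linarith
  have h3M : (3 + |M|) * (e + η) ≤ ε / 2 := by rw [he3]; exact hη1
  have hMe : 0 ≤ |M| * e := by positivity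
  have hMη : 0 ≤ |M| * η := by positivity
  have heε : e < ε := by linarith
  have hpb : ∀ j ≤ J, p ≤ b j := fun j hj => by
    have := hb.le (Nat.zero_le j) hj; rwa [hb.zero] at this
  have hbq : ∀ j ≤ J, b j ≤ q := fun j hj => by
    have := hb.le hj le_rfl; rwa [hb.last] at this
  set x' : ℝ := ((b (j₁ + K) : ℝ) + b (j₁ + K + 1)) / (2 * n) - H * τ * ω with hx'
  set g : ℕ → ℝ := fun l => (b (j₁ + l) : ℝ) / n with hg
  have hgap : ∀ l < 2 * K + 1, |g (l + 1) - g l - 2 * H * ω| ≤ η * ω := by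
    intro l hl
    have := (hgood (j₁ + l) (by omega) (by omega)).1
    rw [sub_div] at this
    exact this
  have hgx : g K + g (K + 1) = 2 * (x' + H * τ * ω) := by
    simp only [hg, hx']
    field_simp
    ring_nf
  -- the break points are at distance at most `e ω` from those of the staircase
  have hpos : ∀ l ≤ 2 * K + 1, |g l - x' - H * (τ + 2 * ((l : ℝ) - K) - 1) * ω| ≤ e * ω := by
    intro l hl
    have h0 := abs_le.1 (hgap K (by omega))
    have hηω : 0 < η * ω := by positivity
    have hKηω : 0 ≤ K * (η * ω) := by positivity
    have heω : e * ω = K * (η * ω) + 2 * (η * ω) := by rw [he]; ring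
    rw [heω]
    rcases le_total l K with h | h
    · have h1 := abs_le.1 (telescope_near hgap h (by omega))
      have h2 : (l : ℝ) * (η * ω) ≥ 0 := by positivity
      rw [abs_le]
      constructor <;> linarith [h0.1, h0.2, h1.1, h1.2]
    · have h1 := abs_le.1 (telescope_near hgap h hl)
      have h2 : (l : ℝ) * (η * ω) ≤ (2 * K + 1) * (η * ω) := by
        gcongr; exact_mod_cast hl
      rw [abs_le]
      constructor <;> linarith [h0.1, h0.2, h1.1, h1.2]
  have hposl : ∀ l ≤ 2 * K + 1, g l ≤ x' + ω * (H * (τ + 2 * ((l : ℝ) - K) - 1) + e) := by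
    intro l hl; linarith [(abs_le.1 (hpos l hl)).2]
  have hposr : ∀ l ≤ 2 * K + 1, x' + ω * (H * (τ + 2 * ((l : ℝ) - K) - 1) - e) ≤ g l := by
    intro l hl; linarith [(abs_le.1 (hpos l hl)).1]
  have hHτ1 : H * τ ≤ H := by nlinarith [hτ.2]
  have hHτ2 : -H ≤ H * τ := by nlinarith [hτ.1]
  have hin : ∀ y, |y| ≤ 1 / ε → g 0 ≤ x' + ω * y ∧ x' + ω * y < g (2 * K + 1) := by
    intro y hy
    have hy := abs_le.1 hy
    constructor
    · refine (hposl 0 (by omega)).trans ?_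
      gcongr
      push_cast; linarith [hy.1]
    · refine lt_of_lt_of_le ?_ (hposr (2 * K + 1) le_rfl)
      gcongr
      push_cast; linarith [hy.2]
  have hg0 : (p : ℝ) / n ≤ g 0 := by
    simp only [hg]; gcongr; exact hpb _ (by omega)
  have hg1 : g (2 * K + 1) ≤ (q : ℝ) / n := by
    simp only [hg]; gcongr; exact hbq _ (by omega)
  have hg0' : 0 ≤ g 0 := by simp only [hg]; positivity
  have hx'in : x' ∈ Ico ((p : ℝ) / n) ((q : ℝ) / n) := by
    have := hin 0 (by simpa using hε'.le)
    simp only [mul_zero, add_zero] at this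
    exact ⟨hg0.trans this.1, this.2.trans_le hg1⟩
  set φ : ℝ → ℕ := fun y => ⌊(n : ℝ) * (x' + ω * y)⌋₊ with hφ
  have hφmono : Monotone φ := natFloor_blowup_monotone n x' hω
  have hval : ∀ y, |y| ≤ 1 / ε → (u (x' + ω * y) - f x') / ω = (U (φ y) - f x') / ω := by
    intro y hy
    rw [pc_eq_natFloor (by omega) hu (hg0'.trans (hin y hy).1)]
  have hφl : ∀ y l, g l ≤ x' + ω * y → b (j₁ + l) ≤ φ y := by
    intro y l hl
    apply Nat.le_floor
    simp only [hg] at hl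
    rw [div_le_iff₀ hn'] at hl; linarith
  have hφr : ∀ y l, 0 ≤ x' + ω * y → x' + ω * y < g l → φ y < b (j₁ + l) := by
    intro y l h0 hl
    simp only [hφ]
    rw [Nat.floor_lt (by positivity)]
    simp only [hg] at hl
    rw [lt_div_iff₀ hn'] at hl; linarith
  refine ⟨x', hx'in, ?_, ?_⟩
  · intro y hy hB
    obtain ⟨k, hk1, hk2⟩ := exists_stair_index hH τ y
    have hy' := abs_le.1 hy
    have hkK : (k : ℝ) < K + 1 := by
      have : (2 * H) * (k : ℝ) < (2 * H) * (K + 1) := by linarith [hy'.2]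
      exact lt_of_mul_lt_mul_left this (by positivity)
    have hkK' : -(K : ℝ) - 1 < (k : ℝ) := by
      have : (2 * H) * (-(K : ℝ) - 1) < (2 * H) * (k : ℝ) := by linarith [hy'.1]
      exact lt_of_mul_lt_mul_left this (by positivity)
    have hk3 : k < (K : ℤ) + 1 := by exact_mod_cast hkK
    have hk4 : -(K : ℤ) - 1 < k := by exact_mod_cast hkK'
    obtain ⟨l, hl⟩ : ∃ l : ℕ, (l : ℤ) = k + K := ⟨(k + K).toNat, by omega⟩
    have hl2 : l ≤ 2 * K := by omega
    have hlr : (l : ℝ) - K = k := by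
      have : (l : ℝ) = k + K := by exact_mod_cast hl
      linarith
    have hB1 := hB _ ⟨k, rfl⟩
    have hB2 := hB _ ⟨k + 1, rfl⟩
    beta_reduce at hB1 hB2
    rw [abs_of_nonneg (by linarith)] at hB1
    rw [abs_of_neg (by push_cast; linarith)] at hB2
    push_cast at hB2
    have hyl : g l ≤ x' + ω * y := by
      refine (hposl l (by omega)).trans ?_
      rw [hlr]
      gcongr
      linarith
    have hyr : x' + ω * y < g (l + 1) := by
      refine lt_of_lt_of_le ?_ (hposr (l + 1) (by omega))
      gcongr
      push_cast
      rw [show (l : ℝ) + 1 - K = k + 1 by linarith]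
      linarith
    have h0 : 0 ≤ x' + ω * y := hg0'.trans (hin y hy).1
    have hi1 := hφl y l hyl
    have hi2 := hφr y (l + 1) h0 hyr
    have e1 := abs_le.1 ((hb.abs_sub_le_smallVar (by omega) hi1 hi2).trans hsmall)
    have e2 := abs_le.1 (hgood (j₁ + l) (by omega) (by omega)).2
    have e3 := abs_le.1 (haff x' ⟨hx'in.1, hx'in.2.le⟩ ((p : ℝ) / n)
      ⟨le_rfl, hx'in.1.trans hx'in.2.le⟩)
    have e4 := hpos l (by omega)
    have e5 := hpos (l + 1) (by omega)
    beta_reduce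
    rw [hval y hy, stair_value hH hk1 hk2]
    have hmid : ((b (j₁ + l) : ℝ) + b (j₁ + l + 1)) / (2 * n) = (g l + g (l + 1)) / 2 := by
      simp only [hg]; field_simp; ring_nf
    set δ := (g l + g (l + 1)) / 2 - x' - H * (τ + 2 * k) * ω with hδ
    have hδe : |δ| ≤ e * ω := by
      push_cast at e5
      rw [show (l : ℝ) + 1 - K = k + 1 by linarith] at e5
      rw [hlr] at e4
      have e4 := abs_le.1 e4
      have e5 := abs_le.1 e5
      rw [abs_le]
      constructor <;> linarith [e4.1, e4.2, e5.1, e5.2]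
    have hMδ : |M * δ| ≤ |M| * (e * ω) := by rw [abs_mul]; gcongr
    have hMδ := abs_le.1 hMδ
    rw [hmid] at e2
    have hmain : |U (φ y) - f x' - M * H * (τ + 2 * k) * ω| ≤ (3 * η + |M| * e) * ω := by
      simp only [hUdef] at e1 e2 ⊢
      have : M * δ = M * ((g l + g (l + 1)) / 2 - (p : ℝ) / n) - M * (x' - (p : ℝ) / n)
        - M * H * (τ + 2 * k) * ω := by rw [hδ]; ring
      rw [abs_le]
      constructor <;> linarith [e1.1, e1.2, e2.1, e2.2, e3.1, e3.2, hMδ.1, hMδ.2]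
    have : (U (φ y) - f x') / ω - M * H * (τ + 2 * k) =
        (U (φ y) - f x' - M * H * (τ + 2 * k) * ω) / ω := by field_simp
    rw [this, abs_div, abs_of_pos hω, div_le_iff₀ hω]
    refine hmain.trans ?_
    gcongr
    linarith
  · intro s r hs hsr hr
    have hsub : ∀ y ∈ Icc s r, |y| ≤ 1 / ε := fun y hy =>
      abs_le.2 ⟨by linarith [hy.1], by linarith [hy.2]⟩
    have hs' := hsub s (left_mem_Icc.2 hsr)
    have hr' := hsub r (right_mem_Icc.2 hsr)
    have hφs : b j₁ ≤ φ s := hφl s 0 (hin s hs').1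
    have hφr' : φ r < b (j₁ + (2 * K + 1)) := hφr r _ (hg0'.trans (hin r hr').1) (hin r hr').2
    have hq : b (j₁ + (2 * K + 1)) ≤ q := hbq _ hj₁
    have hp : p ≤ b j₁ := hpb _ (by omega)
    obtain ⟨σ, hσ, hσM⟩ : ∃ σ : ℝ, |σ| = 1 ∧ σ * M = |M| := by
      rcases hM.lt_or_gt with h | h
      · exact ⟨-1, by simp, by rw [abs_of_neg h]; ring⟩
      · exact ⟨1, by simp, by rw [abs_of_pos h]; ring⟩
    refine (eVariationOn_le_of_sign (n := n) (r := t) (U := U) (φ := φ) (c := f x') (η := η) (σ := σ)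
      (p := p) (q := q) hω hsr hφmono (fun y hy => hval y (hsub y hy)) hσ (by omega) (by omega)
      hsmall ?_).trans (ENNReal.ofReal_le_ofReal (by linarith))
    intro i hi1 hi2 hBig
    obtain ⟨j, hj1, hj2, hij⟩ := hb.mem_of_lt (j₁ := j₁) (j₂ := j₁ + (2 * K + 1)) (i := i + 1)
      (by omega) hj₁ (by omega) (by omega) hBig
    obtain ⟨l, rfl⟩ : ∃ l, j = l + 1 := ⟨j - 1, by omega⟩
    have hlt := hb.lt l (by omega)
    have e1 := (hb.abs_sub_le_smallVar (j := l) (i := i) (by omega) (by omega) (by omega)).trans hsmall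
    obtain ⟨g1, d1⟩ := hgood l (by omega) (by omega)
    obtain ⟨g2, d2⟩ := hgood (l + 1) (by omega) (by omega)
    have hUi : U (i + 1) = u ((b (l + 1) : ℝ) / n) := by simp only [hUdef, hij]
    set D := ((b (l + 1) : ℝ) + b (l + 1 + 1)) / (2 * n) - ((b l : ℝ) + b (l + 1)) / (2 * n) with hD
    have hDeq : D = (((b (l + 1) : ℝ) - b l) / n + ((b (l + 1 + 1) : ℝ) - b (l + 1)) / n) / 2 := by
      rw [hD]; field_simp; ring
    have hDge : H * ω ≤ D := by
      have := (abs_le.1 g1).1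
      have := (abs_le.1 g2).1
      have h5 : η * ω ≤ H * ω := by gcongr; linarith
      rw [hDeq]; linarith
    have hdiff : |U (i + 1) - U i - M * D| ≤ 3 * η * ω := by
      have e1 := abs_le.1 e1
      have d1 := abs_le.1 d1
      have d2 := abs_le.1 d2
      rw [hUi, hD]
      simp only [hUdef] at e1 ⊢
      rw [abs_le]
      constructor <;> linarith [e1.1, e1.2, d1.1, d1.2, d2.1, d2.2]
    have h6 : |σ * (U (i + 1) - U i - M * D)| ≤ 3 * η * ω := by rwa [abs_mul, hσ, one_mul]
    have h7 : |M| * (H * ω) ≤ |M| * D := by gcongr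
    have h8 : 3 * η * ω ≤ |M| * H * ω := by gcongr
    have h9 : σ * (U (i + 1) - U i - M * D) = σ * (U (i + 1) - U i) - |M| * D := by
      rw [← hσM]; ring
    rw [h9] at h6
    linarith [(abs_le.1 h6).1]

/-! ### The flat case -/

set_option maxHeartbeats 1000000 in
/-- Where `f'` vanishes a long window has bounded energy, so it contains a long block of
negligible energy; on that block there is no large transition and the blow-up is almost zero. -/
lemma flat_close {β : ℝ} (hβ : 0 < β) {f f' : ℝ → ℝ}
    (hder : ∀ x ∈ Icc (0 : ℝ) 1, HasDerivAt f (f' x) x)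
    (hcont : ContinuousOn f' (Icc (0 : ℝ) 1)) {u : ℕ → ℝ → ℝ}
    (hu : ∀ n, 2 ≤ n → IsMinimizer n β f (u n))
    {xinf : ℝ} (hxinf : xinf ∈ Ioo (0 : ℝ) 1)
    {k : ℕ → ℕ} (hk : ∀ n, 2 ≤ n → k n < n)
    (hx : Tendsto (fun n => (k n : ℝ) / (n : ℝ)) atTop (nhds xinf))
    (hM : f' xinf = 0) {ε : ℝ} (hε : 0 < ε) :
    ∀ᶠ n : ℕ in atTop, ∃ x' ∈ Ioo (0 : ℝ) 1, x' ≤ (k n : ℝ) / n ∧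
      CloseTo ∅ (fun _ => 0) (fun y => (u n (x' + omg n * y) - f x') / omg n) ε := by
  classical
  have hf : ContinuousOn f (Icc 0 1) := fun x hx => (hder x hx).continuousAt.continuousWithinAt
  have hR : 0 < 1 / ε := by positivity
  set a := 2 * (1 / ε) + 4 with ha
  have ha0 : 0 < a := by positivity
  set t := min (1 / 2) (min (ε / 4) (ε ^ 2 / 64)) with ht
  have ht0 : 0 < t := by positivity
  have ht1 : t ≤ 1 / 2 := min_le_left _ _
  have ht2 : t ≤ ε / 4 := (min_le_right _ _).trans (min_le_left _ _)
  have ht3 : t ≤ ε ^ 2 / 64 := (min_le_right _ _).trans (min_le_right _ _)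
  set ε₀ := min (1 / 2) (β * (ε ^ 2 / 64)) with hε₀
  have hε₀0 : 0 < ε₀ := by positivity
  have hε₀1 : ε₀ ≤ 1 / 2 := min_le_left _ _
  have hε₀2 : ε₀ ≤ β * (ε ^ 2 / 64) := min_le_right _ _
  obtain ⟨Q, hQ⟩ := exists_nat_gt (11 / ε₀)
  rw [div_lt_iff₀ hε₀0] at hQ
  have hQ0 : (0 : ℝ) < Q := by
    by_contra! hcon
    linarith [mul_nonpos_of_nonpos_of_nonneg hcon hε₀0.le]
  set A := Q * a with hA
  have hA0 : 0 < A := by positivity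
  have hwin := window_eventually hder hcont hxinf hk hx hA0 1 (s := t / 2 / A) (by positivity)
  have hen := window_energy hβ hder hcont (U := fun n i => u n ((i : ℝ) / n))
    (fun n hn V => (hu n hn).discE_le (by omega) hf V) hxinf hk hx hA0 le_rfl
  have hsv := small_variation a 1 ha0 zero_le_one (t := 1 / 2) (by norm_num) (s := t / 2)
    (by positivity)
  filter_upwards [hwin, hen, hsv, nat_mul_omg_tendsto.eventually_ge_atTop 1] with n hwin hen hsv hlarge
  obtain ⟨hn, hm1, hpk, hkn, hmle, -, haff⟩ := hwin _ rfl
  have hen := hen _ rfl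
  set m := ⌊A * (n * omg n)⌋₊ with hm
  have hn' : (0 : ℝ) < n := by positivity
  have hω := omg_pos hn
  set ω := omg n with hωdef
  simp only [one_mul, Nat.cast_one, hM] at hpk haff hen
  set U : ℕ → ℝ := fun i => u n ((i : ℝ) / n) with hU
  set p := k n - m with hp
  set l := ⌊a * (n * ω)⌋₊ with hl
  have hla : (l : ℝ) ≤ a * (n * ω) := Nat.floor_le (by positivity)
  have hlb : a * (n * ω) - 1 < l := Nat.sub_one_lt_floor _
  have hQl : Q * l ≤ m := by
    apply Nat.le_floor
    push_cast
    rw [hA]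
    linarith [mul_le_mul_of_nonneg_left hla hQ0.le]
  have hnω : 1 / (n : ℝ) ≤ ω := by rw [div_le_iff₀ hn']; linarith
  have hln : 2 * (1 / ε) * ω + ω < l / n := by
    rw [lt_div_iff₀ hn']
    have : a * (n * ω) = (2 * (1 / ε) * ω + ω) * n + 3 * (n * ω) := by rw [ha]; ring
    linarith
  have hl1 : 1 ≤ l := by
    by_contra hcon
    have : l = 0 := by omega
    rw [this] at hln
    simp only [Nat.cast_zero, zero_div] at hln
    have : 0 < 2 * (1 / ε) * ω + ω := by positivity
    linarith
  -- distribution of the energy over the blocks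
  set h : ℕ → ℝ := fun i =>
    (if i < k n - 1 then cellE n (U (i + 1) - U i) else 0) + β * cellF n f i (U i) with hh
  have hh0 : ∀ i, 0 ≤ h i := fun i => by
    have := mul_nonneg hβ.le (cellF_nonneg n f i (U i))
    simp only [hh]; split_ifs
    · linarith [cellE_nonneg n (U (i + 1) - U i)]
    · linarith
  have hhsum : ∑ i ∈ Finset.Ico p (k n), h i ≤ 11 * ω ^ 3 := by
    have h1 : ∑ i ∈ Finset.Ico p (k n), h i =
        ∑ i ∈ Finset.Ico p (k n - 1), cellE n (U (i + 1) - U i) +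
        β * ∑ i ∈ Finset.Ico p (k n), cellF n f i (U i) := by
      simp only [hh]
      rw [Finset.sum_add_distrib, ← Finset.mul_sum, ← Finset.sum_filter]
      congr 2
      ext i
      simp only [Finset.mem_filter, Finset.mem_Ico]
      omega
    rw [h1]
    refine hen.trans ?_
    have : 0 < ω ^ 3 := by positivity
    exact mul_le_mul_of_nonneg_right (by norm_num) this.le
  have hblocks := sum_Ico_blocks h (fun j => p + j * l) Q (fun j _ => by gcongr; omega)
  obtain ⟨j, hj, hrun⟩ := exists_run (J := Q) (K := 1) (Q := Q) (C := 11 * ω ^ 3) (ε := ε₀ * ω ^ 3)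
    (x := fun j => ∑ i ∈ Finset.Ico (p + j * l) (p + (j + 1) * l), h i)
    (fun j _ => Finset.sum_nonneg fun i _ => hh0 i) (by
      rw [← hblocks.1]
      refine le_trans (Finset.sum_le_sum_of_subset_of_nonneg ?_ fun i _ _ => hh0 i) hhsum
      have hend : p + Q * l ≤ k n := by omega
      exact Finset.Ico_subset_Ico (by simp) hend) (by omega) (by
      have : 0 < ω ^ 3 := by positivity
      linarith [mul_lt_mul_of_pos_right hQ this])
  have hrun := hrun j le_rfl (by omega)
  set c := p + j * l with hc
  have hcl : p + (j + 1) * l = c + l := by rw [hc]; ring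
  rw [hcl] at hrun
  have hclk : c + l ≤ k n := by
    have : (j + 1) * l ≤ Q * l := by gcongr
    omega
  have hcp : p ≤ c := by omega
  have hE : ∑ i ∈ Finset.Ico c (c + l - 1), cellE n (U (i + 1) - U i) +
      β * ∑ i ∈ Finset.Ico c (c + l), cellF n f i (U i) ≤ ε₀ * ω ^ 3 := by
    refine le_trans ?_ hrun
    simp only [hh]
    rw [Finset.sum_add_distrib, ← Finset.mul_sum, ← Finset.sum_filter]
    refine add_le_add (Finset.sum_le_sum_of_subset_of_nonneg ?_ fun i _ _ => cellE_nonneg _ _)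
      le_rfl
    intro i hi
    simp only [Finset.mem_filter, Finset.mem_Ico] at hi ⊢
    omega
  have hFnn : 0 ≤ β * ∑ i ∈ Finset.Ico c (c + l), cellF n f i (U i) :=
    mul_nonneg hβ.le (Finset.sum_nonneg fun _ _ => cellF_nonneg _ _ _ _)
  have hEnn : 0 ≤ ∑ i ∈ Finset.Ico c (c + l - 1), cellE n (U (i + 1) - U i) :=
    Finset.sum_nonneg fun _ _ => cellE_nonneg _ _
  have hω3 : 0 < ω ^ 3 := by positivity
  have hnobig : ∀ i, c ≤ i → i < c + l - 1 → ¬ Big n (1 / 2) U (i + 1) := by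
    intro i hi1 hi2 hB
    have h1 := cellE_ge_of_big hn hB
    have h2 := Finset.single_le_sum (f := fun i => cellE n (U (i + 1) - U i))
      (fun i _ => cellE_nonneg n _) (Finset.mem_Ico.2 ⟨hi1, hi2⟩)
    simp only [Nat.add_sub_cancel] at h1 h2
    rw [← hωdef] at h1
    linarith [mul_le_mul_of_nonneg_right hε₀1 hω3.le]
  have hb : Breaks (Big n (1 / 2) U) c (c + l) 1 (fun j => c + j * l) := by
    refine ⟨by simp, by simp, fun j hj => by gcongr; omega, ?_, ?_⟩
    · intro j hj i h1 h2
      obtain rfl : j = 0 := by omega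
      simp only [zero_mul, add_zero, zero_add, one_mul] at h1 h2
      have := hnobig (i - 1) (by omega) (by omega)
      rwa [Nat.sub_add_cancel (by omega)] at this
    · intro j h1 h2; omega
  have hsmall : smallVar n (1 / 2) U c (c + l) ≤ t / 2 * ω := by
    unfold smallVar
    refine hsv _ (fun i => U (i + 1) - U i) ?_ ?_ ?_
    · refine le_trans ?_ hla
      have : ((Finset.Ico c (c + l - 1)).filter fun i => ¬ Big n (1 / 2) U (i + 1)).card ≤ l := by
        refine (Finset.card_filter_le _ _).trans ?_
        rw [Nat.card_Ico]; omega
      exact_mod_cast this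
    · intro i hi
      have := (Finset.mem_filter.1 hi).2
      unfold Big at this
      simpa using this
    · refine le_trans (Finset.sum_le_sum_of_subset_of_nonneg (Finset.filter_subset _ _)
        fun _ _ _ => cellE_nonneg _ _) ?_
      linarith [mul_le_mul_of_nonneg_right hε₀1 hω3.le]
  have hnear : ∀ i, c ≤ i → i < c + l → |U i - U c| ≤ t / 2 * ω := by
    intro i h1 h2
    have := hb.abs_sub_le_smallVar (j := 0) (i := i) one_pos (by simpa using h1) (by simpa using h2)
    simp only [zero_mul, add_zero] at this
    exact this.trans hsmall
  have hmem : ∀ x ∈ Icc ((c : ℝ) / n) (((c + l : ℕ) : ℝ) / n),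
      x ∈ Icc ((p : ℝ) / n) ((k n : ℝ) / n) := by
    intro x hx
    constructor
    · refine le_trans ?_ hx.1
      gcongr
    · refine hx.2.trans ?_
      gcongr
  have hfl : ∀ x ∈ Icc ((c : ℝ) / n) (((c + l : ℕ) : ℝ) / n),
      ∀ y ∈ Icc ((c : ℝ) / n) (((c + l : ℕ) : ℝ) / n), |f x - f y| ≤ t / 2 * ω := by
    intro x hx y hy
    have hx := hmem x hx
    have hy := hmem y hy
    have h1 := haff x hx y hy
    rw [zero_mul, sub_zero] at h1
    refine h1.trans ?_
    have h2 : |x - y| ≤ A * ω := by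
      refine le_trans ?_ hmle
      have : (m : ℝ) / n = (k n : ℝ) / n - (p : ℝ) / n := by
        rw [hp, Nat.cast_sub (by omega)]; ring
      rw [this, abs_le]
      constructor <;> linarith [hx.1, hx.2, hy.1, hy.2]
    calc t / 2 / A * |x - y| ≤ t / 2 / A * (A * ω) := by gcongr
      _ = t / 2 * ω := by field_simp
  have hcmem : (c : ℝ) / n ∈ Icc ((c : ℝ) / n) (((c + l : ℕ) : ℝ) / n) :=
    ⟨le_rfl, by gcongr; omega⟩
  have hpl := piece_lower (n := n) (by omega) hf (show c ≤ c + l by omega) (by omega) (U := U) (c := U c)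
    (M := 0) (x₀ := (c : ℝ) / n) (ω := ω) ht0
    (fun i hi => (hnear i (Finset.mem_Ico.1 hi).1 (Finset.mem_Ico.1 hi).2).trans (by linarith))
    (fun x hx => by
      rw [zero_mul, sub_zero]; exact (hfl x hx _ hcmem).trans (by linarith))
  have hD : |U c - f ((c : ℝ) / n)| ≤ ε / 4 * ω := by
    apply abs_le_of_sq_le_sq _ (by positivity)
    have hlr : (((c + l : ℕ) : ℝ) - c) / n = l / n := by push_cast; ring
    rw [hlr] at hpl
    set Lr := (l : ℝ) / n with hLr
    have hLω : ω ≤ Lr := by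
      have : 0 < 2 * (1 / ε) * ω := by positivity
      linarith
    have hL0 : 0 < Lr := by linarith
    set D := U c - f ((c : ℝ) / n) with hD
    have h1 : β * ((1 - t) * (Lr * D ^ 2) - t * ω ^ 2 * Lr) ≤ ε₀ * ω ^ 3 := by
      refine le_trans ?_ (by linarith : β * ∑ i ∈ Finset.Ico c (c + l), cellF n f i (U i) ≤ ε₀ * ω ^ 3)
      gcongr
      refine le_trans (le_of_eq ?_) hpl
      ring
    have h2 : ε₀ * ω ^ 3 ≤ β * (ε ^ 2 / 64 * ω ^ 2 * Lr) := by
      calc ε₀ * ω ^ 3 ≤ β * (ε ^ 2 / 64) * ω ^ 3 := by gcongr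
        _ = β * (ε ^ 2 / 64 * ω ^ 2 * ω) := by ring
        _ ≤ _ := by gcongr
    have h3 : (1 - t) * (Lr * D ^ 2) - t * ω ^ 2 * Lr ≤ ε ^ 2 / 64 * ω ^ 2 * Lr :=
      le_of_mul_le_mul_left (h1.trans h2) hβ
    have h4 : Lr * ((1 - t) * D ^ 2) ≤ Lr * (t * ω ^ 2 + ε ^ 2 / 64 * ω ^ 2) := by linarith
    have h5 := le_of_mul_le_mul_left h4 hL0
    have h6 : t * ω ^ 2 ≤ ε ^ 2 / 64 * ω ^ 2 := by gcongr
    have h7 : 1 / 2 * D ^ 2 ≤ (1 - t) * D ^ 2 := by gcongr; linarith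
    linarith
  -- the centre of the block
  set x' : ℝ := (c : ℝ) / n + (l : ℝ) / n / 2 with hx'
  have hlr : ((c + l : ℕ) : ℝ) / n = (c : ℝ) / n + (l : ℝ) / n := by push_cast; ring
  have hin : ∀ y, |y| ≤ 1 / ε → (c : ℝ) / n ≤ x' + ω * y ∧ x' + ω * y < ((c + l : ℕ) : ℝ) / n := by
    intro y hy
    have hy := abs_le.1 hy
    have h1 : ω * y ≤ ω * (1 / ε) := by gcongr; exact hy.2
    have h2 : ω * (-(1 / ε)) ≤ ω * y := by gcongr; exact hy.1
    rw [hlr, hx']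
    constructor <;> linarith
  have hx'in : x' ∈ Icc ((c : ℝ) / n) (((c + l : ℕ) : ℝ) / n) := by
    have := hin 0 (by simpa using hR.le)
    simp only [mul_zero, add_zero] at this
    exact ⟨this.1, this.2.le⟩
  have hx'win := hmem x' hx'in
  have hp1 : 1 ≤ p := by omega
  have hc0 : 0 ≤ (c : ℝ) / n := by positivity
  set φ : ℝ → ℕ := fun y => ⌊(n : ℝ) * (x' + ω * y)⌋₊ with hφ
  have hφmono : Monotone φ := natFloor_blowup_monotone n x' hω
  have hval : ∀ y, |y| ≤ 1 / ε → (u n (x' + ω * y) - f x') / ω = (U (φ y) - f x') / ω := by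
    intro y hy
    rw [pc_eq_natFloor (by omega) (hu n hn).1 (hc0.trans (hin y hy).1)]
  have hφin : ∀ y, |y| ≤ 1 / ε → c ≤ φ y ∧ φ y < c + l := by
    intro y hy
    obtain ⟨h1, h2⟩ := hin y hy
    rw [div_le_iff₀ hn'] at h1
    rw [lt_div_iff₀ hn'] at h2
    constructor
    · apply Nat.le_floor; linarith
    · simp only [hφ]
      rw [Nat.floor_lt (mul_nonneg hn'.le (hc0.trans (hin y hy).1))]; linarith
  refine ⟨x', ⟨?_, ?_⟩, hx'win.2, ?_, ?_⟩
  · refine lt_of_lt_of_le ?_ hx'win.1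
    positivity
  · refine lt_of_le_of_lt hx'win.2 ?_
    rw [div_lt_one hn']; exact_mod_cast hkn
  · intro y hy _
    beta_reduce
    rw [hval y hy, sub_zero, abs_div, abs_of_pos hω, div_le_iff₀ hω]
    obtain ⟨h1, h2⟩ := hφin y hy
    have e1 := abs_le.1 (hnear _ h1 h2)
    have e2 := abs_le.1 hD
    have e3 := abs_le.1 (hfl _ hcmem x' hx'in)
    have e4 : t * ω ≤ ε / 4 * ω := by gcongr
    have e5 : 0 < ε * ω := by positivity
    rw [abs_le]
    constructor <;> linarith [e1.1, e1.2, e2.1, e2.2, e3.1, e3.2]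
  · intro s r hs hsr hr
    have hsub : ∀ y ∈ Icc s r, |y| ≤ 1 / ε := fun y hy =>
      abs_le.2 ⟨by linarith [hy.1], by linarith [hy.2]⟩
    have h1 := hφin s (hsub s (left_mem_Icc.2 hsr))
    have h2 := hφin r (hsub r (right_mem_Icc.2 hsr))
    refine (eVariationOn_le_of_sign (n := n) (r := 1 / 2) (U := U) (φ := φ) (c := f x')
      (η := t / 2) (σ := 1) (p := c) (q := c + l) hω hsr hφmono (fun y hy => hval y (hsub y hy))
      (by simp) h1.1 (by omega) hsmall ?_).trans (ENNReal.ofReal_le_ofReal (by linarith))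
    intro i hi1 hi2 hB
    exact absurd hB (hnobig i (by omega) (by omega))

/-! ### Existence of good centres -/

lemma CloseTo.mono {B : Set ℝ} {w v : ℝ → ℝ} {ε ε' : ℝ} (hε : 0 < ε) (hle : ε ≤ ε')
    (h : CloseTo B w v ε) : CloseTo B w v ε' := by
  have h1 : 1 / ε' ≤ 1 / ε := one_div_le_one_div_of_le hε hle
  refine ⟨fun y hy hB => ?_, fun s t hs hst ht => ?_⟩
  · exact (h.1 y (hy.trans h1) fun z hz => hle.trans (hB z hz)).trans hle
  · exact (h.2 s t (by linarith) hst (by linarith)).trans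
      (ENNReal.ofReal_le_ofReal (by linarith))

/-- Where `f'` does not vanish, blow-ups of minimizers close to any prescribed oblique
translation of the staircase exist at points to the left of `k n / n`. -/
lemma stair_close {β : ℝ} (hβ : 0 < β) {f f' : ℝ → ℝ}
    (hder : ∀ x ∈ Icc (0 : ℝ) 1, HasDerivAt f (f' x) x)
    (hcont : ContinuousOn f' (Icc (0 : ℝ) 1)) {u : ℕ → ℝ → ℝ}
    (hu : ∀ n, 2 ≤ n → IsMinimizer n β f (u n))
    {xinf : ℝ} (hxinf : xinf ∈ Ioo (0 : ℝ) 1)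
    {k : ℕ → ℕ} (hk : ∀ n, 2 ≤ n → k n < n)
    (hx : Tendsto (fun n => (k n : ℝ) / (n : ℝ)) atTop (nhds xinf))
    {M H τ : ℝ} (hM : f' xinf = M) (hM0 : M ≠ 0) (hH : 0 < H) (hMH : β * M ^ 2 * H ^ 3 = 1)
    (hτ : τ ∈ Icc (-1 : ℝ) 1) {ε : ℝ} (hε : 0 < ε) :
    ∀ᶠ n : ℕ in atTop, ∃ x' ∈ Ioo (0 : ℝ) 1, x' ≤ (k n : ℝ) / n ∧
      CloseTo (stairBreaks H τ) (fun y => canStair H (M * H) (y - H * τ) + (M * H) * τ)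
        (fun y => (u n (x' + omg n * y) - f x') / omg n) ε := by
  have hf : ContinuousOn f (Icc 0 1) := fun x hx => (hder x hx).continuousAt.continuousWithinAt
  obtain ⟨K, hK⟩ := exists_nat_gt ((1 / ε + 2 * H) / (2 * H))
  rw [div_lt_iff₀ (by positivity)] at hK
  have hMa : 0 < |M| := abs_pos.2 hM0
  have hK3 : (0 : ℝ) < K + 3 := by positivity
  set η := min (ε / 2 / ((3 + |M|) * (K + 3))) (min (H / (K + 3)) (|M| * H / 3)) with hηdef
  have hη : 0 < η := by positivity
  have hη1 : η ≤ ε / 2 / ((3 + |M|) * (K + 3)) := min_le_left _ _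
  have hη2 : η ≤ H / (K + 3) := (min_le_right _ _).trans (min_le_left _ _)
  have hη3 : η ≤ |M| * H / 3 := (min_le_right _ _).trans (min_le_right _ _)
  rw [le_div_iff₀ (by positivity)] at hη1 hη2 hη3
  filter_upwards [good_pieces hβ hder hcont (U := fun n i => u n ((i : ℝ) / n))
    (fun n hn V => (hu n hn).discE_le (by omega) hf V) hxinf hk hx hM hH hMH (2 * K + 1) hη]
    with n hgp
  obtain ⟨p, J, j₁, b, t, hn, hp, hkn, hb, hj, hsv, haff, hgood⟩ := hgp
  have hn' : (0 : ℝ) < n := by positivity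
  obtain ⟨x', hx', hclose⟩ := close_of_pieces hn (hu n hn).1 hH hη hε hM0 hτ hb hj hsv haff hgood
    (by linarith) (by linarith) (by linarith) (by linarith)
  refine ⟨x', ⟨?_, ?_⟩, hx'.2.le, hclose⟩
  · refine lt_of_lt_of_le ?_ hx'.1
    positivity
  · refine hx'.2.trans ?_
    rw [div_lt_one hn']; exact_mod_cast hkn

/-- Diagonal choice of the centres. -/
lemma exists_diagonal {P : ℕ → ℝ → ℝ → Prop}
    (hmono : ∀ n ε ε' x, 0 < ε → ε ≤ ε' → P n ε x → P n ε' x)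
    (hP : ∀ ε > 0, ∀ᶠ n in atTop, ∃ x ∈ Ioo (0 : ℝ) 1, P n ε x) :
    ∃ xs : ℕ → ℝ, (∀ n, xs n ∈ Ioo (0 : ℝ) 1) ∧ ∀ ε > 0, ∀ᶠ n in atTop, P n ε (xs n) := by
  classical
  set G : ℕ → ℕ → Prop := fun n m => ∃ x ∈ Ioo (0 : ℝ) 1, P n (1 / ((m : ℝ) + 1)) x with hG
  have hchoice : ∀ n, ∃ x ∈ Ioo (0 : ℝ) 1, G n (Nat.findGreatest (G n) n) →
      P n (1 / ((Nat.findGreatest (G n) n : ℕ) + 1 : ℝ)) x := by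
    intro n
    by_cases h : G n (Nat.findGreatest (G n) n)
    · obtain ⟨x, hx, hPx⟩ := h
      exact ⟨x, hx, fun _ => hPx⟩
    · exact ⟨1 / 2, by norm_num, fun h' => absurd h' h⟩
  choose xs hxs hPs using hchoice
  refine ⟨xs, hxs, fun ε hε => ?_⟩
  obtain ⟨m, hm⟩ := exists_nat_one_div_lt hε
  filter_upwards [hP (1 / ((m : ℝ) + 1)) (by positivity), eventually_ge_atTop m] with n hn hmn
  have hGm : G n m := hn
  have h1 : m ≤ Nat.findGreatest (G n) n := Nat.le_findGreatest hmn hGm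
  refine hmono n _ _ _ (by positivity) ?_ (hPs n (Nat.findGreatest_spec hmn hGm))
  refine le_trans ?_ hm.le
  gcongr

/-! ### From closeness to locally strict convergence -/

lemma CloseTo.tendsto {B : Set ℝ} {w : ℝ → ℝ} {v : ℕ → ℝ → ℝ} (hB : IsClosed B)
    (hv : ∀ ε > 0, ∀ᶠ n in atTop, CloseTo B w (v n) ε) {y : ℝ} (hy : y ∉ B) :
    Tendsto (fun n => v n y) atTop (nhds (w y)) := by
  obtain ⟨r, hr, hball⟩ := Metric.isOpen_iff.1 hB.isOpen_compl y hy
  rw [Metric.tendsto_nhds]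
  intro e he
  set ε := min r (min (e / 2) (1 / (|y| + 1))) with hε
  have hε0 : 0 < ε := by positivity
  have hε1 : ε ≤ r := min_le_left _ _
  have hε2 : ε ≤ e / 2 := (min_le_right _ _).trans (min_le_left _ _)
  have hε3 : ε ≤ 1 / (|y| + 1) := (min_le_right _ _).trans (min_le_right _ _)
  filter_upwards [hv ε hε0] with n hn
  rw [Real.dist_eq]
  refine lt_of_le_of_lt (hn.1 y ?_ fun z hz => ?_) (by linarith)
  · rw [le_div_iff₀ (by positivity)] at hε3 ⊢
    nlinarith [abs_nonneg y]
  · by_contra! hlt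
    refine hball ?_ hz
    rw [Metric.mem_ball, dist_comm, Real.dist_eq]
    linarith

/-- If functions `v n` are closer and closer to `w` away from a closed countable set `B` of
discontinuities of `w`, and the variation of `w` on intervals is the absolute increment (as for
monotone functions), then `v n → w` locally strictly. -/
lemma locStrictBV_of_closeTo {B : Set ℝ} {w : ℝ → ℝ} {v : ℕ → ℝ → ℝ} (hB : IsClosed B)
    (hBc : B.Countable) (hBw : ∀ y, ContinuousAt w y → y ∉ B) (hw : Measurable w)
    (hwvar : ∀ a b, a ≤ b → eVariationOn w (Icc a b) ≤ edist (w a) (w b))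
    (hvm : ∀ᶠ n in atTop, Measurable (v n))
    (hv : ∀ ε > 0, ∀ᶠ n in atTop, CloseTo B w (v n) ε) : LocStrictBV v w := by
  intro a b hab hca hcb
  have hlim : ∀ y, y ∉ B → Tendsto (fun n => v n y) atTop (nhds (w y)) :=
    fun y hy => CloseTo.tendsto hB hv hy
  have ha := hlim a (hBw a hca)
  have hb := hlim b (hBw b hcb)
  have hvar : ∀ ε > 0, ∀ᶠ n in atTop,
      eVariationOn (v n) (Icc a b) ≤ ENNReal.ofReal (|w b - w a| + ε) := by
    intro ε hε
    set ε' := min (ε / 2) (1 / (|a| + |b| + 1)) with hε'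
    have h0 : 0 < ε' := by positivity
    have h1 : ε' ≤ ε / 2 := min_le_left _ _
    have h2 : ε' ≤ 1 / (|a| + |b| + 1) := min_le_right _ _
    have h3 : |a| + |b| + 1 ≤ 1 / ε' := by
      rw [le_div_iff₀ (by positivity)] at h2 ⊢
      linarith
    have h4 : ∀ᶠ n in atTop, |v n b - v n a| < |w b - w a| + ε / 2 :=
      (hb.sub ha).abs.eventually_lt_const (by linarith)
    filter_upwards [hv ε' h0, h4] with n hn h4
    refine (hn.2 a b ?_ hab.le ?_).trans (ENNReal.ofReal_le_ofReal (by linarith))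
    · linarith [neg_abs_le a, abs_nonneg b]
    · linarith [le_abs_self b, abs_nonneg a]
  have hlow : ∀ c, c < edist (w a) (w b) → ∃ x ∈ Ioo a b, ∃ y ∈ Ioo a b, x ∉ B ∧ y ∉ B ∧
      c < edist (w x) (w y) := by
    intro c hc
    have e1 : Tendsto (fun s : ℝ => a + s) (nhdsWithin 0 (Ioi 0)) (nhds a) := by
      have : Tendsto (fun s : ℝ => a + s) (nhds 0) (nhds (a + 0)) :=
        tendsto_const_nhds.add tendsto_id
      rw [add_zero] at this
      exact this.mono_left nhdsWithin_le_nhds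
    have e2 : Tendsto (fun s : ℝ => b - s) (nhdsWithin 0 (Ioi 0)) (nhds b) := by
      have : Tendsto (fun s : ℝ => b - s) (nhds 0) (nhds (b - 0)) :=
        tendsto_const_nhds.sub tendsto_id
      rw [sub_zero] at this
      exact this.mono_left nhdsWithin_le_nhds
    have e3 : Tendsto (fun s : ℝ => edist (w (a + s)) (w (b - s))) (nhdsWithin 0 (Ioi 0))
        (nhds (edist (w a) (w b))) := (hca.tendsto.comp e1).edist (hcb.tendsto.comp e2)
    have e4 := e3.eventually_const_lt hc
    have e5 := e1.eventually (hB.isOpen_compl.mem_nhds (hBw a hca))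
    have e6 := e2.eventually (hB.isOpen_compl.mem_nhds (hBw b hcb))
    have e7 := e1.eventually_lt_const hab
    have e8 := e2.eventually_const_lt hab
    have e9 : ∀ᶠ s : ℝ in nhdsWithin 0 (Ioi 0), 0 < s := self_mem_nhdsWithin
    obtain ⟨s, h4, h5, h6, h7, h8, h9⟩ :=
      (e4.and (e5.and (e6.and (e7.and (e8.and e9))))).exists
    exact ⟨a + s, ⟨by linarith, h7⟩, b - s, ⟨h8, by linarith⟩, h5, h6, h4⟩
  have hweq : eVariationOn w (Ioo a b) = edist (w a) (w b) := by
    apply le_antisymm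
    · exact (eVariationOn.mono w Ioo_subset_Icc_self).trans (hwvar a b hab.le)
    · refine le_of_forall_lt fun c hc => ?_
      obtain ⟨x, hx, y, hy, -, -, hc'⟩ := hlow c hc
      exact hc'.trans_le (eVariationOn.edist_le w hx hy)
  refine ⟨?_, ?_⟩
  · set C := |w b - w a| + 1 + 1 + |w b - w a| with hC
    have hwbd : ∀ x ∈ Ioo a b, |w x - w a| ≤ |w b - w a| := by
      intro x hx
      have h1 := (eVariationOn.edist_le w (Ioo_subset_Icc_self hx) (left_mem_Icc.2 hab.le)).trans
        (hwvar a b hab.le)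
      rwa [edist_comm (w a), edist_dist, edist_dist, ENNReal.ofReal_le_ofReal_iff dist_nonneg,
        Real.dist_eq, Real.dist_eq] at h1
    have key := tendsto_integral_filter_of_dominated_convergence (l := atTop)
      (μ := volume.restrict (Ioo a b)) (F := fun n x => |v n x - w x|) (f := fun _ => 0)
      (fun _ => C) ?_ ?_ (integrable_const C) ?_
    · simpa using key
    · filter_upwards [hvm] with n hn
      exact ((hn.sub hw).abs).aestronglyMeasurable
    · have h4 : ∀ᶠ n in atTop, |v n a - w a| < 1 := by
        have := (ha.sub_const (w a)).abs
        rw [sub_self, abs_zero] at this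
        exact this.eventually_lt_const one_pos
      filter_upwards [hvar 1 one_pos, h4] with n h1 h4
      refine (ae_restrict_iff' measurableSet_Ioo).2 (Eventually.of_forall fun x hx => ?_)
      have h5 := (eVariationOn.edist_le (v n) (Ioo_subset_Icc_self hx)
        (left_mem_Icc.2 hab.le)).trans h1
      rw [edist_dist, ENNReal.ofReal_le_ofReal_iff (by positivity), Real.dist_eq] at h5
      have h6 := hwbd x hx
      rw [Real.norm_eq_abs, abs_abs]
      have e1 := abs_le.1 h5
      have e2 := abs_le.1 h6
      have e3 := abs_lt.1 h4
      rw [abs_le]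
      constructor <;> linarith [e1.1, e1.2, e2.1, e2.2, e3.1, e3.2]
    · have hnull : ∀ᵐ x ∂(volume.restrict (Ioo a b)), x ∉ B :=
        ae_restrict_of_ae (hBc.ae_notMem volume)
      filter_upwards [hnull] with x hx
      have := ((hlim x hx).sub_const (w x)).abs
      rwa [sub_self, abs_zero] at this
  · rw [hweq]
    refine tendsto_order.2 ⟨fun c hc => ?_, fun c hc => ?_⟩
    · obtain ⟨x, hx, y, hy, hxB, hyB, hc'⟩ := hlow c hc
      filter_upwards [((hlim x hxB).edist (hlim y hyB)).eventually_const_lt hc'] with n hn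
      exact hn.trans_le (eVariationOn.edist_le (v n) hx hy)
    · have e1 : Tendsto (fun s : ℝ => ENNReal.ofReal (|w b - w a| + s)) (nhdsWithin 0 (Ioi 0))
          (nhds (edist (w a) (w b))) := by
        have : Tendsto (fun s : ℝ => |w b - w a| + s) (nhds 0) (nhds (|w b - w a| + 0)) :=
          tendsto_const_nhds.add tendsto_id
        rw [add_zero] at this
        rw [edist_comm, edist_dist, Real.dist_eq]
        exact ENNReal.tendsto_ofReal (this.mono_left nhdsWithin_le_nhds)
      have e9 : ∀ᶠ s : ℝ in nhdsWithin 0 (Ioi 0), 0 < s := self_mem_nhdsWithin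
      obtain ⟨s, h1, h2⟩ := ((e1.eventually_lt_const hc).and e9).exists
      filter_upwards [hvar s h2] with n hn
      exact ((eVariationOn.mono _ Ioo_subset_Icc_self).trans hn).trans_lt h1

/-! ### Properties of the staircase -/

lemma stairBreaks_countable (H τ : ℝ) : (stairBreaks H τ).Countable := countable_range _

lemma stairBreaks_isClosed {H : ℝ} (hH : 0 < H) (τ : ℝ) : IsClosed (stairBreaks H τ) := by
  rw [← isOpen_compl_iff, isOpen_iff_mem_nhds]
  intro y hy
  obtain ⟨k, h1, h2⟩ := exists_stair_index hH τ y
  have h3 : H * (τ + 2 * k - 1) < y := lt_of_le_of_ne h1 fun h => hy ⟨k, h⟩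
  filter_upwards [Ioo_mem_nhds h3 h2] with x hx
  rintro ⟨j, rfl⟩
  have e1 := lt_of_mul_lt_mul_left hx.1 hH.le
  have e2 := lt_of_mul_lt_mul_left hx.2 hH.le
  have e3 : (k : ℝ) < j := by linarith
  have e4 : (j : ℝ) < k + 1 := by linarith
  have e5 : k < j := by exact_mod_cast e3
  have e6 : j < k + 1 := by exact_mod_cast e4
  omega

lemma stair_not_continuousAt {H V τ y : ℝ} (hH : 0 < H) (hV : V ≠ 0)
    (hc : ContinuousAt (fun y => canStair H V (y - H * τ) + V * τ) y) : y ∉ stairBreaks H τ := by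
  rintro ⟨k, rfl⟩
  have h1 : Tendsto (fun y => canStair H V (y - H * τ) + V * τ)
      (nhdsWithin (H * (τ + 2 * k - 1)) (Iio (H * (τ + 2 * k - 1))))
      (nhds (V * (τ + 2 * k))) := by
    have := hc.tendsto.mono_left (nhdsWithin_le_nhds (s := Iio (H * (τ + 2 * k - 1))))
    rwa [stair_value hH le_rfl (by gcongr; linarith)] at this
  have h2 : Tendsto (fun y => canStair H V (y - H * τ) + V * τ)
      (nhdsWithin (H * (τ + 2 * k - 1)) (Iio (H * (τ + 2 * k - 1))))
      (nhds (V * (τ + 2 * ((k - 1 : ℤ) : ℝ)))) := by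
    refine tendsto_const_nhds.congr' ?_
    have h3 : H * (τ + 2 * ((k - 1 : ℤ) : ℝ) - 1) < H * (τ + 2 * k - 1) := by
      push_cast; gcongr; linarith
    filter_upwards [Ioo_mem_nhdsLT h3] with y hy
    refine (stair_value hH hy.1.le (hy.2.trans_eq ?_)).symm
    push_cast; ring
  have h3 := mul_left_cancel₀ hV (tendsto_nhds_unique h1 h2)
  push_cast at h3
  linarith

lemma stairS_monotone : Monotone stairS := by
  intro x y hxy
  unfold stairS
  have : ⌊(x + 1) / 2⌋ ≤ ⌊(y + 1) / 2⌋ := by gcongr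
  have : ((⌊(x + 1) / 2⌋ : ℤ) : ℝ) ≤ (⌊(y + 1) / 2⌋ : ℤ) := by exact_mod_cast this
  linarith

lemma stair_inner_monotone {H : ℝ} (hH : 0 < H) (τ : ℝ) :
    Monotone fun y => stairS ((y - H * τ) / H) := by
  intro x y hxy
  apply stairS_monotone
  gcongr

lemma stair_measurable {H : ℝ} (hH : 0 < H) (V τ : ℝ) :
    Measurable fun y => canStair H V (y - H * τ) + V * τ :=
  ((stair_inner_monotone hH τ).measurable.const_mul V).add_const _

lemma stair_eVariationOn_le {H : ℝ} (hH : 0 < H) (V τ : ℝ) {a b : ℝ} (hab : a ≤ b) :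
    eVariationOn (fun y => canStair H V (y - H * τ) + V * τ) (Icc a b) ≤
      edist (canStair H V (a - H * τ) + V * τ) (canStair H V (b - H * τ) + V * τ) := by
  have hlip : LipschitzOnWith ‖V‖₊ (fun x => V * x + V * τ) univ := by
    refine LipschitzWith.lipschitzOnWith ?_
    refine LipschitzWith.of_dist_le_mul fun x y => le_of_eq ?_
    rw [Real.dist_eq, Real.dist_eq, coe_nnnorm, Real.norm_eq_abs, ← abs_mul]
    congr 1; ring
  have hmono := stair_inner_monotone hH τ
  have h1 := hlip.comp_eVariationOn_le (f := fun x => V * x + V * τ)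
    (g := fun y => stairS ((y - H * τ) / H)) (s := Icc a b) (fun _ _ => mem_univ _)
  have h2 := (hmono.monotoneOn (Icc a b)).eVariationOn_eq (left_mem_Icc.2 hab)
    (right_mem_Icc.2 hab)
  rw [inter_self] at h2
  rw [h2] at h1
  refine h1.trans (le_of_eq ?_)
  have h3 : stairS ((a - H * τ) / H) ≤ stairS ((b - H * τ) / H) := hmono hab
  rw [edist_comm, edist_dist, Real.dist_eq]
  unfold canStair
  rw [show V * stairS ((b - H * τ) / H) + V * τ - (V * stairS ((a - H * τ) / H) + V * τ) =
    V * (stairS ((b - H * τ) / H) - stairS ((a - H * τ) / H)) by ring, abs_mul,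
    ENNReal.ofReal_mul (abs_nonneg V), abs_of_nonneg (sub_nonneg.2 h3)]
  congr 1
  rw [← Real.norm_eq_abs, ofReal_norm]; rfl

/-! ### Conclusion -/

/-- The real `limsup` of a sequence that is eventually nonpositive is nonpositive; if the sequence
is so negative that the defining set is unbounded below, the infimum takes the junk value `0`. -/
lemma limsup_nonpos {g : ℕ → ℝ} (hg : ∀ᶠ n in atTop, g n ≤ 0) : limsup g atTop ≤ 0 := by
  rw [limsup_eq]
  by_cases h : BddBelow {a : ℝ | ∀ᶠ n in atTop, g n ≤ a}
  · exact csInf_le h hg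
  · rw [Real.sInf_of_not_bddBelow h]

lemma blowup_measurable {n : ℕ} (hn : 2 ≤ n) {u : ℝ → ℝ} (hu : IsPC (1 / (n : ℝ)) u) (f : ℝ → ℝ)
    (x : ℝ) : Measurable fun y => (u (x + omg n * y) - f x) / omg n := by
  have := pc_measurable (by omega) hu
  fun_prop

/-- Every oblique translation `w` of the canonical `(H,V)`-staircase is
attained as limit of blow-ups of minimizers centered at suitable nearby points `x_n'`,
with `limsup (x_n' − x_n)/ω(n) ≤ H`. -/
theorem every_oblique_translation_is_blowup_limit
    (β : ℝ) (hβ : 0 < β) (f f' : ℝ → ℝ)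
    (hder : ∀ x ∈ Set.Icc (0 : ℝ) 1, HasDerivAt f (f' x) x)
    (hcont : ContinuousOn f' (Set.Icc (0 : ℝ) 1))
    (u : ℕ → ℝ → ℝ) (hu : ∀ n, 2 ≤ n → IsMinimizer n β f (u n))
    (k : ℕ → ℕ) (hk : ∀ n, 2 ≤ n → k n < n)
    (xs : ℕ → ℝ) (hxs : ∀ n, xs n = (k n : ℝ) / (n : ℝ))
    (xinf : ℝ) (hxinf : xinf ∈ Set.Ioo (0 : ℝ) 1)
    (hx : Tendsto xs atTop (nhds xinf))
    (H V : ℝ)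
    (hH : H = (1 / (β * |f' xinf| ^ 2)) ^ ((1 : ℝ) / 3))
    (hV : V = f' xinf * H) :
    ∀ w : ℝ → ℝ, Obl H V w →
      ∃ xs' : ℕ → ℝ, (∀ n, xs' n ∈ Set.Ioo (0 : ℝ) 1) ∧
        Filter.limsup (fun n => (xs' n - xs n) / omg n) atTop ≤ H ∧
        LocStrictBV (fun n y => (u n (xs' n + omg n * y) - f (xs' n)) / omg n) w := by
  intro w hw
  obtain ⟨τ, hτ, hwτ⟩ := hw
  have hx' : Tendsto (fun n => (k n : ℝ) / (n : ℝ)) atTop (nhds xinf) :=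
    hx.congr hxs
  have hH0 : 0 ≤ H := by rw [hH]; positivity
  -- centres to the left of `xs n` with blow-ups close to `w` are enough
  have key : ∀ B : Set ℝ, IsClosed B → B.Countable → (∀ y, ContinuousAt w y → y ∉ B) →
      Measurable w → (∀ a b, a ≤ b → eVariationOn w (Icc a b) ≤ edist (w a) (w b)) →
      (∀ ε > 0, ∀ᶠ n : ℕ in atTop, ∃ x' ∈ Ioo (0 : ℝ) 1, x' ≤ (k n : ℝ) / n ∧
        CloseTo B w (fun y => (u n (x' + omg n * y) - f x') / omg n) ε) →
      ∃ xs' : ℕ → ℝ, (∀ n, xs' n ∈ Set.Ioo (0 : ℝ) 1) ∧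
        Filter.limsup (fun n => (xs' n - xs n) / omg n) atTop ≤ H ∧
        LocStrictBV (fun n y => (u n (xs' n + omg n * y) - f (xs' n)) / omg n) w := by
    intro B hB hBc hBw hwm hwvar hex
    obtain ⟨xs', hin, hP⟩ := exists_diagonal
      (P := fun n ε x' => x' ≤ (k n : ℝ) / n ∧
        CloseTo B w (fun y => (u n (x' + omg n * y) - f x') / omg n) ε)
      (fun n ε ε' x hε hle h => ⟨h.1, h.2.mono hε hle⟩) hex
    refine ⟨xs', hin, (limsup_nonpos ?_).trans hH0, ?_⟩
    · filter_upwards [hP 1 one_pos, eventually_ge_atTop 2] with n hn hn2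
      refine div_nonpos_of_nonpos_of_nonneg ?_ (omg_pos hn2).le
      rw [hxs]; linarith [hn.1]
    · refine locStrictBV_of_closeTo hB hBc hBw hwm hwvar ?_ fun ε hε => (hP ε hε).mono fun n h => h.2
      filter_upwards [eventually_ge_atTop 2] with n hn
      exact blowup_measurable hn (hu n hn).1 f (xs' n)
  by_cases hM : f' xinf = 0
  · -- `H = V = 0` because `1 / 0 = 0`, so `w` is the zero function
    have hV0 : V = 0 := by rw [hV, hM, zero_mul]
    obtain rfl : w = fun _ => 0 := by
      funext x; rw [hwτ, hV0]; simp [canStair]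
    refine key ∅ isClosed_empty countable_empty (fun _ _ h => h.elim) measurable_const ?_
      fun ε hε => flat_close hβ hder hcont hu hxinf hk hx' hM hε
    intro a b _
    refine (eVariationOn.constant_on (f := fun _ : ℝ => (0 : ℝ)) ?_).trans_le bot_le
    rintro _ ⟨_, _, rfl⟩ _ ⟨_, _, rfl⟩
    rfl
  · have hMsq : 0 < β * |f' xinf| ^ 2 := mul_pos hβ (pow_pos (abs_pos.2 hM) 2)
    have hHpos : 0 < H := by rw [hH]; positivity
    have hMH : β * f' xinf ^ 2 * H ^ 3 = 1 := by
      have h3 : H ^ 3 = 1 / (β * |f' xinf| ^ 2) := by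
        rw [hH, ← Real.rpow_natCast, ← Real.rpow_mul (by positivity)]
        norm_num
      rw [h3, ← sq_abs]
      field_simp
    obtain rfl : w = fun y => canStair H (f' xinf * H) (y - H * τ) + (f' xinf * H) * τ := by
      funext x; rw [hwτ, hV]
    refine key (stairBreaks H τ) (stairBreaks_isClosed hHpos τ) (stairBreaks_countable H τ)
      (fun y hy => stair_not_continuousAt hHpos (mul_ne_zero hM hHpos.ne') hy)
      (stair_measurable hHpos _ τ) (fun a b hab => stair_eVariationOn_le hHpos _ τ hab)
      fun ε hε => stair_close hβ hder hcont hu hxinf hk hx' rfl hM hHpos hMH hτ hε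

end PeronaMalik
end

section
/- Compactness for the rescaled discrete Perona–Malik functional: let (a,b) ⊂ ℝ be a bounded interval and p ∈ [1,+∞). Let {n_k} be a sequence of integers with n_k → +∞, and let u_k ∈ PC_{δ(n_k)}(a,b) be functions such that sup_k { RDPM_{n_k}((a,b),u_k) + ‖u_k‖_{L^∞} } < +∞. Then there exist a subsequence {k_h} and a step function u ∈ S((a,b)) such that u_{k_h} → u in L^p((a,b)). -/
/-!
On each grid cell the integrand is constant, so, since `δ(n)/ω(n)² = 1/log n`, the energy bound
says `∑ log (1 + (Δⱼ/δ)²) ≤ C log n` for the increments `Δⱼ` of `u` between consecutive cells.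
Split the increments at the threshold `√δ`.

* An increment above `√δ` costs at least `log (1/δ) ≥ (2/3) log n`, so there are at most `3C/2` of
  them (`big_card`).
* For the others, `d ≤ √δ + (2/√δ) log (1 + d²)` with `d = |Δⱼ|/δ ≤ 1/√δ` (`le_add_log`), so their
  total variation is `O(√δ log n)`, which tends to `0` (`small_sum`, `error_tendsto`).

Hence `u` is, up to a uniformly small error, a step function with boundedly many jumps whose
positions lie in `[a, b]` and whose sizes are bounded (`structure_lemma`). These finitely many
parameters live in a compact box, so they converge along a subsequence; the step functions then
converge pointwise off the limiting jump points, and dominated convergence gives convergence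
in `L^p`. Limiting jumps that coincide, vanish or lie on the boundary are merged or absorbed by
`isStep_of_sum`.
-/

open MeasureTheory Filter Set

namespace PeronaMalik

/-- A finite sum of (possibly coinciding, vanishing or external) jumps is a step function. -/
lemma isStep_of_sum (a b : ℝ) {M : ℕ} (c : ℝ) (t J : Fin M → ℝ) :
    IsStep a b (fun x => c + ∑ i, (if t i ≤ x then J i else 0)) := by
  classical
  set K : ℝ → ℝ := fun q => ∑ i with t i = q, J i with hK
  set T : Finset ℝ := Finset.univ.image t with hT
  have key : ∀ x, ∑ i, (if t i ≤ x then J i else 0) = ∑ q ∈ T, (if q ≤ x then K q else 0) := by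
    intro x
    rw [← Finset.sum_fiberwise_of_maps_to (s := Finset.univ) (t := T) (g := t)
      (fun i _ => Finset.mem_image_of_mem t (Finset.mem_univ i))]
    refine Finset.sum_congr rfl fun q _ => ?_
    have : ∀ i ∈ Finset.univ.filter (fun i => t i = q),
        (if t i ≤ x then J i else 0) = if q ≤ x then J i else 0 := by
      intro i hi
      rw [(Finset.mem_filter.1 hi).2]
    rw [Finset.sum_congr rfl this]
    split_ifs <;> simp [hK]
  refine ⟨T.filter (fun q => q ∈ Set.Ioo a b ∧ K q ≠ 0),
    c + ∑ q ∈ T, (if q ≤ a then K q else 0), K, ?_, ?_⟩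
  · intro q hq
    exact (Finset.mem_filter.1 hq).2
  · intro x hx
    simp only [key, Finset.sum_filter, add_assoc, ← Finset.sum_add_distrib]
    congr 1
    refine Finset.sum_congr rfl fun q _ => ?_
    obtain ⟨h1, h2⟩ := hx
    by_cases hqa : q ≤ a
    · have : q ≤ x := by linarith
      have h3 : ¬ (a < q) := not_lt.2 hqa
      simp [hqa, this, h3]
    · by_cases hqx : q ≤ x
      · have : q < b := by linarith
        by_cases hk : K q = 0
        · simp [hk]
        · simp [hqa, hqx, this, hk, not_le.1 hqa]
      · simp [hqa, hqx]

/-- Pads a family of at most `M` jumps to exactly `M` jumps, so that configurations of jumps can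
be viewed as points of a fixed finite-dimensional space. -/
lemma exists_padding {ι : Type*} (a b D : ℝ) (hab : a ≤ b) (hD : 0 ≤ D) (t J : ι → ℝ) :
    ∀ (M : ℕ) (B : Finset ι), B.card ≤ M → (∀ j ∈ B, t j ∈ Set.Icc a b ∧ J j ∈ Set.Icc (-D) D) →
    ∃ t' J' : Fin M → ℝ, (∀ i, t' i ∈ Set.Icc a b) ∧ (∀ i, J' i ∈ Set.Icc (-D) D) ∧
      ∀ x, ∑ j ∈ B, (if t j ≤ x then J j else 0) = ∑ i, (if t' i ≤ x then J' i else 0) := by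
  classical
  intro M
  induction M with
  | zero =>
    intro B hB _
    have : B = ∅ := Finset.card_eq_zero.1 (by omega)
    subst this
    exact ⟨Fin.elim0, Fin.elim0, fun i => i.elim0, fun i => i.elim0, fun x => by simp⟩
  | succ M ih =>
    intro B hB hbox
    rcases B.eq_empty_or_nonempty with rfl | ⟨j, hj⟩
    · exact ⟨fun _ => a, fun _ => 0, fun _ => ⟨le_rfl, hab⟩, fun _ => ⟨by linarith, hD⟩,
        fun x => by simp⟩
    · obtain ⟨t', J', h1, h2, h3⟩ := ih (B.erase j)
        (by rw [Finset.card_erase_of_mem hj]; omega)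
        (fun i hi => hbox i (Finset.mem_of_mem_erase hi))
      refine ⟨Fin.cons (t j) t', Fin.cons (J j) J', ?_, ?_, ?_⟩
      · intro i
        refine Fin.cases ?_ ?_ i
        · simpa using (hbox j hj).1
        · intro i; simpa using h1 i
      · intro i
        refine Fin.cases ?_ ?_ i
        · simpa using (hbox j hj).2
        · intro i; simpa using h2 i
      · intro x
        rw [← Finset.add_sum_erase B _ hj, h3 x, Fin.sum_univ_succ]
        simp

lemma le_add_log {r d : ℝ} (hr : 0 < r) (hd : 0 ≤ d) (hdr : d ≤ 1 / r) :
    d ≤ r + 2 / r * Real.log (1 + d ^ 2) := by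
  rcases le_total d 1 with h | h
  · have h1 : d ^ 2 / 2 ≤ Real.log (1 + d ^ 2) := by
      have h2 := Real.one_sub_inv_le_log_of_pos (x := 1 + d ^ 2) (by positivity)
      refine le_trans ?_ h2
      rw [le_sub_iff_add_le, ← le_sub_iff_add_le', inv_le_iff_one_le_mul₀ (by positivity)]
      nlinarith [sq_nonneg d, mul_nonneg (sq_nonneg d) (sub_nonneg.2 (show d ^ 2 ≤ 1 by nlinarith))]
    have h3 : 2 / r * (d ^ 2 / 2) ≤ 2 / r * Real.log (1 + d ^ 2) :=
      mul_le_mul_of_nonneg_left h1 (by positivity)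
    have h4 : d ≤ r + 2 / r * (d ^ 2 / 2) := by
      have : r + 2 / r * (d ^ 2 / 2) = (r ^ 2 + d ^ 2) / r := by field_simp
      rw [this, le_div_iff₀ hr]
      nlinarith [sq_nonneg (r - d), sq_nonneg (r + d)]
    linarith
  · have h1 : (1 / 2 : ℝ) ≤ Real.log (1 + d ^ 2) := by
      have : Real.log 2 ≤ Real.log (1 + d ^ 2) :=
        Real.log_le_log (by norm_num) (by nlinarith)
      linarith [Real.log_two_gt_d9]
    have h3 : 2 / r * (1 / 2) ≤ 2 / r * Real.log (1 + d ^ 2) :=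
      mul_le_mul_of_nonneg_left h1 (by positivity)
    have : 2 / r * (1 / 2) = 1 / r := by ring
    linarith

/-- Increments below the threshold `√δ` have small total variation. -/
lemma small_sum {N : ℕ} {δ E : ℝ} (hδ : 0 < δ) (w : ℕ → ℝ)
    (hE : ∑ j ∈ Finset.range N, Real.log (1 + ((w (j + 1) - w j) / δ) ^ 2) ≤ E) :
    ∑ j ∈ Finset.range N with |w (j + 1) - w j| ≤ √δ, |w (j + 1) - w j|
      ≤ √δ * (N * δ + 2 * E) := by
  have hr : 0 < √δ := Real.sqrt_pos.2 hδ
  have hrr : √δ * √δ = δ := Real.mul_self_sqrt hδ.le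
  have hpt : ∀ j, |w (j + 1) - w j| ≤ √δ →
      |w (j + 1) - w j| ≤
        √δ * δ + 2 * √δ * Real.log (1 + ((w (j + 1) - w j) / δ) ^ 2) := by
    intro j hj
    have h := le_add_log (r := √δ) (d := |w (j + 1) - w j| / δ) hr (by positivity) (by
      rw [div_le_div_iff₀ hδ hr]
      nlinarith)
    rw [div_pow, sq_abs, ← div_pow, div_le_iff₀ hδ] at h
    refine h.trans (le_of_eq ?_)
    have : 2 / √δ * δ = 2 * √δ := by
      nth_rw 2 [← hrr]
      field_simp
    rw [← this]; ring
  calc _ ≤ ∑ j ∈ Finset.range N with |w (j + 1) - w j| ≤ √δ,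
        (√δ * δ + 2 * √δ * Real.log (1 + ((w (j + 1) - w j) / δ) ^ 2)) :=
        Finset.sum_le_sum fun j hj => hpt j (Finset.mem_filter.1 hj).2
    _ ≤ ∑ j ∈ Finset.range N,
        (√δ * δ + 2 * √δ * Real.log (1 + ((w (j + 1) - w j) / δ) ^ 2)) := by
        refine Finset.sum_le_sum_of_subset_of_nonneg (Finset.filter_subset _ _) fun j _ _ => ?_
        have : 0 ≤ Real.log (1 + ((w (j + 1) - w j) / δ) ^ 2) :=
          Real.log_nonneg (by nlinarith [sq_nonneg ((w (j + 1) - w j) / δ)])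
        positivity
    _ ≤ _ := by
        rw [Finset.sum_add_distrib, Finset.sum_const, Finset.card_range, nsmul_eq_mul,
          ← Finset.mul_sum]
        nlinarith

/-- Each increment above the threshold `√δ` costs at least `log (1/δ)`. -/
lemma big_card {N : ℕ} {δ E : ℝ} (hδ : 0 < δ) (w : ℕ → ℝ)
    (hE : ∑ j ∈ Finset.range N, Real.log (1 + ((w (j + 1) - w j) / δ) ^ 2) ≤ E) :
    ((Finset.range N).filter (fun j => ¬ |w (j + 1) - w j| ≤ √δ)).card * Real.log (1 / δ) ≤ E := by
  have hr : 0 < √δ := Real.sqrt_pos.2 hδ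
  have hrr : √δ * √δ = δ := Real.mul_self_sqrt hδ.le
  rw [← nsmul_eq_mul]
  refine (Finset.card_nsmul_le_sum _
    (fun j => Real.log (1 + ((w (j + 1) - w j) / δ) ^ 2)) _ ?_).trans (le_trans ?_ hE)
  · intro j hj
    have h := not_le.1 (Finset.mem_filter.1 hj).2
    refine Real.log_le_log (by positivity) ?_
    have h2 : δ ≤ (w (j + 1) - w j) ^ 2 := by
      rw [← sq_abs]; nlinarith
    have : 1 / δ ≤ ((w (j + 1) - w j) / δ) ^ 2 := by
      rw [div_pow, div_le_div_iff₀ hδ (by positivity)]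
      nlinarith
    linarith
  · refine Finset.sum_le_sum_of_subset_of_nonneg (Finset.filter_subset _ _) fun j _ _ => ?_
    exact Real.log_nonneg (by nlinarith [sq_nonneg ((w (j + 1) - w j) / δ)])

lemma IsPC.eq_floor {δ : ℝ} (hδ : 0 < δ) {u : ℝ → ℝ} (hu : IsPC δ u) (x : ℝ) :
    u x = u ((⌊x / δ⌋ : ℤ) * δ) := by
  refine hu _ x ⟨?_, ?_⟩
  · rw [← le_div_iff₀ hδ]; exact Int.floor_le _
  · rw [← div_lt_iff₀ hδ]; exact Int.lt_floor_add_one _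

lemma IsPC.measurable {δ : ℝ} (hδ : 0 < δ) {u : ℝ → ℝ} (hu : IsPC δ u) : Measurable u := by
  have : u = (fun z : ℤ => u (z * δ)) ∘ fun x => ⌊x / δ⌋ := funext fun x => hu.eq_floor hδ x
  rw [this]
  exact measurable_from_top.comp (Int.measurable_floor.comp (measurable_id.div_const δ))

/-- The energy integral over `N` grid cells is a sum over the increments. -/
lemma integral_eq_sum {δ : ℝ} (hδ : 0 < δ) {u : ℝ → ℝ} (hu : IsPC δ u) (z : ℤ) (N : ℕ) :
    ∫ x in (δ * z)..(δ * (z + N)), Real.log (1 + (Dd δ u x) ^ 2) =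
      δ * ∑ j ∈ Finset.range N, Real.log (1 + ((u (((z + (j + 1 : ℕ) : ℤ) : ℝ) * δ)
        - u (((z + (j : ℕ) : ℤ) : ℝ) * δ)) / δ) ^ 2) := by
  have hcell : ∀ j : ℕ, ∀ x ∈ Set.Ico (δ * (z + (j : ℝ))) (δ * (z + ((j + 1 : ℕ) : ℝ))),
      Real.log (1 + (Dd δ u x) ^ 2) = Real.log (1 + ((u (((z + (j + 1 : ℕ) : ℤ) : ℝ) * δ)
        - u (((z + (j : ℕ) : ℤ) : ℝ) * δ)) / δ) ^ 2) := by
    intro j x hx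
    obtain ⟨h1, h2⟩ := hx
    push_cast at h2
    rw [Dd, hu (z + (j : ℕ)) x ⟨by push_cast; linarith, by push_cast; linarith⟩,
      hu (z + (j + 1 : ℕ)) (x + δ) ⟨by push_cast; linarith, by push_cast; linarith⟩]
  have hle : ∀ j : ℕ, δ * (z + (j : ℝ)) ≤ δ * (z + ((j + 1 : ℕ) : ℝ)) := by
    intro j; push_cast; nlinarith
  -- the integrand is constant off the right endpoint of each cell
  have hae : ∀ j : ℕ, ∀ᵐ x, x ∈ Set.uIoc (δ * (z + (j : ℝ))) (δ * (z + ((j + 1 : ℕ) : ℝ))) →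
      Real.log (1 + (Dd δ u x) ^ 2) = Real.log (1 + ((u (((z + (j + 1 : ℕ) : ℤ) : ℝ) * δ)
        - u (((z + (j : ℕ) : ℤ) : ℝ) * δ)) / δ) ^ 2) := by
    intro j
    filter_upwards [compl_mem_ae_iff.2 (measure_singleton (δ * (z + ((j + 1 : ℕ) : ℝ))))]
      with x hx hx2
    rw [Set.uIoc_of_le (hle j)] at hx2
    exact hcell j x ⟨hx2.1.le, lt_of_le_of_ne hx2.2 hx⟩
  have hint : ∀ j < N, IntervalIntegrable (fun x => Real.log (1 + (Dd δ u x) ^ 2)) volume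
      (δ * (z + (j : ℝ))) (δ * (z + ((j + 1 : ℕ) : ℝ))) := by
    intro j _
    refine (intervalIntegrable_const (μ := volume)
      (c := Real.log (1 + ((u (((z + (j + 1 : ℕ) : ℤ) : ℝ) * δ)
        - u (((z + (j : ℕ) : ℤ) : ℝ) * δ)) / δ) ^ 2))).congr_ae ?_
    rw [Filter.EventuallyEq, ae_restrict_iff' measurableSet_uIoc]
    filter_upwards [hae j] with x hx h
    exact (hx h).symm
  have := intervalIntegral.sum_integral_adjacent_intervals
    (a := fun j : ℕ => δ * (z + (j : ℝ))) hint
  simp only [Nat.cast_zero, add_zero] at this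
  rw [← this, Finset.mul_sum]
  refine Finset.sum_congr rfl fun j _ => ?_
  rw [intervalIntegral.integral_congr_ae (hae j), intervalIntegral.integral_const, smul_eq_mul]
  congr 1
  push_cast; ring

lemma one_le_log {n : ℕ} (hn : 3 ≤ n) : 1 ≤ Real.log n := by
  rw [Real.le_log_iff_exp_le (by positivity)]
  have : (3 : ℝ) ≤ n := by exact_mod_cast hn
  linarith [Real.exp_one_lt_d9]

lemma dlt_pos {n : ℕ} (hn : 2 ≤ n) : 0 < dlt n := by
  have h : (0 : ℝ) < n := by positivity
  have := omg_pos hn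
  unfold dlt; positivity

lemma dlt_le {n : ℕ} (hn : 3 ≤ n) : dlt n ≤ (n : ℝ) ^ (-(2 / 3) : ℝ) := by
  have h : (0 : ℝ) < n := by positivity
  have h1 : (n : ℝ) ^ (-(1 / 3) : ℝ) ≤ omg n := by
    rw [Real.rpow_neg h.le, ← Real.inv_rpow h.le, omg]
    refine Real.rpow_le_rpow (by positivity) ?_ (by norm_num)
    rw [inv_eq_one_div]
    exact div_le_div_of_nonneg_right (one_le_log hn) h.le
  have h2 : (n : ℝ) ^ (2 / 3 : ℝ) ≤ n * omg n := by
    calc (n : ℝ) ^ (2 / 3 : ℝ) = n * (n : ℝ) ^ (-(1 / 3) : ℝ) := by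
          nth_rw 2 [← Real.rpow_one (n : ℝ)]
          rw [← Real.rpow_add h]; norm_num
      _ ≤ _ := mul_le_mul_of_nonneg_left h1 h.le
  rw [dlt, Real.rpow_neg h.le, ← one_div]
  exact one_div_le_one_div_of_le (by positivity) h2

/-- The scaling relation `δ(n)/ω(n)² = 1/log n`. -/
lemma dlt_div_omg {n : ℕ} (hn : 2 ≤ n) : 1 / omg n ^ 2 * dlt n = 1 / Real.log n := by
  have h1 : (1 : ℝ) < n := by exact_mod_cast hn
  have h : (0 : ℝ) < n := by linarith
  have hl := Real.log_pos h1
  have ho := omg_pos hn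
  have h3 : omg n ^ 3 = Real.log n / n := by
    rw [omg, ← Real.rpow_natCast, ← Real.rpow_mul (by positivity)]; norm_num
  rw [dlt]
  have : 1 / omg n ^ 2 * (1 / (n * omg n)) = 1 / (n * omg n ^ 3) := by field_simp
  rw [this, h3]
  congr 1; field_simp

/-- Structure of a function of bounded energy: up to a uniform error that vanishes as `n → ∞`, it
is a step function with a bounded number of jumps, whose parameters lie in a fixed box. -/
lemma structure_lemma {a b C : ℝ} (hab : a < b) {M : ℕ} (hM : 3 / 2 * C ≤ M) {n : ℕ} (hn : 3 ≤ n)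
    {u : ℝ → ℝ} (hu : IsPC (dlt n) u) (hE : RDPM n a b u ≤ C)
    (hC : ∀ x ∈ Set.Icc (lowGrid (dlt n) a) (highGrid (dlt n) b), |u x| ≤ C) :
    ∃ (c : ℝ) (t J : Fin M → ℝ), c ∈ Set.Icc (-C) C ∧ (∀ i, t i ∈ Set.Icc a b) ∧
      (∀ i, J i ∈ Set.Icc (-(2 * C)) (2 * C)) ∧ ∀ x ∈ Set.Ioo a b,
      |u x - (c + ∑ i, (if t i ≤ x then J i else 0))| ≤
        (n : ℝ) ^ (-(1 / 3) : ℝ) * (b - a + 1 + 2 * C * Real.log n) := by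
  classical
  have hn2 : 2 ≤ n := by omega
  have hn0 : (0 : ℝ) < n := by positivity
  have hn1 : (1 : ℝ) ≤ n := by exact_mod_cast (by omega : 1 ≤ n)
  have hlog := one_le_log hn
  have hδ := dlt_pos hn2
  have hδle := dlt_le hn
  have hδE := dlt_div_omg hn2
  unfold RDPM at hE
  generalize dlt n = δ at *
  have hδ1 : δ ≤ 1 := hδle.trans (Real.rpow_le_one_of_one_le_of_nonpos hn1 (by norm_num))
  have hsqrt : √δ ≤ (n : ℝ) ^ (-(1 / 3) : ℝ) := by
    rw [Real.sqrt_le_left (by positivity), ← Real.rpow_natCast, ← Real.rpow_mul hn0.le]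
    norm_num at hδle ⊢
    exact hδle
  set z := ⌊a / δ⌋ with hz
  have ha1 : (z : ℝ) * δ ≤ a := by rw [← le_div_iff₀ hδ]; exact Int.floor_le _
  have ha2 : a < ((z : ℝ) + 1) * δ := by rw [← div_lt_iff₀ hδ]; exact Int.lt_floor_add_one _
  have hb1 : b ≤ (⌈b / δ⌉ : ℤ) * δ := by rw [← div_le_iff₀ hδ]; exact Int.le_ceil _
  have hb2 : ((⌈b / δ⌉ : ℤ) - 1) * δ < b := by
    rw [← lt_div_iff₀ hδ]; linarith [Int.ceil_lt_add_one (b / δ)]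
  have hzb : z < ⌈b / δ⌉ := by
    have : (z : ℝ) < (⌈b / δ⌉ : ℤ) := by
      by_contra h
      have := mul_le_mul_of_nonneg_right (not_lt.1 h) hδ.le
      linarith
    exact_mod_cast this
  obtain ⟨N, hN⟩ : ∃ N : ℕ, ⌈b / δ⌉ = z + N + 1 :=
    ⟨(⌈b / δ⌉ - 1 - z).toNat, by omega⟩
  rw [hN] at hb1 hb2
  push_cast at hb1 hb2
  have hlow : lowGrid δ a = δ * z := rfl
  have hhigh : highGrid δ b = δ * (z + N + 1) := by rw [highGrid, hN]; push_cast; ring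
  have hhigh' : highGrid δ b - δ = δ * (z + N) := by rw [hhigh]; ring
  rw [hhigh', hlow, integral_eq_sum hδ hu, ← mul_assoc, hδE] at hE
  set w : ℕ → ℝ := fun j => u (((z + (j : ℕ) : ℤ) : ℝ) * δ) with hw
  have hE' : ∑ j ∈ Finset.range N, Real.log (1 + ((w (j + 1) - w j) / δ) ^ 2)
      ≤ C * Real.log n := by
    rw [one_div, inv_mul_le_iff₀ (by linarith)] at hE
    linarith
  have hwC : ∀ j ≤ N, |w j| ≤ C := by
    intro j hj
    have : (j : ℝ) ≤ N := by exact_mod_cast hj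
    have hj0 : (0 : ℝ) ≤ j := by positivity
    refine hC _ ⟨?_, ?_⟩
    · rw [hlow]; push_cast; nlinarith
    · rw [hhigh]; push_cast; nlinarith
  have hC0 : 0 ≤ C := (abs_nonneg _).trans (hwC 0 (Nat.zero_le _))
  have hsmall := small_sum hδ w hE'
  have hbig := big_card hδ w hE'
  set t₀ : ℕ → ℝ := fun j => (z + j + 1) * δ with ht₀
  set B := (Finset.range N).filter (fun j => ¬ |w (j + 1) - w j| ≤ √δ) with hB
  have hcard : B.card ≤ M := by
    have hl : 2 / 3 * Real.log n ≤ Real.log (1 / δ) := by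
      rw [← Real.log_rpow hn0]
      refine Real.log_le_log (by positivity) ?_
      rw [le_div_iff₀ hδ]
      calc (n : ℝ) ^ (2 / 3 : ℝ) * δ ≤ (n : ℝ) ^ (2 / 3 : ℝ) * (n : ℝ) ^ (-(2 / 3) : ℝ) :=
            mul_le_mul_of_nonneg_left hδle (by positivity)
        _ = 1 := by rw [← Real.rpow_add hn0]; norm_num
    have h1 : (B.card : ℝ) * (2 / 3 * Real.log n) ≤ C * Real.log n :=
      (mul_le_mul_of_nonneg_left hl (by positivity)).trans hbig
    have h2 : (B.card : ℝ) * (2 / 3) ≤ C :=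
      le_of_mul_le_mul_right (by linarith) (by linarith : 0 < Real.log n)
    have : (B.card : ℝ) ≤ M := by linarith
    exact_mod_cast this
  obtain ⟨t, J, ht, hJ, hsum⟩ := exists_padding a b (2 * C) hab.le (by linarith) t₀
    (fun j => w (j + 1) - w j) M B hcard (by
      intro j hj
      have hjN : j < N := Finset.mem_range.1 (Finset.mem_filter.1 hj).1
      have hjN' : (j : ℝ) + 1 ≤ N := by exact_mod_cast hjN
      have hj0 : (0 : ℝ) ≤ j := by positivity
      refine ⟨⟨?_, ?_⟩, ?_⟩
      · simp only [ht₀]; nlinarith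
      · simp only [ht₀]; nlinarith
      · have h1 := abs_le.1 (hwC j hjN.le)
        have h2 := abs_le.1 (hwC (j + 1) hjN)
        constructor <;> linarith [h1.1, h1.2, h2.1, h2.2])
  refine ⟨w 0, t, J, ?_, ht, hJ, ?_⟩
  · exact abs_le.1 (hwC 0 (Nat.zero_le _))
  intro x hx
  rw [← hsum x]
  -- telescoping over the grid points to the left of `x`
  have htel : u x = w 0 + ∑ j ∈ Finset.range N, (if t₀ j ≤ x then w (j + 1) - w j else 0) := by
    have hf1 : ((⌊x / δ⌋ : ℤ) : ℝ) * δ ≤ x := by rw [← le_div_iff₀ hδ]; exact Int.floor_le _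
    have hzf : z ≤ ⌊x / δ⌋ := Int.floor_le_floor (div_le_div_of_nonneg_right hx.1.le hδ.le)
    obtain ⟨i, hi⟩ : ∃ i : ℕ, ⌊x / δ⌋ = z + i := ⟨(⌊x / δ⌋ - z).toNat, by omega⟩
    have hiN : i ≤ N := by
      rw [hi] at hf1
      push_cast at hf1
      have : (i : ℝ) < N + 1 := by
        by_contra h
        have := mul_le_mul_of_nonneg_right (not_lt.1 h) hδ.le
        linarith [hx.2]
      have : i < N + 1 := by exact_mod_cast this
      omega
    have hux : u x = w i := by rw [hu.eq_floor hδ x, hi]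
    have hiff : ∀ j : ℕ, t₀ j ≤ x ↔ j < i := by
      intro j
      have : t₀ j ≤ x ↔ z + j + 1 ≤ ⌊x / δ⌋ := by
        rw [Int.le_floor, le_div_iff₀ hδ]; push_cast; rfl
      rw [this, hi]; omega
    simp only [hiff]
    rw [← Finset.sum_filter]
    have : (Finset.range N).filter (fun j => j < i) = Finset.range i := by
      ext j; simp; omega
    rw [this, Finset.sum_range_sub, hux]; ring
  have hNδ : N * δ ≤ b - a + 1 := by nlinarith
  rw [htel, ← Finset.sum_filter_add_sum_filter_not (Finset.range N)
    (fun j => |w (j + 1) - w j| ≤ √δ)]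
  have : ∀ p q r : ℝ, p + (q + r) - (p + r) = q := by intros; ring
  rw [this]
  calc _ ≤ ∑ j ∈ Finset.range N with |w (j + 1) - w j| ≤ √δ,
        |if t₀ j ≤ x then w (j + 1) - w j else 0| := Finset.abs_sum_le_sum_abs _ _
    _ ≤ ∑ j ∈ Finset.range N with |w (j + 1) - w j| ≤ √δ, |w (j + 1) - w j| := by
        refine Finset.sum_le_sum fun j _ => ?_
        split_ifs
        · exact le_rfl
        · simp
    _ ≤ √δ * (N * δ + 2 * (C * Real.log n)) := hsmall
    _ ≤ √δ * (b - a + 1 + 2 * C * Real.log n) :=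
        mul_le_mul_of_nonneg_left (by linarith) (Real.sqrt_nonneg _)
    _ ≤ _ := mul_le_mul_of_nonneg_right hsqrt (by
        have : 0 ≤ C * Real.log n := by positivity
        linarith)

lemma error_tendsto (A D : ℝ) :
    Tendsto (fun n : ℕ => (n : ℝ) ^ (-(1 / 3) : ℝ) * (A + D * Real.log n)) atTop (nhds 0) := by
  have h1 : Tendsto (fun x : ℝ => x ^ (-(1 / 3) : ℝ)) atTop (nhds 0) :=
    tendsto_rpow_neg_atTop (by norm_num)
  have h2 : Tendsto (fun x : ℝ => Real.log x / x ^ (1 / 3 : ℝ)) atTop (nhds 0) :=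
    (isLittleO_log_rpow_atTop (by norm_num)).tendsto_div_nhds_zero
  have h3 := (h1.mul_const A).add (h2.const_mul D)
  simp only [zero_mul, mul_zero, add_zero] at h3
  refine (h3.comp tendsto_natCast_atTop_atTop).congr fun n => ?_
  simp only [Function.comp]
  rw [Real.rpow_neg (by positivity)]
  ring

/-- Compactness for the rescaled discrete Perona–Malik functional:
equibounded energy and `L^∞` norm imply relative compactness in `L^p((a,b))`, with
limit points that are step functions. -/
theorem rescaled_compactness
    (a b : ℝ) (hab : a < b) (p : ℝ) (hp : 1 ≤ p)
    (nk : ℕ → ℕ) (hnk2 : ∀ k, 2 ≤ nk k) (hnk : Tendsto nk atTop atTop)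
    (u : ℕ → ℝ → ℝ) (hPC : ∀ k, IsPC (dlt (nk k)) (u k))
    (C : ℝ)
    (hbound : ∀ k, RDPM (nk k) a b (u k) ≤ C ∧
      ∀ x ∈ Set.Icc (lowGrid (dlt (nk k)) a) (highGrid (dlt (nk k)) b), |u k x| ≤ C) :
    ∃ φ : ℕ → ℕ, StrictMono φ ∧ ∃ uinf : ℝ → ℝ, IsStep a b uinf ∧
      Tendsto (fun h => ∫ x in Set.Ioo a b, |u (φ h) x - uinf x| ^ p) atTop (nhds 0) := by
  have hC0 : 0 ≤ C := by
    have hδ := dlt_pos (hnk2 0)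
    refine (abs_nonneg _).trans ((hbound 0).2 a ⟨?_, ?_⟩)
    · rw [lowGrid, mul_comm, ← le_div_iff₀ hδ]; exact Int.floor_le _
    · rw [highGrid, mul_comm, ← div_le_iff₀ hδ]
      exact (div_le_div_of_nonneg_right hab.le hδ.le).trans (Int.le_ceil _)
  obtain ⟨M, hM⟩ := exists_nat_ge (3 / 2 * C)
  set S : Set (ℝ × (Fin M → ℝ) × (Fin M → ℝ)) :=
    Set.Icc (-C) C ×ˢ (Set.univ.pi fun _ => Set.Icc a b) ×ˢ
      (Set.univ.pi fun _ => Set.Icc (-(2 * C)) (2 * C)) with hS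
  have hScomp : IsCompact S :=
    isCompact_Icc.prod ((isCompact_univ_pi fun _ => isCompact_Icc).prod
      (isCompact_univ_pi fun _ => isCompact_Icc))
  set ε : ℕ → ℝ := fun n => (n : ℝ) ^ (-(1 / 3) : ℝ) * (b - a + 1 + 2 * C * Real.log n) with hε
  have hdata : ∀ k, ∃ q ∈ S, 3 ≤ nk k → ∀ x ∈ Set.Ioo a b,
      |u k x - (q.1 + ∑ i, (if q.2.1 i ≤ x then q.2.2 i else 0))| ≤ ε (nk k) := by
    intro k
    by_cases h3 : 3 ≤ nk k
    · obtain ⟨c, t, J, hc, ht, hJ, hx⟩ :=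
        structure_lemma hab hM h3 (hPC k) (hbound k).1 (hbound k).2
      exact ⟨(c, t, J), ⟨hc, fun i _ => ht i, fun i _ => hJ i⟩, fun _ => hx⟩
    · exact ⟨(0, fun _ => a, fun _ => 0), ⟨⟨by simpa using hC0, hC0⟩,
        fun i _ => ⟨le_rfl, hab.le⟩, fun i _ => ⟨by simpa using hC0, by simpa using hC0⟩⟩,
        fun h => absurd h h3⟩
  choose q hqS hq using hdata
  obtain ⟨⟨c, t, J⟩, hlim, φ, hφ, hconv⟩ := hScomp.tendsto_subseq hqS
  set v : ℝ → ℝ := fun x => c + ∑ i, (if t i ≤ x then J i else 0) with hv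
  refine ⟨φ, hφ, v, isStep_of_sum a b c t J, ?_⟩
  have hvmeas : Measurable v := by
    refine measurable_const.add (Finset.measurable_sum _ fun i _ => ?_)
    exact Measurable.ite measurableSet_Ici measurable_const measurable_const
  have hvbound : ∀ x, |v x| ≤ C + M * (2 * C) := by
    intro x
    refine (abs_add_le _ _).trans (add_le_add (abs_le.2 hlim.1) ?_)
    refine (Finset.abs_sum_le_sum_abs _ _).trans ?_
    refine (Finset.sum_le_card_nsmul _ _ (2 * C) fun i _ => ?_).trans (by simp)
    split_ifs
    · exact abs_le.2 (hlim.2.2 i (Set.mem_univ i))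
    · simpa using hC0
  have hubound : ∀ k, ∀ x ∈ Set.Ioo a b, |u k x| ≤ C := by
    intro k x hx
    have hδ := dlt_pos (hnk2 k)
    refine (hbound k).2 x ⟨?_, ?_⟩
    · refine le_trans ?_ hx.1.le
      rw [lowGrid, mul_comm, ← le_div_iff₀ hδ]; exact Int.floor_le _
    · refine hx.2.le.trans ?_
      rw [highGrid, mul_comm, ← div_le_iff₀ hδ]; exact Int.le_ceil _
  have hnkφ : Tendsto (fun h => nk (φ h)) atTop atTop := hnk.comp hφ.tendsto_atTop
  -- the jump terms converge off the limiting jump points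
  have hpt : ∀ x ∈ Set.Ioo a b, (∀ i, x ≠ t i) →
      Tendsto (fun h => u (φ h) x) atTop (nhds (v x)) := by
    intro x hx hxt
    have hc : Tendsto (fun h => (q (φ h)).1) atTop (nhds c) :=
      (continuous_fst.tendsto _).comp hconv
    have ht : ∀ i, Tendsto (fun h => (q (φ h)).2.1 i) atTop (nhds (t i)) := fun i =>
      (((continuous_apply i).comp (continuous_fst.comp continuous_snd)).tendsto _).comp hconv
    have hJ : ∀ i, Tendsto (fun h => (q (φ h)).2.2 i) atTop (nhds (J i)) := fun i =>
      (((continuous_apply i).comp (continuous_snd.comp continuous_snd)).tendsto _).comp hconv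
    have hvq : Tendsto (fun h => (q (φ h)).1 + ∑ i, (if (q (φ h)).2.1 i ≤ x then
        (q (φ h)).2.2 i else 0)) atTop (nhds (v x)) := by
      refine hc.add (tendsto_finsetSum _ fun i _ => ?_)
      rcases lt_or_gt_of_ne (hxt i) with h | h
      · rw [if_neg (not_le.2 h)]
        refine tendsto_const_nhds.congr' ?_
        filter_upwards [(ht i).eventually (lt_mem_nhds h)] with k hk
        rw [if_neg (not_le.2 hk)]
      · rw [if_pos (le_of_lt h)]
        refine (hJ i).congr' ?_
        filter_upwards [(ht i).eventually (gt_mem_nhds h)] with k hk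
        rw [if_pos (le_of_lt hk)]
    have herr : Tendsto (fun h => u (φ h) x - ((q (φ h)).1 + ∑ i,
        (if (q (φ h)).2.1 i ≤ x then (q (φ h)).2.2 i else 0))) atTop (nhds 0) := by
      refine squeeze_zero_norm' ?_ ((error_tendsto (b - a + 1) (2 * C)).comp hnkφ)
      filter_upwards [hnkφ.eventually_ge_atTop 3] with k hk
      exact hq (φ k) hk x hx
    simpa using herr.add hvq
  have hae : ∀ᵐ x ∂(volume.restrict (Set.Ioo a b)),
      Tendsto (fun h => |u (φ h) x - v x| ^ p) atTop (nhds 0) := by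
    rw [ae_restrict_iff' measurableSet_Ioo]
    have hnull : volume (Set.range t) = 0 := (Set.finite_range t).measure_zero _
    filter_upwards [compl_mem_ae_iff.2 hnull] with x hx hxab
    have h1 := hpt x hxab fun i h => hx ⟨i, h.symm⟩
    have h2 : Tendsto (fun h => |u (φ h) x - v x|) atTop (nhds 0) := by
      simpa using (h1.sub_const (v x)).abs
    have h3 := h2.rpow_const (p := p) (Or.inr (by linarith))
    rwa [Real.zero_rpow (by linarith)] at h3
  have hdom := tendsto_integral_of_dominated_convergence
    (F := fun h x => |u (φ h) x - v x| ^ p) (f := fun _ => (0 : ℝ))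
    (μ := volume.restrict (Set.Ioo a b)) (fun _ => (C + (C + M * (2 * C))) ^ p)
    (fun h => by
      have hm := (hPC (φ h)).measurable (dlt_pos (hnk2 (φ h)))
      have : Measurable fun x => |u (φ h) x - v x| ^ p :=
        (measurable_norm.comp (hm.sub hvmeas)).pow_const p
      exact this.aestronglyMeasurable)
    (integrable_const _)
    (fun h => by
      rw [ae_restrict_iff' measurableSet_Ioo]
      refine Filter.Eventually.of_forall fun x hx => ?_
      rw [Real.norm_of_nonneg (by positivity)]
      refine Real.rpow_le_rpow (abs_nonneg _) ?_ (by linarith)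
      exact (abs_sub _ _).trans (add_le_add (hubound _ x hx) (hvbound x)))
    hae
  simpa using hdom

end PeronaMalik
end
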